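/- arXiv:0909.2347 — 7 statements merged into one kernel-verified Lean document; each statement's English description precedes it below -/
import Mathlib

section
/- Let n ≥ 1 and let H be the complex vector space with basis the set of all configurations m : ℤ/nℤ → ℕ. For i ∈ ℤ/nℤ define ℂ-linear endomorphisms of H on basis vectors by φ_i*(m) = m + δ_i; φ_i(m) = m − δ_i if m_i ≥ 1 and φ_i(m) = 0 otherwise; and N_i(m) = m_i·m, where δ_j is the configuration with a single entry 1 at position j and zeros elsewhere. Then the family of operators B_{b,a,c} = (φ_0*)^{b_0}⋯(φ_{n−1}*)^{b_{n−1}} · φ_0^{a_0}⋯φ_{n−1}^{a_{n−1}} · N_0^{c_0}⋯N_{n−1}^{c_{n−1}}, indexed by triples a, b, c ∈ ℕ^n satisfying a_i·b_i·c_i = 0 for every i, is linearly independent and forms a ℂ-basis of the unital subalgebra of End(H) generated by {φ_i, φ_i*, N_i : i ∈ ℤ/nℤ}. -/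
noncomputable section

open scoped BigOperators

/-- The space of states `H`: the complex vector space with basis the set of all
particle configurations `m : ℤ/nℤ → ℕ`. -/
abbrev StateSpace (n : ℕ) := (ZMod n → ℕ) →₀ ℂ

/-- The creation operator `φ_i*`: on a basis configuration, add one particle at site `i`. -/
def creOp (n : ℕ) (i : ZMod n) : Module.End ℂ (StateSpace n) :=
  Finsupp.lift (StateSpace n) ℂ (ZMod n → ℕ) fun m =>
    Finsupp.single (fun c => m c + (Pi.single i 1 : ZMod n → ℕ) c) 1

/-- The annihilation operator `φ_i`: on a basis configuration, remove one particle at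
site `i` if there is one, and send the configuration to `0` otherwise. -/
def annOp (n : ℕ) (i : ZMod n) : Module.End ℂ (StateSpace n) :=
  Finsupp.lift (StateSpace n) ℂ (ZMod n → ℕ) fun m =>
    if m i = 0 then 0 else Finsupp.single (fun c => m c - (Pi.single i 1 : ZMod n → ℕ) c) 1

/-- The number operator `N_i`: multiply a basis configuration by its occupation number
at site `i`. -/
def numOp (n : ℕ) (i : ZMod n) : Module.End ℂ (StateSpace n) :=
  Finsupp.lift (StateSpace n) ℂ (ZMod n → ℕ) fun m =>
    Finsupp.single m ((m i : ℂ))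

/-- Ordered product `F(0) * F(1) * ⋯ * F(n-1)` of endomorphisms indexed by `ℤ/nℤ`,
taken in increasing order of the index. -/
def ordProd (n : ℕ) (F : ZMod n → Module.End ℂ (StateSpace n)) : Module.End ℂ (StateSpace n) :=
  ((List.finRange n).map fun i => F ((i : ℕ) : ZMod n)).prod

/-- The operator `B_{b,a,c} = (φ*)^b ⬝ φ^a ⬝ N^c` attached to a triple of exponent vectors
`(b, a, c)`, each product taken over the sites in increasing order. -/
def Bfam (n : ℕ) (t : (ZMod n → ℕ) × (ZMod n → ℕ) × (ZMod n → ℕ)) :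
    Module.End ℂ (StateSpace n) :=
  ordProd n (fun i => creOp n i ^ t.1 i) * ordProd n (fun i => annOp n i ^ t.2.1 i) *
    ordProd n (fun i => numOp n i ^ t.2.2 i)

/-!
At a single site the creation, annihilation and number operators `u, d, N` satisfy `d u = 1`,
`N u = u N + u`, `d N = N d + d` and `u d N = N`. Hence
`u^(b+1) d^(a+1) N^(c+1) = u^b d^a N^(c+1) - a u^b d^a N^c + a u^(b+1) d^(a+1) N^c`, so that the
words `u^b d^a N^c` with `a b c = 0` span the algebra generated by `u, d, N`. Operators at different
sites commute, so the algebra of all sites is the product of the one-site algebras, and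
`B_{b,a,c}` is the product of the one-site words.

The matrix entries of such a product of words are products of one-site matrix entries, which
reduces linear independence to a single site. There a word moves `m` to `m + (b - a)`, so words with
different `b - a` live on different diagonals. On a fixed diagonal its entries are `m^c` for `a ≤ m`
and `0` otherwise; for large `m` a linear relation becomes a polynomial identity in `m`, in which
each `c > 0` occurs at most once because one of `a, b` vanishes. What is left are the step functions
of `c = 0`, told apart by the positions of their jumps.
-/

section LinearIndependence

variable {R : Type*} [CommRing R]

theorem linearIndependent_prod_mul {A B X Y : Type*} {f : A → X → R} {g : B → Y → R}
    (hf : LinearIndependent R f) (hg : LinearIndependent R g) :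
    LinearIndependent R fun (p : A × B) (z : X × Y) => f p.1 z.1 * g p.2 z.2 := by
  have hf' : LinearIndependent (Y → R) fun a x (_ : Y) => f a x := by
    rw [linearIndependent_iff'] at hf ⊢
    intro s l hl a ha
    ext y
    refine hf s (fun a => l a y) (funext fun x => ?_) a ha
    simpa using congrFun (congrFun hl x) y
  refine LinearIndependent.of_comp (LinearEquiv.curry R R X Y).toLinearMap ?_
  convert (linearIndependent_smul hg hf').comp Prod.swap Prod.swap_injective using 1
  funext p x y
  exact mul_comm _ _

theorem linearIndependent_fin_prod {k : ℕ} {A X : Fin k → Type*} {f : ∀ i, A i → X i → R}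
    (hf : ∀ i, LinearIndependent R (f i)) :
    LinearIndependent R fun (t : ∀ i, A i) (x : ∀ i, X i) => ∏ i, f i (t i) (x i) := by
  induction k with
  | zero =>
    refine Fintype.linearIndependent_iff.2 fun g hg t => ?_
    simpa [Subsingleton.elim t default] using congrFun hg default
  | succ k ih =>
    have h := (linearIndependent_prod_mul (hf 0) (ih fun i => hf i.succ)).comp
      (Fin.consEquiv A).symm (Equiv.injective _)
    refine LinearIndependent.of_comp (LinearMap.funLeft R R (Fin.consEquiv X)) ?_
    convert h using 1
    funext t z
    simp [LinearMap.funLeft_apply, Fin.prod_univ_succ, Fin.consEquiv, Fin.tail]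

theorem linearIndependent_pi_prod {ι : Type*} [Fintype ι] {A X : ι → Type*}
    {f : ∀ i, A i → X i → R} (hf : ∀ i, LinearIndependent R (f i)) :
    LinearIndependent R fun (t : ∀ i, A i) (x : ∀ i, X i) => ∏ i, f i (t i) (x i) := by
  let e := Fintype.equivFin ι
  have h := (linearIndependent_fin_prod fun k => hf (e.symm k)).comp
    (e.piCongrLeft' A) (Equiv.injective _)
  refine LinearIndependent.of_comp (LinearMap.funLeft R R (e.piCongrLeft' X).symm) ?_
  convert h using 1
  funext t x
  obtain ⟨x, rfl⟩ := (e.piCongrLeft' X).surjective x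
  simp [LinearMap.funLeft_apply, ← e.symm.prod_comp]

theorem linearIndependent_of_fiberwise {ι κ M N : Type*} [AddCommGroup M] [Module R M]
    [AddCommGroup N] [Module R N] [DecidableEq κ] {v : ι → M} {w : ι → N} {p : ι → κ}
    (Φ : κ → M →ₗ[R] N) (hΦ : ∀ k i, Φ k (v i) = if p i = k then w i else 0)
    (hw : ∀ k, LinearIndepOn R w (p ⁻¹' {k})) : LinearIndependent R v := by
  rw [linearIndependent_iff']
  intro s g hg i hi
  have hsector : ∑ j ∈ s with p j = p i, g j • w j = 0 := by
    simpa [hΦ, Finset.sum_filter] using congrArg (Φ (p i)) hg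
  exact linearIndepOn_iff'.1 (hw (p i)) _ g (by intro j; simp) hsector i (by simp [hi])

variable (R) in
/-- The function `m ↦ m ^ c` on `ℕ`, cut off to `0` below `a`: the scalar by which the one-site word
`u ^ b * d ^ a * N ^ c` acts on the state with `m` particles. -/
def cutoffPow (a c m : ℕ) : R := if a ≤ m then (m : R) ^ c else 0

theorem linearIndependent_cutoffPow_zero : LinearIndependent R fun a => cutoffPow R a 0 := by
  let value (m : ℕ) : Module.Dual R (ℕ → R) := LinearMap.proj m
  let jump : ℕ → Module.Dual R (ℕ → R)
    | 0 => value 0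
    | a + 1 => value (a + 1) - value a
  refine LinearIndependent.of_pairwise_dual_eq_zero_one _ jump ?_ ?_
  · rintro (_ | a) b hab
    · have hb : b ≠ 0 := hab.symm
      simp [jump, value, cutoffPow, hb]
    · have hb : b ≤ a + 1 ↔ b ≤ a := by grind
      simp [jump, value, cutoffPow, hb]
  · rintro (_ | a) <;> simp [jump, value, cutoffPow]

open Polynomial in
theorem sum_C_mul_X_pow_eq_zero_of_sum_cutoffPow [IsDomain R] [CharZero R] {ι : Type*}
    {s : Finset ι} {g : ι → R} {a c : ι → ℕ}
    (h : ∑ t ∈ s, g t • cutoffPow R (a t) (c t) = 0) : ∑ t ∈ s, C (g t) * X ^ c t = 0 := by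
  have hinf : ((Nat.cast : ℕ → R) '' Set.Ici (s.sup a)).Infinite :=
    (Set.Ici_infinite _).image Nat.cast_injective.injOn
  refine eq_zero_of_infinite_isRoot _ (hinf.mono ?_)
  rintro _ ⟨m, hm, rfl⟩
  have hcut : ∀ t ∈ s, a t ≤ m := fun t ht => (Finset.le_sup ht).trans hm
  have hm_sum : ∑ t ∈ s, (g t • cutoffPow R (a t) (c t)) m = 0 := by
    rw [← Finset.sum_apply, h, Pi.zero_apply]
  rw [Set.mem_ofPred_eq, IsRoot.def, eval_finsetSum, ← hm_sum]
  refine Finset.sum_congr rfl fun t ht => ?_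
  simp [cutoffPow, hcut t ht]

theorem linearIndepOn_cutoffPow [IsDomain R] [CharZero R] {ι : Type*} {D : Set ι} {a c : ι → ℕ}
    (hpos : Set.InjOn c {t ∈ D | c t ≠ 0}) (hzero : Set.InjOn a {t ∈ D | c t = 0}) :
    LinearIndepOn R (fun t => cutoffPow R (a t) (c t)) D := by
  rw [linearIndepOn_iff']
  intro s g hs hsum
  have hg_pos : ∀ t ∈ s, c t ≠ 0 → g t = 0 := by
    intro t ht hct
    have hcoeff := congrArg (fun p => p.coeff (c t)) (sum_C_mul_X_pow_eq_zero_of_sum_cutoffPow hsum)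
    simp only [Polynomial.finsetSum_coeff, Polynomial.coeff_C_mul_X_pow, Polynomial.coeff_zero]
      at hcoeff
    rw [Finset.sum_eq_single_of_mem t ht, if_pos rfl] at hcoeff
    · exact hcoeff
    · intro u hu hut
      exact if_neg fun hc => hut (hpos ⟨hs hu, fun hcu => hct (hc.trans hcu)⟩ ⟨hs ht, hct⟩ hc.symm)
  have hsum_zero : ∑ t ∈ s with c t = 0, g t • cutoffPow R (a t) 0 = 0 := by
    rw [← hsum, Finset.sum_filter]
    refine Finset.sum_congr rfl fun t ht => ?_
    split_ifs with hct
    · rw [hct]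
    · rw [hg_pos t ht hct, zero_smul]
  have hstep : LinearIndepOn R (fun t => cutoffPow R (a t) 0) {t ∈ D | c t = 0} :=
    (linearIndependent_cutoffPow_zero.linearIndepOn _).comp_of_image hzero
  intro t ht
  by_cases hct : c t = 0
  · refine linearIndepOn_iff'.1 hstep _ g ?_ hsum_zero t (by simp [ht, hct])
    intro u hu
    obtain ⟨hu, hcu⟩ := Finset.mem_filter.1 hu
    exact ⟨hs hu, hcu⟩
  · exact hg_pos t ht hct

end LinearIndependence

section AdjoinSpan

variable {R A : Type*} [CommSemiring R] [Semiring A] [Algebra R A]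

theorem toSubmodule_adjoin_le {S : Set A} {P : Submodule R A} (one_mem : 1 ∈ P)
    (mul_mem : ∀ s ∈ S, ∀ x ∈ P, s * x ∈ P) :
    Subalgebra.toSubmodule (Algebra.adjoin R S) ≤ P := by
  rw [Algebra.adjoin_eq_span, Submodule.span_le]
  intro x hx
  induction hx using Submonoid.closure_induction_left with
  | one => exact one_mem
  | mul_left s hs x _ hx => exact mul_mem s hs x hx

theorem span_eq_toSubmodule_adjoin {S V : Set A} (hV : V ⊆ Algebra.adjoin R S)
    (one_mem : 1 ∈ Submodule.span R V)
    (mul_mem : ∀ s ∈ S, ∀ v ∈ V, s * v ∈ Submodule.span R V) :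
    Submodule.span R V = Subalgebra.toSubmodule (Algebra.adjoin R S) := by
  refine le_antisymm (Submodule.span_le.2 hV) (toSubmodule_adjoin_le one_mem fun s hs => ?_)
  exact Submodule.span_le (p := (Submodule.span R V).comap (LinearMap.mulLeft R s)).2
    (mul_mem s hs)

theorem toSubmodule_adjoin_union_of_commute {S T : Set A} (h : ∀ s ∈ S, ∀ t ∈ T, Commute s t) :
    Subalgebra.toSubmodule (Algebra.adjoin R (S ∪ T)) =
      Subalgebra.toSubmodule (Algebra.adjoin R S) *
        Subalgebra.toSubmodule (Algebra.adjoin R T) := by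
  apply le_antisymm
  · refine toSubmodule_adjoin_le ?_ ?_
    · rw [← one_mul (1 : A)]
      exact Submodule.mul_mem_mul (one_mem (Algebra.adjoin R S))
        (one_mem (Algebra.adjoin R T))
    · intro s hs z hz
      induction hz using Submodule.mul_induction_on' with
      | mem_mul_mem x hx y hy =>
        rcases hs with hs | ht
        · rw [← mul_assoc]
          exact Submodule.mul_mem_mul (Subalgebra.mul_mem _ (Algebra.subset_adjoin hs) hx) hy
        · have hcomm : Commute s x :=
            Algebra.commute_of_mem_adjoin_of_forall_mem_commute hx fun r hr => (h r hr s ht).symm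
          rw [← mul_assoc, hcomm.eq, mul_assoc]
          exact Submodule.mul_mem_mul hx (Subalgebra.mul_mem _ (Algebra.subset_adjoin ht) hy)
      | add x _ y _ hx hy =>
        rw [mul_add]
        exact add_mem hx hy
  · refine (Subalgebra.mul_toSubmodule_le _ _).trans ?_
    exact (Algebra.adjoin_union S T).ge

open scoped Pointwise in
theorem range_list_prod_cons {M ι : Type*} [Monoid M] {τ : ι → Type*} (x : ∀ i, τ i → M)
    {i : ι} {L : List ι} (hi : i ∉ L) :
    Set.range (fun t : ∀ i, τ i => ((i :: L).map fun j => x j (t j)).prod) =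
      Set.range (x i) * Set.range fun t : ∀ i, τ i => (L.map fun j => x j (t j)).prod := by
  classical
  ext z
  simp only [List.map_cons, List.prod_cons, Set.mem_mul, Set.mem_range, exists_exists_eq_and]
  refine ⟨fun ⟨t, ht⟩ => ⟨t i, t, ht⟩, fun ⟨a, t, ht⟩ => ⟨Function.update t i a, ?_⟩⟩
  rw [← ht, Function.update_self]
  congr 2
  refine List.map_congr_left fun j hj => ?_
  rw [Function.update_of_ne (ne_of_mem_of_not_mem hj hi)]

theorem span_range_list_prod_eq_toSubmodule_adjoin {ι : Type*} {τ : ι → Type*}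
    [∀ i, Nonempty (τ i)] {x : ∀ i, τ i → A} {G : ι → Set A}
    (hx : ∀ i, Submodule.span R (Set.range (x i)) =
      Subalgebra.toSubmodule (Algebra.adjoin R (G i)))
    (hG : Pairwise fun i j => ∀ s ∈ G i, ∀ t ∈ G j, Commute s t)
    {L : List ι} (hL : L.Nodup) :
    Submodule.span R (Set.range fun t : ∀ i, τ i => (L.map fun i => x i (t i)).prod) =
      Subalgebra.toSubmodule (Algebra.adjoin R (⋃ i ∈ L, G i)) := by
  induction L with
  | nil => simp [Algebra.toSubmodule_bot, Submodule.one_eq_span]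
  | cons i L ih =>
    obtain ⟨hi, hL⟩ := List.nodup_cons.1 hL
    have hunion : ⋃ j ∈ i :: L, G j = G i ∪ ⋃ j ∈ L, G j := by
      ext; simp
    have hcomm : ∀ s ∈ G i, ∀ t ∈ ⋃ j ∈ L, G j, Commute s t := by
      intro s hs t ht
      obtain ⟨j, hj, ht⟩ := Set.mem_iUnion₂.1 ht
      exact hG (ne_of_mem_of_not_mem hj hi).symm s hs t ht
    rw [range_list_prod_cons x hi, ← Submodule.span_mul_span, hx, ih hL, hunion,
      toSubmodule_adjoin_union_of_commute hcomm]

theorem list_prod_map_mul_of_commute {M ι : Type*} [Monoid M] {f g : ι → M}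
    (h : Pairwise fun i j => Commute (f i) (g j)) {L : List ι} (hL : L.Nodup) :
    (L.map f).prod * (L.map g).prod = (L.map fun i => f i * g i).prod := by
  induction L with
  | nil => simp
  | cons i L ih =>
    obtain ⟨hi, hL⟩ := List.nodup_cons.1 hL
    have hcomm : Commute (L.map f).prod (g i) := by
      refine Commute.list_prod_left _ _ ?_
      simp only [List.mem_map, forall_exists_index, and_imp, forall_apply_eq_imp_iff₂]
      exact fun j hj => h (ne_of_mem_of_not_mem hj hi)
    simp only [List.map_cons, List.prod_cons]
    rw [← ih hL, mul_assoc, ← mul_assoc _ (g i), hcomm.eq, mul_assoc, mul_assoc]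

end AdjoinSpan

section OneSite

/-- The relations satisfied at a single site by the creation operator `u`, the annihilation operator
`d` and the number operator `N` of the phase model. -/
structure PhaseRelations {A : Type*} [Ring A] (u d N : A) : Prop where
  down_mul_up : d * u = 1
  number_mul_up : N * u = u * N + u
  down_mul_number : d * N = N * d + d
  up_mul_down_mul_number : u * d * N = N

/-- The word `u ^ b * d ^ a * N ^ c` with exponent triple `t = (b, a, c)`. -/
def phaseWord {A : Type*} [Monoid A] (u d N : A) (t : ℕ × ℕ × ℕ) : A :=
  u ^ t.1 * d ^ t.2.1 * N ^ t.2.2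

/-- The exponent triples `(b, a, c)` with `a * b * c = 0`: those of the one-site words to which the
relation `u * d * N = N` can no longer be applied. -/
abbrev ReducedExponent := {t : ℕ × ℕ × ℕ // t.2.1 * t.1 * t.2.2 = 0}

theorem up_mul_phaseWord {A : Type*} [Monoid A] (u d N : A) (b a c : ℕ) :
    u * phaseWord u d N (b, a, c) = phaseWord u d N (b + 1, a, c) := by
  simp only [phaseWord, pow_succ', mul_assoc]

theorem down_mul_phaseWord_zero {A : Type*} [Monoid A] (u d N : A) (a c : ℕ) :
    d * phaseWord u d N (0, a, c) = phaseWord u d N (0, a + 1, c) := by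
  simp only [phaseWord, pow_succ', pow_zero, one_mul, mul_assoc]

namespace PhaseRelations

variable {A : Type*} [Ring A] {u d N : A} (h : PhaseRelations u d N)
include h

theorem number_mul_up_pow (b : ℕ) : N * u ^ b = u ^ b * N + b • u ^ b := by
  induction b with
  | zero => simp
  | succ b ih =>
    rw [pow_succ, ← mul_assoc, ih, add_mul, mul_assoc, h.number_mul_up]
    simp only [mul_add, mul_assoc, smul_mul_assoc, succ_nsmul']
    abel

theorem down_pow_mul_number (a : ℕ) : d ^ a * N = N * d ^ a + a • d ^ a := by
  induction a with
  | zero => simp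
  | succ a ih =>
    rw [pow_succ', mul_assoc, ih, mul_add, ← mul_assoc, h.down_mul_number]
    simp only [add_mul, mul_assoc, mul_smul_comm, succ_nsmul']
    abel

theorem up_mul_down_pow_mul_number (a : ℕ) :
    u * d ^ (a + 1) * N = d ^ a * N - a • d ^ a + a • (u * d ^ (a + 1)) := by
  calc u * d ^ (a + 1) * N = u * d * (d ^ a * N) := by simp only [pow_succ', mul_assoc]
    _ = u * d * N * d ^ a + a • (u * d * d ^ a) := by
      rw [h.down_pow_mul_number, mul_add, ← mul_assoc, mul_smul_comm]
    _ = N * d ^ a + a • (u * d ^ (a + 1)) := by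
      rw [h.up_mul_down_mul_number, mul_assoc, pow_succ']
    _ = d ^ a * N - a • d ^ a + a • (u * d ^ (a + 1)) := by
      rw [h.down_pow_mul_number, add_sub_cancel_right]

theorem phaseWord_succ (b a c : ℕ) :
    phaseWord u d N (b + 1, a + 1, c + 1) =
      phaseWord u d N (b, a, c + 1) - a • phaseWord u d N (b, a, c) +
        a • phaseWord u d N (b + 1, a + 1, c) := by
  calc phaseWord u d N (b + 1, a + 1, c + 1)
      = u ^ b * (u * d ^ (a + 1) * N) * N ^ c := by
        simp only [phaseWord, pow_succ u, pow_succ' N, mul_assoc]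
    _ = _ := by
        rw [h.up_mul_down_pow_mul_number]
        simp only [phaseWord, pow_succ u, pow_succ' N, mul_add, add_mul, mul_sub, sub_mul,
          mul_smul_comm, smul_mul_assoc, mul_assoc]

theorem down_mul_phaseWord_succ (b a c : ℕ) :
    d * phaseWord u d N (b + 1, a, c) = phaseWord u d N (b, a, c) := by
  simp only [phaseWord, pow_succ', ← mul_assoc, h.down_mul_up, one_mul]

theorem number_mul_phaseWord (b a c : ℕ) :
    N * phaseWord u d N (b, a, c) =
      phaseWord u d N (b, a, c + 1) + b • phaseWord u d N (b, a, c) -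
        a • phaseWord u d N (b, a, c) := by
  have hd : N * d ^ a = d ^ a * N - a • d ^ a := by
    rw [h.down_pow_mul_number, add_sub_cancel_right]
  simp only [phaseWord, ← mul_assoc, h.number_mul_up_pow, add_mul]
  rw [mul_assoc (u ^ b) N, hd]
  simp only [pow_succ', mul_sub, sub_mul, mul_smul_comm, smul_mul_assoc, mul_assoc]
  abel

variable (R : Type*) [CommRing R] [Algebra R A]

theorem phaseWord_mem_span : ∀ b a c : ℕ, phaseWord u d N (b, a, c) ∈
    Submodule.span R (Set.range fun t : ReducedExponent => phaseWord u d N t)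
  | 0, a, c => Submodule.subset_span ⟨⟨(0, a, c), by simp⟩, rfl⟩
  | b, 0, c => Submodule.subset_span ⟨⟨(b, 0, c), by simp⟩, rfl⟩
  | b, a, 0 => Submodule.subset_span ⟨⟨(b, a, 0), by simp⟩, rfl⟩
  | b + 1, a + 1, c + 1 => by
    rw [h.phaseWord_succ]
    exact add_mem
      (sub_mem (phaseWord_mem_span b a (c + 1)) (nsmul_mem (phaseWord_mem_span b a c) a))
      (nsmul_mem (phaseWord_mem_span (b + 1) (a + 1) c) a)

theorem span_phaseWord_eq_toSubmodule_adjoin :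
    Submodule.span R (Set.range fun t : ReducedExponent => phaseWord u d N t) =
      Subalgebra.toSubmodule (Algebra.adjoin R {u, d, N}) := by
  refine span_eq_toSubmodule_adjoin ?_ ?_ ?_
  · rintro _ ⟨t, rfl⟩
    have hgen : ∀ x ∈ ({u, d, N} : Set A), ∀ k, x ^ k ∈ Algebra.adjoin R {u, d, N} :=
      fun x hx k => pow_mem (Algebra.subset_adjoin hx) k
    exact mul_mem (mul_mem (hgen u (by simp) _) (hgen d (by simp) _)) (hgen N (by simp) _)
  · simpa [phaseWord] using h.phaseWord_mem_span R 0 0 0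
  · rintro _ (rfl | rfl | rfl) _ ⟨⟨⟨b, a, c⟩, -⟩, rfl⟩
    · rw [up_mul_phaseWord]
      exact h.phaseWord_mem_span R _ _ _
    · cases b with
      | zero =>
        rw [down_mul_phaseWord_zero]
        exact h.phaseWord_mem_span R _ _ _
      | succ b =>
        rw [h.down_mul_phaseWord_succ]
        exact h.phaseWord_mem_span R _ _ _
    · rw [h.number_mul_phaseWord]
      exact sub_mem (add_mem (h.phaseWord_mem_span R _ _ _)
        (nsmul_mem (h.phaseWord_mem_span R _ _ _) _)) (nsmul_mem (h.phaseWord_mem_span R _ _ _) _)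

end PhaseRelations

end OneSite

section SiteOperators

variable {R ι X : Type*} [CommRing R]

/-- The entries `(x, x')` of the matrix of the weighted map `x ↦ w x • σ x`, indexed by its source
`x` and its target `x'`. -/
def weightedMapEntry (σ : X → X) (w : X → R) (x : X × X) : R :=
  Finsupp.single (σ x.1) (w x.1) x.2

variable [DecidableEq ι]

/-- The operator on configurations that acts at the site `i` by the weighted map `x ↦ w x • σ x`
and leaves all other sites unchanged. -/
def siteOp (i : ι) (σ : X → X) (w : X → R) : Module.End R ((ι → X) →₀ R) :=
  Finsupp.lift ((ι → X) →₀ R) R (ι → X) fun m =>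
    Finsupp.single (Function.update m i (σ (m i))) (w (m i))

theorem siteOp_single (i : ι) (σ : X → X) (w : X → R) (m : ι → X) (r : R) :
    siteOp i σ w (Finsupp.single m r) =
      Finsupp.single (Function.update m i (σ (m i))) (w (m i) * r) := by
  simp [siteOp, mul_comm]

theorem siteOp_congr {i : ι} {σ τ : X → X} {w v : X → R} (hw : ∀ x, w x = v x)
    (hσ : ∀ x, v x ≠ 0 → σ x = τ x) : siteOp i σ w = siteOp i τ v := by
  refine Finsupp.lhom_ext fun m r => ?_
  rw [siteOp_single, siteOp_single, hw]
  by_cases hv : v (m i) = 0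
  · simp only [hv, zero_mul, Finsupp.single_zero]
  · rw [hσ _ hv]

theorem siteOp_id_one (i : ι) : siteOp i (id : X → X) (1 : X → R) = 1 := by
  refine Finsupp.lhom_ext fun m r => ?_
  simp only [siteOp_single, id, Function.update_eq_self, Pi.one_apply, one_mul,
    Module.End.one_apply]

theorem siteOp_add (i : ι) (σ : X → X) (w v : X → R) :
    siteOp i σ (w + v) = siteOp i σ w + siteOp i σ v := by
  refine Finsupp.lhom_ext fun m r => ?_
  simp only [siteOp_single, LinearMap.add_apply, Pi.add_apply, add_mul, Finsupp.single_add]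

theorem siteOp_mul_siteOp (i : ι) (σ τ : X → X) (w v : X → R) :
    siteOp i σ w * siteOp i τ v = siteOp i (σ ∘ τ) (w ∘ τ * v) := by
  refine Finsupp.lhom_ext fun m r => ?_
  simp only [Module.End.mul_apply, siteOp_single, Function.update_self, Function.update_idem,
    Function.comp_apply, Pi.mul_apply, mul_assoc]

theorem commute_siteOp {i j : ι} (hij : i ≠ j) (σ τ : X → X) (w v : X → R) :
    Commute (siteOp i σ w) (siteOp j τ v) := by
  refine Finsupp.lhom_ext fun m r => ?_
  simp only [Module.End.mul_apply, siteOp_single, Function.update_of_ne hij,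
    Function.update_of_ne hij.symm, Function.update_comm hij, mul_left_comm]

theorem list_prod_siteOp_single {L : List ι} (hL : L.Nodup) (σ : ι → X → X) (w : ι → X → R)
    (m : ι → X) (r : R) :
    (L.map fun i => siteOp i (σ i) (w i)).prod (Finsupp.single m r) =
      Finsupp.single (fun j => if j ∈ L then σ j (m j) else m j)
        ((L.map fun i => w i (m i)).prod * r) := by
  induction L with
  | nil => simp
  | cons i L ih =>
    obtain ⟨hi, hL⟩ := List.nodup_cons.1 hL
    rw [List.map_cons, List.prod_cons, Module.End.mul_apply, ih hL, siteOp_single]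
    congr 1
    · funext j
      by_cases hj : j = i <;> simp [hj, hi]
    · simp [hi, mul_assoc]

theorem linearIndependent_list_prod_siteOp {τ : ι → Type*} {σ : ∀ i, τ i → X → X}
    {w : ∀ i, τ i → X → R}
    (h : ∀ i, LinearIndependent R fun t => weightedMapEntry (σ i t) (w i t))
    {L : List ι} (hL : L.Nodup) (hmem : ∀ i, i ∈ L) :
    LinearIndependent R fun t : ∀ i, τ i =>
      (L.map fun i => siteOp i (σ i (t i)) (w i (t i))).prod := by
  classical
  have : Fintype ι := ⟨L.toFinset, fun i => List.mem_toFinset.2 (hmem i)⟩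
  let entries : Module.End R ((ι → X) →₀ R) →ₗ[R] (ι → X × X) → R :=
    LinearMap.pi fun x => Finsupp.lapply (fun i => (x i).2) ∘ₗ
      LinearMap.applyₗ (Finsupp.single (fun i => (x i).1) 1)
  refine LinearIndependent.of_comp entries ?_
  convert linearIndependent_pi_prod h using 1
  funext t x
  have hprod (f : ι → R) : (L.map f).prod = ∏ i, f i := by
    rw [← List.prod_toFinset f hL, Finset.eq_univ_of_forall fun i => List.mem_toFinset.2 (hmem i)]
  simp [entries, list_prod_siteOp_single hL, hmem, hprod, weightedMapEntry, Finsupp.single_apply,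
    Finset.prod_ite_zero, funext_iff]

variable (R) in
theorem phaseRelations_siteOp (i : ι) : PhaseRelations (siteOp (R := R) i (· + 1) 1)
    (siteOp i (· - 1) (cutoffPow R 1 0)) (siteOp i id Nat.cast) where
  down_mul_up := by
    rw [siteOp_mul_siteOp, ← siteOp_id_one]
    exact siteOp_congr (fun m => by simp [cutoffPow]) fun m _ => by simp
  number_mul_up := by
    rw [siteOp_mul_siteOp, siteOp_mul_siteOp, Function.id_comp, Function.comp_id, ← siteOp_add]
    exact siteOp_congr (fun m => by simp) fun _ _ => rfl
  down_mul_number := by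
    rw [siteOp_mul_siteOp, siteOp_mul_siteOp, Function.id_comp, Function.comp_id, ← siteOp_add]
    refine siteOp_congr (fun m => ?_) fun _ _ => rfl
    cases m <;> simp [cutoffPow]
  up_mul_down_mul_number := by
    rw [siteOp_mul_siteOp, siteOp_mul_siteOp]
    refine siteOp_congr (fun m => ?_) fun m hm => ?_
    · cases m <;> simp [cutoffPow]
    · have hm : m ≠ 0 := by rintro rfl; exact hm Nat.cast_zero
      exact Nat.sub_add_cancel (Nat.pos_of_ne_zero hm)

variable (R) in
theorem phaseWord_siteOp (i : ι) (b a c : ℕ) :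
    phaseWord (siteOp (R := R) i (· + 1) 1) (siteOp i (· - 1) (cutoffPow R 1 0))
      (siteOp i id Nat.cast) (b, a, c) = siteOp i (· - a + b) (cutoffPow R a c) := by
  have hup : siteOp (R := R) i (· + 1) 1 ^ b = siteOp i (· + b) 1 := by
    induction b with
    | zero => exact (siteOp_id_one i).symm
    | succ b ih =>
      rw [pow_succ', ih, siteOp_mul_siteOp]
      exact siteOp_congr (fun m => by simp) fun _ _ => rfl
  have hdown : siteOp i (· - 1) (cutoffPow R 1 0) ^ a = siteOp i (· - a) (cutoffPow R a 0) := by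
    induction a with
    | zero =>
      rw [pow_zero, ← siteOp_id_one]
      exact siteOp_congr (fun m => by simp [cutoffPow]) fun _ _ => rfl
    | succ a ih =>
      rw [pow_succ', ih, siteOp_mul_siteOp]
      refine siteOp_congr (fun m => ?_) fun _ _ => rfl
      have hle : a ≤ m ∧ 1 ≤ m - a ↔ a + 1 ≤ m := by omega
      simp only [cutoffPow, pow_zero, Pi.mul_apply, Function.comp_apply, mul_ite, mul_one, mul_zero,
        ← ite_and, hle]
  have hnumber : siteOp i id (Nat.cast : ℕ → R) ^ c = siteOp i id (Nat.cast ^ c) := by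
    induction c with
    | zero => rw [pow_zero, pow_zero, siteOp_id_one]
    | succ c ih =>
      rw [pow_succ', ih, siteOp_mul_siteOp, Function.comp_id, Function.comp_id, pow_succ']
  rw [phaseWord, hup, hdown, hnumber, siteOp_mul_siteOp, siteOp_mul_siteOp]
  exact siteOp_congr (fun m => by simp [cutoffPow]) fun _ _ => rfl

variable (R) in
theorem weightedMapEntry_on_diagonal (b a c m : ℕ) (k : ℤ) :
    (if 0 ≤ m + k then weightedMapEntry (· - a + b) (cutoffPow R a c) (m, (m + k).toNat) else 0) =
      if (b : ℤ) - a = k then cutoffPow R a c m else 0 := by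
  simp only [weightedMapEntry, cutoffPow, Finsupp.single_apply]
  split_ifs <;> first | rfl | omega

theorem linearIndependent_weightedMapEntry [IsDomain R] [CharZero R] :
    LinearIndependent R fun t : ReducedExponent =>
      weightedMapEntry (· - t.1.2.1 + t.1.1) (cutoffPow R t.1.2.1 t.1.2.2) := by
  let diagonal (k : ℤ) : (ℕ × ℕ → R) →ₗ[R] (ℕ → R) := LinearMap.pi fun m =>
    if 0 ≤ m + k then LinearMap.proj (m, (m + k).toNat) else 0
  refine linearIndependent_of_fiberwise (p := fun t => (t.1.1 : ℤ) - t.1.2.1)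
    (w := fun t => cutoffPow R t.1.2.1 t.1.2.2) diagonal (fun k t => funext fun m => ?_)
    fun k => linearIndepOn_cutoffPow ?_ ?_
  · simpa only [diagonal, LinearMap.pi_apply, apply_ite (DFunLike.coe · _), ite_apply,
      Pi.zero_apply, LinearMap.proj_apply, LinearMap.zero_apply]
      using weightedMapEntry_on_diagonal R _ _ _ m k
  · rintro ⟨⟨b, a, c⟩, h⟩ ⟨hk, hc⟩ ⟨⟨b', a', c'⟩, h'⟩ ⟨hk', hc'⟩ hcc
    have hab : a = 0 ∨ b = 0 := by simpa [hc] using h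
    have hab' : a' = 0 ∨ b' = 0 := by simpa [hc'] using h'
    simp only [Set.mem_preimage, Set.mem_singleton_iff, Subtype.mk.injEq, Prod.mk.injEq] at *
    omega
  · rintro ⟨⟨b, a, c⟩, h⟩ ⟨hk, hc⟩ ⟨⟨b', a', c'⟩, h'⟩ ⟨hk', hc'⟩ haa
    simp only [Set.mem_preimage, Set.mem_singleton_iff, Subtype.mk.injEq, Prod.mk.injEq] at *
    omega

end SiteOperators

section PhaseAlgebra

variable {n : ℕ}

theorem creOp_eq_siteOp (i : ZMod n) : creOp n i = siteOp i (· + 1) 1 := by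
  refine Finsupp.lhom_ext fun m r => ?_
  have hm : (fun c => m c + Pi.single (M := fun _ => ℕ) i 1 c) = Function.update m i (m i + 1) := by
    funext c
    by_cases h : c = i <;> simp [h]
  simp [creOp, siteOp_single, hm]

theorem annOp_eq_siteOp (i : ZMod n) : annOp n i = siteOp i (· - 1) (cutoffPow ℂ 1 0) := by
  refine Finsupp.lhom_ext fun m r => ?_
  have hm : (fun c => m c - Pi.single (M := fun _ => ℕ) i 1 c) = Function.update m i (m i - 1) := by
    funext c
    by_cases h : c = i <;> simp [h]
  by_cases h : m i = 0 <;> simp [annOp, siteOp_single, cutoffPow, hm, h, Nat.one_le_iff_ne_zero]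

theorem numOp_eq_siteOp (i : ZMod n) : numOp n i = siteOp i id Nat.cast := by
  refine Finsupp.lhom_ext fun m r => ?_
  simp [numOp, siteOp_single, mul_comm]

theorem phaseRelations_creOp (i : ZMod n) :
    PhaseRelations (creOp n i) (annOp n i) (numOp n i) := by
  rw [creOp_eq_siteOp, annOp_eq_siteOp, numOp_eq_siteOp]
  exact phaseRelations_siteOp ℂ i

theorem phaseWord_creOp (i : ZMod n) (t : ℕ × ℕ × ℕ) :
    phaseWord (creOp n i) (annOp n i) (numOp n i) t =
      siteOp i (· - t.2.1 + t.1) (cutoffPow ℂ t.2.1 t.2.2) := by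
  rw [creOp_eq_siteOp, annOp_eq_siteOp, numOp_eq_siteOp]
  exact phaseWord_siteOp ℂ i t.1 t.2.1 t.2.2

/-- The three generators `φ_i*, φ_i, N_i` of the phase algebra attached to the site `i`. -/
def siteGenerators (i : ZMod n) : Set (Module.End ℂ (StateSpace n)) :=
  {creOp n i, annOp n i, numOp n i}

theorem exists_eq_siteOp_of_mem_siteGenerators {i : ZMod n} {x : Module.End ℂ (StateSpace n)}
    (hx : x ∈ siteGenerators i) : ∃ σ w, x = siteOp i σ w := by
  rcases hx with rfl | rfl | rfl
  exacts [⟨_, _, creOp_eq_siteOp i⟩, ⟨_, _, annOp_eq_siteOp i⟩, ⟨_, _, numOp_eq_siteOp i⟩]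

theorem pairwise_commute_siteGenerators :
    Pairwise fun i j : ZMod n => ∀ x ∈ siteGenerators i, ∀ y ∈ siteGenerators j, Commute x y := by
  intro i j hij x hx y hy
  obtain ⟨σ, w, rfl⟩ := exists_eq_siteOp_of_mem_siteGenerators hx
  obtain ⟨τ, v, rfl⟩ := exists_eq_siteOp_of_mem_siteGenerators hy
  exact commute_siteOp hij σ τ w v

/-- The sites of `ℤ/nℤ` in increasing order, the order of the factors of `ordProd`. -/
def sites (n : ℕ) : List (ZMod n) :=
  (List.finRange n).map fun i : Fin n => ((i : ℕ) : ZMod n)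

theorem nodup_sites : (sites n).Nodup := by
  refine (List.nodup_finRange n).map fun i j hij => Fin.ext ?_
  simpa only [ZMod.val_natCast_of_lt i.2, ZMod.val_natCast_of_lt j.2] using congrArg ZMod.val hij

theorem mem_sites [NeZero n] (i : ZMod n) : i ∈ sites n :=
  List.mem_map.2 ⟨⟨i.val, ZMod.val_lt i⟩, List.mem_finRange _, ZMod.natCast_zmod_val i⟩

theorem ordProd_eq_prod_sites (F : ZMod n → Module.End ℂ (StateSpace n)) :
    ordProd n F = ((sites n).map F).prod := by
  -- In `ordProd` the list `List.finRange n` is coerced to a list of numbers by a monadic bind.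
  simp only [ordProd, sites, List.bind_eq_flatMap, List.pure_def, ← List.map_eq_flatMap,
    List.map_map]
  rfl

theorem Bfam_eq_prod_phaseWord (t : (ZMod n → ℕ) × (ZMod n → ℕ) × (ZMod n → ℕ)) :
    Bfam n t = ((sites n).map fun i =>
      phaseWord (creOp n i) (annOp n i) (numOp n i) (t.1 i, t.2.1 i, t.2.2 i)).prod := by
  simp only [Bfam, ordProd_eq_prod_sites]
  have hcomm {i j : ZMod n} (hij : i ≠ j) (x) (hx : x ∈ siteGenerators i) (y)
      (hy : y ∈ siteGenerators j) (k l : ℕ) : Commute (x ^ k) (y ^ l) :=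
    (pairwise_commute_siteGenerators hij x hx y hy).pow_pow k l
  have hcre (i : ZMod n) : creOp n i ∈ siteGenerators i := Or.inl rfl
  have hann (i : ZMod n) : annOp n i ∈ siteGenerators i := Or.inr (Or.inl rfl)
  have hnum (i : ZMod n) : numOp n i ∈ siteGenerators i := Or.inr (Or.inr rfl)
  rw [list_prod_map_mul_of_commute _ nodup_sites, list_prod_map_mul_of_commute _ nodup_sites]
  · rfl
  · exact fun i j hij => (hcomm hij _ (hcre i) _ (hnum j) _ _).mul_left
      (hcomm hij _ (hann i) _ (hnum j) _ _)
  · exact fun i j hij => hcomm hij _ (hcre i) _ (hann j) _ _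

/-- A reduced multi-site index `(b, a, c)`, a triple of exponent vectors, regarded as a family of
one-site exponent triples. -/
def reducedExponentEquiv (ι : Type*) :
    {t : (ι → ℕ) × (ι → ℕ) × (ι → ℕ) // ∀ i, t.2.1 i * t.1 i * t.2.2 i = 0} ≃
      (ι → ReducedExponent) where
  toFun t i := ⟨(t.1.1 i, t.1.2.1 i, t.1.2.2 i), t.2 i⟩
  invFun s := ⟨(fun i => (s i).1.1, fun i => (s i).1.2.1, fun i => (s i).1.2.2), fun i => (s i).2⟩
  left_inv _ := rfl
  right_inv _ := rfl

theorem linearIndependent_prod_phaseWord [NeZero n] :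
    LinearIndependent ℂ fun t : ZMod n → ReducedExponent =>
      ((sites n).map fun i => phaseWord (creOp n i) (annOp n i) (numOp n i) (t i)).prod := by
  simp only [phaseWord_creOp]
  exact linearIndependent_list_prod_siteOp (fun _ => linearIndependent_weightedMapEntry)
    nodup_sites mem_sites

theorem span_prod_phaseWord_eq_toSubmodule_adjoin [NeZero n] :
    Submodule.span ℂ (Set.range fun t : ZMod n → ReducedExponent =>
      ((sites n).map fun i => phaseWord (creOp n i) (annOp n i) (numOp n i) (t i)).prod) =
      Subalgebra.toSubmodule (Algebra.adjoin ℂ (⋃ i, siteGenerators i)) := by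
  have : Nonempty ReducedExponent := ⟨⟨0, rfl⟩⟩
  simpa only [mem_sites, Set.iUnion_true] using
    span_range_list_prod_eq_toSubmodule_adjoin
      (x := fun i (t : ReducedExponent) => phaseWord (creOp n i) (annOp n i) (numOp n i) t)
      (G := siteGenerators)
      (fun i => (phaseRelations_creOp i).span_phaseWord_eq_toSubmodule_adjoin ℂ)
      pairwise_commute_siteGenerators nodup_sites

end PhaseAlgebra

/-- The family `B_{b,a,c}`, indexed by triples `(b,a,c)` of exponent
vectors with `a_i · b_i · c_i = 0` for every `i`, is linearly independent and spans the
unital subalgebra of `End(H)` generated by the `φ_i, φ_i*, N_i`, i.e. it is a ℂ-basis of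
the phase algebra. -/
theorem phase_algebra_basis (n : ℕ) (hn : 1 ≤ n) :
    LinearIndependent ℂ
      (fun t : {t : (ZMod n → ℕ) × (ZMod n → ℕ) × (ZMod n → ℕ) //
          ∀ i, t.2.1 i * t.1 i * t.2.2 i = 0} => Bfam n t.1) ∧
    Submodule.span ℂ
        (Set.range (fun t : {t : (ZMod n → ℕ) × (ZMod n → ℕ) × (ZMod n → ℕ) //
          ∀ i, t.2.1 i * t.1 i * t.2.2 i = 0} => Bfam n t.1)) =
      Subalgebra.toSubmodule (Algebra.adjoin ℂ
        {x : Module.End ℂ (StateSpace n) |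
          ∃ i : ZMod n, x = creOp n i ∨ x = annOp n i ∨ x = numOp n i}) := by
  have : NeZero n := ⟨Nat.one_le_iff_ne_zero.1 hn⟩
  have hBfam : (fun t : {t : (ZMod n → ℕ) × (ZMod n → ℕ) × (ZMod n → ℕ) //
      ∀ i, t.2.1 i * t.1 i * t.2.2 i = 0} => Bfam n t.1) =
      (fun s : ZMod n → ReducedExponent => ((sites n).map fun i =>
        phaseWord (creOp n i) (annOp n i) (numOp n i) (s i)).prod) ∘ reducedExponentEquiv _ :=
    funext fun t => Bfam_eq_prod_phaseWord t.1
  have hgenerators : {x : Module.End ℂ (StateSpace n) |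
      ∃ i : ZMod n, x = creOp n i ∨ x = annOp n i ∨ x = numOp n i} = ⋃ i, siteGenerators i :=
    (Set.iUnion_ofPred _).symm
  rw [hBfam, hgenerators, (reducedExponentEquiv _).surjective.range_comp]
  exact ⟨linearIndependent_prod_phaseWord.comp _ (reducedExponentEquiv _).injective,
    span_prod_phaseWord_eq_toSubmodule_adjoin⟩
end
end

section
/- Let n ≥ 2 and let Pl_fin be the quotient of the free associative ℂ-algebra on generators a_1, …, a_{n−1} by the two-sided ideal generated by a_ia_j − a_ja_i for all i, j with |i−j| > 1, together with a_{i+1}a_i² − a_ia_{i+1}a_i and a_{i+1}²a_i − a_{i+1}a_ia_{i+1} for 1 ≤ i ≤ n−2. For 1 ≤ j ≤ m ≤ n−1 write w_{m,j} = a_m a_{m−1} ⋯ a_j (the descending string of generators from a_m down to a_j). Then the images in Pl_fin of the monomials ∏_{m=1}^{n−1} ∏_{j=1}^{m} w_{m,j}^{α_{m,j}}, the factors multiplied in the fixed order of increasing m and, for each m, increasing j, taken over all choices of exponents α_{m,j} ∈ ℕ, form a ℂ-basis of Pl_fin. -/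
noncomputable section

open scoped BigOperators

/-- The generator `a_{i+1}` of the free algebra (0-based indexing of the `n-1` generators
`a_1, …, a_{n-1}`). -/
def g1 (n : ℕ) (i : Fin (n - 1)) : FreeAlgebra ℂ (Fin (n - 1)) := FreeAlgebra.ι ℂ i

/-- The defining relations of the local plactic algebra `Pl_fin`:
`a_i a_j = a_j a_i` for `|i - j| > 1`, and the Knuth-type relations
`a_{i+1} a_i a_i = a_i a_{i+1} a_i` and `a_{i+1} a_{i+1} a_i = a_{i+1} a_i a_{i+1}`. -/
inductive PlFinRel (n : ℕ) :
    FreeAlgebra ℂ (Fin (n - 1)) → FreeAlgebra ℂ (Fin (n - 1)) → Prop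
  | comm (i j : Fin (n - 1)) (h : (i : ℕ) + 1 < (j : ℕ) ∨ (j : ℕ) + 1 < (i : ℕ)) :
      PlFinRel n (g1 n i * g1 n j) (g1 n j * g1 n i)
  | row (i j : Fin (n - 1)) (h : (j : ℕ) = (i : ℕ) + 1) :
      PlFinRel n (g1 n j * (g1 n i * g1 n i)) (g1 n i * (g1 n j * g1 n i))
  | col (i j : Fin (n - 1)) (h : (j : ℕ) = (i : ℕ) + 1) :
      PlFinRel n (g1 n j * (g1 n j * g1 n i)) (g1 n j * (g1 n i * g1 n j))

/-- The local plactic algebra `Pl_fin` on the generators `a_1, …, a_{n-1}`. -/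
abbrev PlFin (n : ℕ) := RingQuot (PlFinRel n)

/-- The generator `a_{i+1}` as an element of `Pl_fin`. -/
def aF (n : ℕ) (i : Fin (n - 1)) : PlFin n :=
  RingQuot.mkAlgHom ℂ (PlFinRel n) (g1 n i)

/-- The descending string `w_{m,j} = a_m a_{m-1} ⋯ a_j` (here in 0-based indexing:
`w(m,j) = a_{m+1} a_m ⋯ a_{j+1}` for `0 ≤ j ≤ m ≤ n-2`). -/
def wmon (n : ℕ) (m : Fin (n - 1)) (j : Fin ((m : ℕ) + 1)) : PlFin n :=
  ((List.range ((m : ℕ) + 1 - (j : ℕ))).map fun t =>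
    aF n ⟨(m : ℕ) - t, by have := m.isLt; omega⟩).prod

/-- The index set for the exponents: pairs `(m, j)` with `1 ≤ j ≤ m ≤ n-1`
(0-based: `0 ≤ j ≤ m ≤ n-2`). -/
abbrev MonIdx (n : ℕ) := Σ m : Fin (n - 1), Fin ((m : ℕ) + 1)

/-- The monomial `∏_{m} ∏_{j ≤ m} w_{m,j}^{α_{m,j}}`, the factors multiplied in increasing
order of `m` and, for fixed `m`, increasing order of `j`. -/
def famMon (n : ℕ) (α : MonIdx n → ℕ) : PlFin n :=
  ((List.finRange (n - 1)).map fun (m : Fin (n - 1)) =>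
    ((List.finRange ((m : ℕ) + 1)).map fun (j : Fin ((m : ℕ) + 1)) => wmon n m j ^ α ⟨m, j⟩).prod).prod

/-!
A monomial is indexed by a multiset of segments `[j, m)`, the segment standing for the descending
word on its elements. Words of nested segments commute, and this implies that multiplying a monomial
on the left by `a i` extends the longest segment ending at `i` by one step, possibly the empty one.
Therefore every word in the generators equals a monomial, so the monomials span.

These extension operators themselves satisfy the defining relations, so `Pl_fin` maps to the monoid
algebra of the self-maps of the set of multisegments. The monomial of `F`, evaluated in the
extension operators and applied to the empty multisegment, builds up `F` segment by segment.
Distinct monomials thus go to distinct self-maps, which are linearly independent in the monoid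
algebra.
-/

namespace LocalPlactic

/-- The defining relations of the local plactic monoid, for a sequence of elements of a monoid. -/
structure IsLocalPlactic {A : Type*} [Monoid A] (a : ℕ → A) : Prop where
  comm (i j : ℕ) (h : i + 1 < j) : a i * a j = a j * a i
  row (i : ℕ) : a (i + 1) * (a i * a i) = a i * (a (i + 1) * a i)
  col (i : ℕ) : a (i + 1) * (a (i + 1) * a i) = a (i + 1) * (a i * a (i + 1))

theorem IsLocalPlactic.map {A B : Type*} [Monoid A] [Monoid B] {a : ℕ → A}
    (ha : IsLocalPlactic a) (f : A →* B) : IsLocalPlactic (f ∘ a) where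
  comm i j h := by simp only [Function.comp_apply, ← map_mul, ha.comm i j h]
  row i := by simp only [Function.comp_apply, ← map_mul, ha.row i]
  col i := by simp only [Function.comp_apply, ← map_mul, ha.col i]

section Strand

variable {A : Type*} [Monoid A] {a : ℕ → A}

/-- The descending word `a_{m-1} a_{m-2} ⋯ a_j`, attached to the segment `[j, m)`. The right end is
excluded so that the empty segment `[j, j)` has the word `1`. -/
def strand (a : ℕ → A) (j : ℕ) : ℕ → A
  | 0 => 1
  | m + 1 => if j ≤ m then a m * strand a j m else 1

theorem strand_succ {j m : ℕ} (h : j ≤ m) : strand a j (m + 1) = a m * strand a j m :=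
  if_pos h

theorem strand_self (j : ℕ) : strand a j j = 1 := by
  cases j with
  | zero => rfl
  | succ j => exact if_neg (by omega)

theorem commute_strand_of_forall {x : A} {j m : ℕ} (h : ∀ i, j ≤ i → i < m → Commute x (a i)) :
    Commute x (strand a j m) := by
  induction m with
  | zero => exact Commute.one_right x
  | succ m ih =>
    rw [strand]
    split_ifs with hjm
    · exact (h m hjm (by omega)).mul_right (ih fun i hji him => h i hji (by omega))
    · exact Commute.one_right x

theorem prod_range_strand (j m : ℕ) :
    ((List.range (m - j)).map fun t => a (m - 1 - t)).prod = strand a j m := by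
  induction m with
  | zero => simp [strand]
  | succ m ih =>
    rw [strand]
    split_ifs with hjm
    · rw [Nat.succ_sub hjm, List.prod_range_succ', ← ih]
      congr! 3
      funext t
      congr 1
      omega
    · simp [Nat.sub_eq_zero_of_le (Nat.lt_of_not_le hjm)]

theorem map_strand {B : Type*} [Monoid B] (f : A →* B) {b : ℕ → B} {m : ℕ}
    (h : ∀ i < m, f (a i) = b i) (j : ℕ) : f (strand a j m) = strand b j m := by
  induction m with
  | zero => exact map_one f
  | succ m ih =>
    simp only [strand, apply_ite f, map_mul, map_one, h m (by omega),
      ih fun i hi => h i (by omega)]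

namespace IsLocalPlactic

variable (ha : IsLocalPlactic a)
include ha

theorem commute_gen_strand_of_lt {i j m : ℕ} (hmi : m < i) : Commute (a i) (strand a j m) :=
  commute_strand_of_forall fun l _ hlm => (ha.comm l i (by omega)).symm

theorem commute_gen_strand_succ {i j : ℕ} (hji : j ≤ i) :
    Commute (a i) (strand a j (i + 1)) := by
  rw [strand_succ hji]
  obtain rfl | ⟨l, rfl, hjl⟩ : j = i ∨ ∃ l, i = l + 1 ∧ j ≤ l :=
    hji.eq_or_lt.imp_right fun h => ⟨i - 1, by omega, by omega⟩
  · rw [strand_self, mul_one]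
  · have hS : Commute (a (l + 1)) (strand a j l) := ha.commute_gen_strand_of_lt (by omega)
    rw [strand_succ hjl]
    calc a (l + 1) * (a (l + 1) * (a l * strand a j l))
        = a (l + 1) * (a (l + 1) * a l) * strand a j l := by simp only [mul_assoc]
      _ = a (l + 1) * a l * (a (l + 1) * strand a j l) := by rw [ha.col]; simp only [mul_assoc]
      _ = a (l + 1) * (a l * strand a j l) * a (l + 1) := by rw [hS.eq]; simp only [mul_assoc]

theorem commute_gen_strand_add_two {i j : ℕ} (hji : j ≤ i) :
    Commute (a i) (strand a j (i + 2)) := by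
  have hS : Commute (a i) (strand a j (i + 1)) := ha.commute_gen_strand_succ hji
  rw [strand_succ (by omega : j ≤ i + 1)]
  calc a i * (a (i + 1) * strand a j (i + 1))
      = a i * (a (i + 1) * a i) * strand a j i := by rw [strand_succ hji]; simp only [mul_assoc]
    _ = a (i + 1) * (a i * strand a j (i + 1)) := by
      rw [← ha.row, strand_succ hji]; simp only [mul_assoc]
    _ = a (i + 1) * strand a j (i + 1) * a i := by rw [hS.eq, mul_assoc]

theorem commute_gen_strand_of_mem {i j m : ℕ} (hji : j ≤ i) (him : i < m) :
    Commute (a i) (strand a j m) := by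
  obtain rfl | hm : m = i + 1 ∨ i + 2 ≤ m := by omega
  · exact ha.commute_gen_strand_succ hji
  · clear him
    induction m, hm using Nat.le_induction with
    | base => exact ha.commute_gen_strand_add_two hji
    | succ m him ih =>
      rw [strand_succ (by omega)]
      exact (show Commute (a i) (a m) from ha.comm i m him).mul_right ih

theorem commute_strand_of_nested {j j' m m' : ℕ} (hj : j ≤ j') (hm : m' ≤ m) :
    Commute (strand a j m) (strand a j' m') :=
  commute_strand_of_forall fun _ hji him =>
    (ha.commute_gen_strand_of_mem (hj.trans hji) (him.trans_le hm)).symm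

theorem commute_strand_same_end (j j' m : ℕ) : Commute (strand a j m) (strand a j' m) :=
  (le_total j j').elim (ha.commute_strand_of_nested · le_rfl)
    fun h => (ha.commute_strand_of_nested h le_rfl).symm

end IsLocalPlactic

end Strand

theorem mul_prod_range_pow {A : Type*} [Monoid A] {x : ℕ → A} {f g : ℕ → ℕ} {k n : ℕ} (hk : k < n)
    (hx : ∀ i < n, Commute (x k) (x i)) (hgk : g k = f k + 1) (hg : ∀ i ≠ k, g i = f i) :
    x k * ((List.range n).map fun i => x i ^ f i).prod =
      ((List.range n).map fun i => x i ^ g i).prod := by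
  induction n with
  | zero => omega
  | succ n ih =>
    rw [List.prod_range_succ, List.prod_range_succ]
    obtain rfl | hkn : k = n ∨ k < n := by omega
    · have hfg : ((List.range k).map fun i => x i ^ g i) = (List.range k).map fun i => x i ^ f i :=
        List.map_congr_left fun i hi => by rw [hg i (List.mem_range.1 hi).ne]
      have hcomm : Commute (x k) ((List.range k).map fun i => x i ^ f i).prod := by
        refine Commute.list_prod_right _ _ fun y hy => ?_
        obtain ⟨i, hi, rfl⟩ := List.mem_map.1 hy
        exact (hx i (by have := List.mem_range.1 hi; omega)).pow_right _
      rw [hfg, hgk, pow_succ', ← mul_assoc, ← mul_assoc, hcomm.eq]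
    · rw [← mul_assoc, ih hkn fun i hi => hx i (by omega), hg n hkn.ne']

section Monomial

/-- A multiset of segments of natural numbers: `F j m` is the multiplicity of the segment `[j, m)`.
Only the values with `j < m` matter; empty segments are regarded as always available. -/
abbrev Multisegment := ℕ → ℕ → ℕ

variable {A : Type*} [Monoid A] {a : ℕ → A}

/-- The product of the words of all segments of `F` with right end `m`, by increasing left end. -/
def rowProd (a : ℕ → A) (F : Multisegment) (m : ℕ) : A :=
  ((List.range m).map fun j => strand a j m ^ F j m).prod

/-- The product of the words of all segments of `F` contained in `[0, n)`, by increasing right end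
and then by increasing left end. -/
def monomial (a : ℕ → A) (F : Multisegment) (n : ℕ) : A :=
  ((List.range (n + 1)).map (rowProd a F)).prod

theorem monomial_succ (F : Multisegment) (n : ℕ) :
    monomial a F (n + 1) = monomial a F n * rowProd a F (n + 1) :=
  List.prod_range_succ _ _

theorem rowProd_congr {F G : Multisegment} {m : ℕ} (h : ∀ j < m, F j m = G j m) :
    rowProd a F m = rowProd a G m := by
  unfold rowProd
  congr 1
  exact List.map_congr_left fun j hj => by rw [h j (List.mem_range.1 hj)]

theorem commute_rowProd {x : A} {F : Multisegment} {m : ℕ}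
    (h : ∀ j < m, F j m ≠ 0 → Commute x (strand a j m)) : Commute x (rowProd a F m) := by
  refine Commute.list_prod_right _ _ fun y hy => ?_
  obtain ⟨j, hj, rfl⟩ := List.mem_map.1 hy
  by_cases hF : F j m = 0
  · rw [hF, pow_zero]
    exact Commute.one_right x
  · exact (h j (List.mem_range.1 hj) hF).pow_right _

theorem map_monomial {B : Type*} [Monoid B] (f : A →* B) {b : ℕ → B} {n : ℕ}
    (h : ∀ i < n, f (a i) = b i) (F : Multisegment) : f (monomial a F n) = monomial b F n := by
  have hrow : ∀ m ≤ n, f (rowProd a F m) = rowProd b F m := fun m hm => by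
    simp only [rowProd, map_list_prod, List.map_map, Function.comp_def, map_pow,
      map_strand f fun i hi => h i (hi.trans_le hm)]
  rw [monomial, monomial, map_list_prod, List.map_map]
  congr 1
  exact List.map_congr_left fun m hm => hrow m (Nat.lt_succ_iff.1 (List.mem_range.1 hm))

theorem IsLocalPlactic.strand_mul_rowProd (ha : IsLocalPlactic a) {F G : Multisegment} {k m : ℕ}
    (hk : k < m) (hGk : G k m = F k m + 1) (hG : ∀ j ≠ k, G j m = F j m) :
    strand a k m * rowProd a F m = rowProd a G m :=
  mul_prod_range_pow (x := fun j => strand a j m) (f := fun j => F j m) (g := fun j => G j m) hk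
    (fun j _ => ha.commute_strand_same_end k j m) hGk hG

end Monomial

section Extend

/-- The left end of the longest segment of `F` with right end `i`; it is `i`, for the empty segment
`[i, i)`, when there is none. -/
def leftEnd (i : ℕ) (F : Multisegment) : ℕ :=
  Nat.find (p := fun j => j = i ∨ 0 < F j i) ⟨i, Or.inl rfl⟩

theorem leftEnd_eq_iff {i k : ℕ} {F : Multisegment} :
    leftEnd i F = k ↔ (k = i ∨ 0 < F k i) ∧ ∀ j < k, j ≠ i ∧ F j i = 0 := by
  simp [leftEnd, Nat.find_eq_iff]

theorem leftEnd_le (i : ℕ) (F : Multisegment) : leftEnd i F ≤ i :=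
  Nat.find_min' _ (Or.inl rfl)

theorem leftEnd_le_of_pos {i j : ℕ} {F : Multisegment} (h : 0 < F j i) : leftEnd i F ≤ j :=
  Nat.find_min' _ (Or.inr h)

theorem pos_of_leftEnd_lt {i : ℕ} {F : Multisegment} (h : leftEnd i F < i) :
    0 < F (leftEnd i F) i :=
  (leftEnd_eq_iff.1 rfl).1.resolve_left h.ne

theorem eq_zero_of_lt_leftEnd {i j : ℕ} {F : Multisegment} (h : j < leftEnd i F) : F j i = 0 :=
  ((leftEnd_eq_iff.1 rfl).2 j h).2

theorem leftEnd_congr {i : ℕ} {F G : Multisegment} (h : ∀ j < i, F j i = G j i) :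
    leftEnd i F = leftEnd i G := by
  have := leftEnd_le i G
  have := @pos_of_leftEnd_lt i G
  have := @eq_zero_of_lt_leftEnd i
  refine leftEnd_eq_iff.2 ⟨?_, fun j hj => ?_⟩ <;> grind

/-- Replace one copy of the segment `[k, i)` of `F` by `[k, i + 1)`. Truncated subtraction makes
this right also for the empty segment `k = i`, which is not counted. -/
def grow (i k : ℕ) (F : Multisegment) : Multisegment := fun j m =>
  if j = k ∧ m = i + 1 then F j m + 1 else if j = k ∧ m = i then F j m - 1 else F j m

/-- Extend the longest segment with right end `i` by one step. This is how left multiplication by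
`a i` acts on monomials. -/
def extend (i : ℕ) (F : Multisegment) : Multisegment := grow i (leftEnd i F) F

/-- `extend i` as an element of the monoid of self-maps, in which composition is multiplication. -/
def extendEnd (i : ℕ) : Function.End Multisegment := extend i

theorem extendEnd_smul (i : ℕ) (F : Multisegment) : extendEnd i • F = extend i F := rfl

theorem extend_eq_grow {i k : ℕ} {F : Multisegment} (h : leftEnd i F = k) :
    extend i F = grow i k F := by
  rw [← h]; rfl

theorem grow_of_ne {i k m : ℕ} (F : Multisegment) (j : ℕ) (hi : m ≠ i) (hi' : m ≠ i + 1) :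
    grow i k F j m = F j m := by
  grind [grow]

theorem leftEnd_grow_of_ne {i i' k : ℕ} (F : Multisegment) (hi : i ≠ i') (hi' : i ≠ i' + 1) :
    leftEnd i (grow i' k F) = leftEnd i F :=
  leftEnd_congr fun j _ => grow_of_ne F j hi hi'

theorem extend_comm_of_add_one_lt {i i' : ℕ} (h : i + 1 < i') (F : Multisegment) :
    extend i (extend i' F) = extend i' (extend i F) := by
  rw [extend_eq_grow (F := F) rfl, extend_eq_grow (F := F) rfl,
    extend_eq_grow (leftEnd_grow_of_ne F (by omega) (by omega)),
    extend_eq_grow (leftEnd_grow_of_ne F (by omega) (by omega))]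
  funext j m
  grind [grow]

theorem extend_succ_comm_of_leftEnd_le {i : ℕ} {F : Multisegment}
    (h : leftEnd (i + 1) F ≤ leftEnd i F) :
    extend (i + 1) (extend i F) = extend i (extend (i + 1) F) := by
  obtain ⟨k, hk⟩ : ∃ k, leftEnd i F = k := ⟨_, rfl⟩
  obtain ⟨x, hx⟩ : ∃ x, leftEnd (i + 1) F = x := ⟨_, rfl⟩
  have hki : k ≤ i := hk ▸ leftEnd_le i F
  have hpos : 0 < F x (i + 1) := hx ▸ pos_of_leftEnd_lt (by omega)
  have hzero : ∀ j < x, F j (i + 1) = 0 := fun j hj => eq_zero_of_lt_leftEnd (hx ▸ hj)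
  have hx' : leftEnd (i + 1) (grow i k F) = x := by
    refine leftEnd_eq_iff.2 ⟨?_, fun j hj => ?_⟩ <;> grind [grow]
  have hk' : leftEnd i (grow (i + 1) x F) = k :=
    (leftEnd_grow_of_ne F (by omega) (by omega)).trans hk
  rw [extend_eq_grow hk, extend_eq_grow hx, extend_eq_grow hx', extend_eq_grow hk']
  funext j m
  grind [grow]

theorem extend_row (i : ℕ) (F : Multisegment) :
    extend (i + 1) (extend i (extend i F)) = extend i (extend (i + 1) (extend i F)) := by
  have hmono : leftEnd i F ≤ leftEnd i (extend i F) := by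
    have hle (j : ℕ) : extend i F j i ≤ F j i := by simp only [extend, grow]; grind
    by_contra! hlt
    have hpos := pos_of_leftEnd_lt (hlt.trans_le (leftEnd_le i F))
    exact (hpos.trans_le (hle _)).ne' (eq_zero_of_lt_leftEnd hlt)
  have hnew : 0 < extend i F (leftEnd i F) (i + 1) := by simp [extend, grow]
  exact extend_succ_comm_of_leftEnd_le ((leftEnd_le_of_pos hnew).trans hmono)

theorem extend_col (i : ℕ) (F : Multisegment) :
    extend (i + 1) (extend (i + 1) (extend i F)) =
      extend (i + 1) (extend i (extend (i + 1) F)) := by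
  obtain h | h := le_or_gt (leftEnd (i + 1) F) (leftEnd i F)
  · rw [extend_succ_comm_of_leftEnd_le h]
  -- Once `[k, i)` has grown to `[k, i + 1)`, it is the longest segment ending at `i + 1`. Hence
  -- both sides turn `[k, i)` into `[k, i + 2)` and `[r, i + 1)` into `[r, i + 2)`.
  obtain ⟨k, hk⟩ : ∃ k, leftEnd i F = k := ⟨_, rfl⟩
  obtain ⟨r, hr⟩ : ∃ r, leftEnd (i + 1) F = r := ⟨_, rfl⟩
  have hki : k ≤ i := hk ▸ leftEnd_le i F
  have hkr : k < r := hk ▸ hr ▸ h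
  have hpos : r = i + 1 ∨ 0 < F r (i + 1) := (leftEnd_eq_iff.1 hr).1
  have hzero : ∀ j < r, F j (i + 1) = 0 := fun j hj => eq_zero_of_lt_leftEnd (hr ▸ hj)
  have hr_le : r ≤ i + 1 := hr ▸ leftEnd_le (i + 1) F
  have h₁ : leftEnd (i + 1) (grow i k F) = k := by
    refine leftEnd_eq_iff.2 ⟨?_, fun j hj => ?_⟩ <;> grind [grow]
  have h₂ : leftEnd (i + 1) (grow (i + 1) k (grow i k F)) = r := by
    refine leftEnd_eq_iff.2 ⟨?_, fun j hj => ?_⟩ <;> grind [grow]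
  have h₃ : leftEnd i (grow (i + 1) r F) = k :=
    (leftEnd_grow_of_ne F (by omega) (by omega)).trans hk
  have h₄ : leftEnd (i + 1) (grow i k (grow (i + 1) r F)) = k := by
    refine leftEnd_eq_iff.2 ⟨?_, fun j hj => ?_⟩ <;> grind [grow]
  rw [extend_eq_grow hk, extend_eq_grow h₁, extend_eq_grow h₂, extend_eq_grow hr,
    extend_eq_grow h₃, extend_eq_grow h₄]
  funext j m
  grind [grow]

theorem isLocalPlactic_extendEnd : IsLocalPlactic extendEnd where
  comm _ _ h := funext (extend_comm_of_add_one_lt h)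
  row i := funext (extend_row i)
  col i := funext (extend_col i)

end Extend

section LeftMultiplication

variable {A : Type*} [Monoid A] {a : ℕ → A}

theorem monomial_zero (n : ℕ) : monomial a 0 n = 1 := by
  refine List.prod_eq_one fun x hx => ?_
  obtain ⟨m, _, rfl⟩ := List.mem_map.1 hx
  simp [rowProd]

namespace IsLocalPlactic

variable (ha : IsLocalPlactic a)
include ha

theorem strand_leftEnd_mul_rowProd_extend (i : ℕ) (F : Multisegment) :
    strand a (leftEnd i F) i * rowProd a (extend i F) i = rowProd a F i := by
  obtain hk | hk := (leftEnd_le i F).eq_or_lt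
  · rw [hk, strand_self, one_mul]
    exact rowProd_congr fun j hj => by simp only [extend, grow]; grind
  · have := pos_of_leftEnd_lt hk
    exact ha.strand_mul_rowProd hk (by simp only [extend, grow]; grind)
      fun j hj => by simp only [extend, grow]; grind

theorem strand_leftEnd_mul_rowProd_succ (i : ℕ) (F : Multisegment) :
    strand a (leftEnd i F) (i + 1) * rowProd a F (i + 1) = rowProd a (extend i F) (i + 1) :=
  ha.strand_mul_rowProd (Nat.lt_succ_of_le (leftEnd_le i F)) (by simp [extend, grow])
    fun j hj => by simp [extend, grow, hj]

theorem commute_strand_leftEnd_rowProd_extend (i : ℕ) (F : Multisegment) :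
    Commute (strand a (leftEnd i F) (i + 1)) (rowProd a (extend i F) i) := by
  refine commute_rowProd fun j _ hFj => ha.commute_strand_of_nested ?_ i.le_succ
  by_contra! hj
  have := eq_zero_of_lt_leftEnd hj
  simp only [extend, grow] at hFj
  grind

theorem gen_mul_rowProd_mul_rowProd (i : ℕ) (F : Multisegment) :
    a i * (rowProd a F i * rowProd a F (i + 1)) =
      rowProd a (extend i F) i * rowProd a (extend i F) (i + 1) := by
  set k := leftEnd i F with hk
  calc a i * (rowProd a F i * rowProd a F (i + 1))
      = a i * strand a k i * rowProd a (extend i F) i * rowProd a F (i + 1) := by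
        rw [← ha.strand_leftEnd_mul_rowProd_extend i F]; simp only [mul_assoc, hk]
    _ = strand a k (i + 1) * rowProd a (extend i F) i * rowProd a F (i + 1) := by
        rw [strand_succ (leftEnd_le i F)]
    _ = rowProd a (extend i F) i * (strand a k (i + 1) * rowProd a F (i + 1)) := by
        rw [(ha.commute_strand_leftEnd_rowProd_extend i F).eq, mul_assoc]
    _ = rowProd a (extend i F) i * rowProd a (extend i F) (i + 1) := by
        rw [ha.strand_leftEnd_mul_rowProd_succ]

theorem commute_gen_rowProd_of_lt {i m : ℕ} (hmi : m < i) (F : Multisegment) :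
    Commute (a i) (rowProd a F m) :=
  commute_rowProd fun _ _ _ => ha.commute_gen_strand_of_lt hmi

theorem gen_mul_monomial {i n : ℕ} (hin : i < n) (F : Multisegment) :
    a i * monomial a F n = monomial a (extend i F) n := by
  have hrow (m : ℕ) (hi : m ≠ i) (hi' : m ≠ i + 1) : rowProd a F m = rowProd a (extend i F) m :=
    rowProd_congr fun j _ => (grow_of_ne F j hi hi').symm
  induction n, hin using Nat.le_induction with
  | base =>
    have hlow : ((List.range i).map (rowProd a F)) = (List.range i).map (rowProd a (extend i F)) :=
      List.map_congr_left fun m hm => by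
        have := List.mem_range.1 hm
        exact hrow m (by omega) (by omega)
    have hcomm : Commute (a i) ((List.range i).map (rowProd a (extend i F))).prod := by
      refine Commute.list_prod_right _ _ fun y hy => ?_
      obtain ⟨m, hm, rfl⟩ := List.mem_map.1 hy
      exact ha.commute_gen_rowProd_of_lt (List.mem_range.1 hm) _
    simp only [monomial, List.prod_range_succ, hlow]
    rw [mul_assoc, ← mul_assoc, hcomm.eq, mul_assoc, ha.gen_mul_rowProd_mul_rowProd, mul_assoc]
  | succ n hin ih =>
    rw [monomial_succ, monomial_succ, ← mul_assoc, ih, hrow (n + 1) (by omega) (by omega)]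

theorem exists_monomial_eq_of_mem_closure {n : ℕ} {x : A}
    (hx : x ∈ Submonoid.closure (a '' Set.Iio n)) : ∃ F, monomial a F n = x := by
  induction hx using Submonoid.closure_induction_left with
  | one => exact ⟨0, monomial_zero n⟩
  | mul_left y hy x _ ih =>
    obtain ⟨i, hi, rfl⟩ := hy
    obtain ⟨F, rfl⟩ := ih
    exact ⟨extend i F, (ha.gen_mul_monomial hi F).symm⟩

end IsLocalPlactic

end LeftMultiplication

section Evaluation

/-- The multisegment consisting of a single copy of `[j, m)`. -/
def segment (j m : ℕ) : Multisegment := fun j' m' => if j' = j ∧ m' = m then 1 else 0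

theorem segment_apply (j m j' m' : ℕ) :
    segment j m j' m' = if j' = j ∧ m' = m then 1 else 0 := rfl

theorem strand_extendEnd_smul {j m : ℕ} (hjm : j < m) {G : Multisegment}
    (hG : ∀ l, ∀ i < m, G l i = 0) : strand extendEnd j m • G = G + segment j m := by
  induction m, hjm using Nat.le_induction with
  | base =>
    have hj : leftEnd j G = j :=
      leftEnd_eq_iff.2 ⟨Or.inl rfl, fun l hl => ⟨hl.ne, hG l j (by omega)⟩⟩
    rw [strand_succ le_rfl, strand_self, mul_one, extendEnd_smul, extend_eq_grow hj]
    funext l i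
    have := hG l
    simp only [Pi.add_apply, segment_apply]
    grind [grow]
  | succ m hjm ih =>
    have hm : leftEnd m (G + segment j m) = j := by
      refine leftEnd_eq_iff.2 ⟨Or.inr (by simp [segment_apply]), fun l hl => ⟨by omega, ?_⟩⟩
      simp [segment_apply, hl.ne, hG l m (by omega)]
    rw [strand_succ (by omega), mul_smul, ih fun l i hi => hG l i (by omega), extendEnd_smul,
      extend_eq_grow hm]
    funext l i
    have := hG l
    simp only [grow, Pi.add_apply, segment_apply]
    grind

theorem strand_extendEnd_pow_smul {j m : ℕ} (hjm : j < m) {G : Multisegment}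
    (hG : ∀ l, ∀ i < m, G l i = 0) (t : ℕ) :
    strand extendEnd j m ^ t • G = G + t • segment j m := by
  induction t with
  | zero => simp
  | succ t ih =>
    have hG' : ∀ l, ∀ i < m, (G + t • segment j m) l i = 0 := fun l i hi => by
      simp [segment_apply, hG l i hi, hi.ne]
    rw [pow_succ', mul_smul, ih, strand_extendEnd_smul hjm hG', succ_nsmul, add_assoc]

theorem prod_strand_extendEnd_pow_smul {k m : ℕ} (hkm : k ≤ m) (f : ℕ → ℕ) {G : Multisegment}
    (hG : ∀ l, ∀ i < m, G l i = 0) :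
    ((List.range k).map fun j => strand extendEnd j m ^ f j).prod • G =
      G + ∑ j ∈ Finset.range k, f j • segment j m := by
  induction k generalizing G with
  | zero => simp
  | succ k ih =>
    have hG' : ∀ l, ∀ i < m, (G + f k • segment k m) l i = 0 := fun l i hi => by
      simp [segment_apply, hG l i hi, hi.ne]
    rw [List.prod_range_succ, mul_smul, strand_extendEnd_pow_smul hkm hG, ih (by omega) hG',
      Finset.sum_range_succ, add_assoc, add_comm (f k • segment k m)]

theorem monomial_extendEnd_smul (F : Multisegment) {n : ℕ} {G : Multisegment}
    (hG : ∀ l, ∀ i ≤ n, G l i = 0) :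
    monomial extendEnd F n • G =
      G + ∑ m ∈ Finset.range (n + 1), ∑ j ∈ Finset.range m, F j m • segment j m := by
  induction n generalizing G with
  | zero => simp [monomial, show rowProd extendEnd F 0 = 1 from rfl]
  | succ n ih =>
    have hrow : rowProd extendEnd F (n + 1) • G =
        G + ∑ j ∈ Finset.range (n + 1), F j (n + 1) • segment j (n + 1) :=
      prod_strand_extendEnd_pow_smul le_rfl _ fun l i hi => hG l i hi.le
    have hG' : ∀ l, ∀ i ≤ n,
        (G + ∑ j ∈ Finset.range (n + 1), F j (n + 1) • segment j (n + 1)) l i = 0 :=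
      fun l i hi => by
        simp [segment_apply, hG l i (by omega), show i ≠ n + 1 by omega, Finset.sum_apply]
    rw [monomial_succ, mul_smul, hrow, ih hG', Finset.sum_range_succ _ (n + 1), add_assoc,
      add_comm (∑ j ∈ Finset.range (n + 1), _)]

theorem monomial_extendEnd_smul_zero_apply (F : Multisegment) {j m n : ℕ} (hjm : j < m)
    (hmn : m ≤ n) : (monomial extendEnd F n • (0 : Multisegment)) j m = F j m := by
  rw [monomial_extendEnd_smul F (G := 0) fun _ _ _ => rfl]
  simp only [zero_add, Finset.sum_apply, Pi.smul_apply, segment_apply, smul_eq_mul, mul_ite,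
    mul_one, mul_zero]
  rw [Finset.sum_eq_single_of_mem m (Finset.mem_range.2 (by omega)) fun b _ hb => by
      simp [hb.symm],
    Finset.sum_eq_single_of_mem j (Finset.mem_range.2 hjm) fun b _ hb => by simp [hb.symm]]
  simp

end Evaluation

section PlFin

/-- The generators of `PlFin n` as a sequence, continued by `0` beyond the last generator. -/
def gen (n i : ℕ) : PlFin n := if h : i < n - 1 then aF n ⟨i, h⟩ else 0

theorem gen_of_lt {n i : ℕ} (h : i < n - 1) : gen n i = aF n ⟨i, h⟩ := dif_pos h

theorem gen_of_le {n i : ℕ} (h : n - 1 ≤ i) : gen n i = 0 := dif_neg h.not_gt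

theorem isLocalPlactic_gen (n : ℕ) : IsLocalPlactic (gen n) where
  comm i j h := by
    obtain hj | hj := lt_or_ge j (n - 1)
    · rw [gen_of_lt hj, gen_of_lt (by omega : i < n - 1)]
      simp only [aF, ← map_mul]
      exact RingQuot.mkAlgHom_rel ℂ (PlFinRel.comm _ _ (Or.inl h))
    · simp only [gen_of_le hj, mul_zero, zero_mul]
  row i := by
    obtain hi | hi := lt_or_ge (i + 1) (n - 1)
    · rw [gen_of_lt hi, gen_of_lt (by omega : i < n - 1)]
      simp only [aF, ← map_mul]
      exact RingQuot.mkAlgHom_rel ℂ (PlFinRel.row _ _ rfl)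
    · simp only [gen_of_le hi, mul_zero, zero_mul]
  col i := by
    obtain hi | hi := lt_or_ge (i + 1) (n - 1)
    · rw [gen_of_lt hi, gen_of_lt (by omega : i < n - 1)]
      simp only [aF, ← map_mul]
      exact RingQuot.mkAlgHom_rel ℂ (PlFinRel.col _ _ rfl)
    · simp only [gen_of_le hi, zero_mul]

/-- The algebra homomorphism out of `PlFin n` given by a sequence satisfying the local plactic
relations. -/
def lift (n : ℕ) {A : Type*} [Semiring A] [Algebra ℂ A] {a : ℕ → A} (ha : IsLocalPlactic a) :
    PlFin n →ₐ[ℂ] A :=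
  RingQuot.liftAlgHom ℂ ⟨FreeAlgebra.lift ℂ fun i : Fin (n - 1) => a i, fun x y h => by
    cases h with
    | comm i j h =>
      simp only [g1, map_mul, FreeAlgebra.lift_ι_apply]
      exact h.elim (ha.comm i j) fun h => (ha.comm j i h).symm
    | row i j h => simp only [g1, map_mul, FreeAlgebra.lift_ι_apply, h, ha.row]
    | col i j h => simp only [g1, map_mul, FreeAlgebra.lift_ι_apply, h, ha.col]⟩

theorem lift_gen {n i : ℕ} (hi : i < n - 1) {A : Type*} [Semiring A] [Algebra ℂ A] {a : ℕ → A}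
    (ha : IsLocalPlactic a) : lift n ha (gen n i) = a i := by
  rw [gen_of_lt hi, aF, lift, RingQuot.liftAlgHom_mkAlgHom_apply, g1, FreeAlgebra.lift_ι_apply]

theorem adjoin_range_aF (n : ℕ) : Algebra.adjoin ℂ (Set.range (aF n)) = ⊤ := by
  have haF : Set.range (aF n) = RingQuot.mkAlgHom ℂ (PlFinRel n) '' Set.range (FreeAlgebra.ι ℂ) :=
    Set.range_comp _ _
  rw [haF, ← AlgHom.map_adjoin, FreeAlgebra.adjoin_range_ι, Algebra.map_top,
    (AlgHom.range_eq_top _).2 (RingQuot.mkAlgHom_surjective ℂ _)]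

theorem range_aF_eq_image_gen (n : ℕ) : Set.range (aF n) = gen n '' Set.Iio (n - 1) := by
  ext x
  constructor
  · rintro ⟨i, rfl⟩
    exact ⟨i, i.2, gen_of_lt i.2⟩
  · rintro ⟨i, hi, rfl⟩
    exact ⟨⟨i, hi⟩, (gen_of_lt hi).symm⟩

theorem wmon_eq_strand {n : ℕ} (m : Fin (n - 1)) (j : Fin ((m : ℕ) + 1)) :
    wmon n m j = strand (gen n) j (m + 1) := by
  rw [← prod_range_strand, wmon]
  congr! 3
  exact (gen_of_lt _).symm

theorem map_finRange_val {α : Type*} (n : ℕ) (g : ℕ → α) :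
    (List.finRange n).map (fun i : Fin n => g i) = (List.range n).map g := by
  rw [← List.map_coe_finRange_eq_range, List.map_map]
  rfl

theorem famMon_eq_monomial (n : ℕ) (F : Multisegment) :
    famMon n (fun p => F p.2 (p.1 + 1)) = monomial (gen n) F (n - 1) := by
  have hrow (m : Fin (n - 1)) :
      ((List.finRange (m + 1)).map fun j : Fin (m + 1) => wmon n m j ^ F j (m + 1)).prod =
        rowProd (gen n) F (m + 1) := by
    rw [rowProd, ← map_finRange_val]
    simp only [wmon_eq_strand]
  have hzero : rowProd (gen n) F 0 = 1 := rfl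
  rw [famMon, monomial, List.prod_range_succ', hzero, one_mul, ← map_finRange_val]
  simp only [hrow]

/-- The multisegment with exponent vector `α`: the index `(m, j)` stands for the segment
`[j, m + 1)`. -/
def ofExponents {n : ℕ} (α : MonIdx n → ℕ) : Multisegment := fun j m =>
  Function.extend (fun p : MonIdx n => ((p.2 : ℕ), (p.1 : ℕ) + 1)) α 0 (j, m)

theorem ofExponents_apply {n : ℕ} (α : MonIdx n → ℕ) (p : MonIdx n) :
    ofExponents α p.2 (p.1 + 1) = α p := by
  have hinj : Function.Injective fun p : MonIdx n => ((p.2 : ℕ), (p.1 : ℕ) + 1) := by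
    rintro ⟨⟨m, hm⟩, ⟨j, hj⟩⟩ ⟨⟨m', hm'⟩, ⟨j', hj'⟩⟩ h
    simp only [Prod.mk.injEq, Nat.add_right_cancel_iff] at h
    obtain ⟨rfl, rfl⟩ := h
    rfl
  exact hinj.extend_apply α 0 p

theorem famMon_eq_monomial_ofExponents {n : ℕ} (α : MonIdx n → ℕ) :
    famMon n α = monomial (gen n) (ofExponents α) (n - 1) := by
  simp only [← famMon_eq_monomial, ofExponents_apply]

theorem monomial_extendEnd_ofExponents_injective (n : ℕ) :
    Function.Injective fun α : MonIdx n → ℕ => monomial extendEnd (ofExponents α) (n - 1) := by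
  intro α β h
  have hval (γ : MonIdx n → ℕ) (p : MonIdx n) :
      (monomial extendEnd (ofExponents γ) (n - 1) • (0 : Multisegment)) p.2 (p.1 + 1) = γ p :=
    (monomial_extendEnd_smul_zero_apply _ p.2.2 p.1.2).trans (ofExponents_apply γ p)
  funext p
  rw [← hval α, ← hval β, show monomial extendEnd (ofExponents α) (n - 1) = _ from h]

theorem linearIndependent_monoidAlgebra_of (R M : Type*) [Semiring R] [MulOneClass M] :
    LinearIndependent R (MonoidAlgebra.of R M) :=
  (MonoidAlgebra.basis M R).linearIndependent

theorem linearIndependent_famMon (n : ℕ) : LinearIndependent ℂ (famMon n) := by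
  let ι : Function.End Multisegment →* MonoidAlgebra ℂ (Function.End Multisegment) :=
    MonoidAlgebra.of ℂ _
  let φ : PlFin n →ₐ[ℂ] MonoidAlgebra ℂ (Function.End Multisegment) :=
    lift n (isLocalPlactic_extendEnd.map ι)
  have hφ (α : MonIdx n → ℕ) :
      φ (famMon n α) = ι (monomial extendEnd (ofExponents α) (n - 1)) := by
    rw [famMon_eq_monomial_ofExponents, map_monomial ι (b := ι ∘ extendEnd) fun _ _ => rfl]
    exact map_monomial (φ : PlFin n →* MonoidAlgebra ℂ (Function.End Multisegment))
      (fun i hi => lift_gen hi (isLocalPlactic_extendEnd.map ι)) _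
  refine LinearIndependent.of_comp φ.toLinearMap ?_
  exact (funext hφ : φ ∘ famMon n = _) ▸
    (linearIndependent_monoidAlgebra_of ℂ _).comp _ (monomial_extendEnd_ofExponents_injective n)

theorem span_range_famMon (n : ℕ) : Submodule.span ℂ (Set.range (famMon n)) = ⊤ := by
  rw [eq_top_iff, ← Algebra.top_toSubmodule, ← adjoin_range_aF, Algebra.adjoin_eq_span,
    range_aF_eq_image_gen]
  refine Submodule.span_mono fun x hx => ?_
  obtain ⟨F, rfl⟩ := (isLocalPlactic_gen n).exists_monomial_eq_of_mem_closure hx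
  exact ⟨_, famMon_eq_monomial n F⟩

end PlFin

end LocalPlactic

/-- The monomials `∏_{m=1}^{n-1} ∏_{j=1}^{m} w_{m,j}^{α_{m,j}}`, over all
exponent vectors `α`, form a ℂ-basis of the local plactic algebra `Pl_fin`. -/
theorem local_plactic_basis (n : ℕ) (hn : 2 ≤ n) :
    LinearIndependent ℂ (famMon n) ∧
      Submodule.span ℂ (Set.range (famMon n)) = ⊤ :=
  ⟨LocalPlactic.linearIndependent_famMon n, LocalPlactic.span_range_famMon n⟩
end
end

section
/- Let n ≥ 2 and let Pl be the local affine plactic algebra. For 1 ≤ r ≤ n−1 define e_r ∈ Pl as the sum, over all r-element subsets I ⊆ ℤ/nℤ, of the product of the generators a_i with i ∈ I taken in any order in which a_j stands to the left of a_i whenever i, j ∈ I and j ≡ i+1 (mod n) (each such summand is a well-defined element of Pl, since a_i and a_j commute in Pl whenever i − j ≢ ±1 mod n, so all admissible orders give the same element). Then the cyclic noncommutative elementary symmetric polynomials pairwise commute: e_r·e_s = e_s·e_r in Pl for all 1 ≤ r, s ≤ n−1. -/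
noncomputable section

open scoped BigOperators

/-- The generator `a_i` of the free algebra on `a_0, …, a_{n-1}`. -/
def agen (n : ℕ) (i : ZMod n) : FreeAlgebra ℂ (ZMod n) := FreeAlgebra.ι ℂ i

/-- The defining relations of the local affine plactic algebra `Pl`. -/
inductive PlRel (n : ℕ) : FreeAlgebra ℂ (ZMod n) → FreeAlgebra ℂ (ZMod n) → Prop
  | comm (i j : ZMod n) (h1 : i - j ≠ 1) (h2 : j - i ≠ 1) :
      PlRel n (agen n i * agen n j) (agen n j * agen n i)
  | row (i : ZMod n) :
      PlRel n (agen n (i + 1) * (agen n i * agen n i)) (agen n i * (agen n (i + 1) * agen n i))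
  | col (i : ZMod n) :
      PlRel n (agen n (i + 1) * (agen n (i + 1) * agen n i))
        (agen n (i + 1) * (agen n i * agen n (i + 1)))

/-- The local affine plactic algebra. -/
abbrev Pl (n : ℕ) := RingQuot (PlRel n)

/-- The generator `a_i` as an element of `Pl`. -/
def aPl (n : ℕ) (i : ZMod n) : Pl n := RingQuot.mkAlgHom ℂ (PlRel n) (agen n i)

/-- A canonical "gap" of a proper subset `I ⊊ ℤ/nℤ`: the element of the complement with
the smallest representative. -/
def zgap {n : ℕ} [NeZero n] (I : Finset (ZMod n)) : ZMod n :=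
  if h : ((Finset.univ \ I).image ZMod.val).Nonempty then
    ((((Finset.univ \ I).image ZMod.val).min' h : ℕ) : ZMod n)
  else 0

/-- The cyclically ordered product `∏_{i ∈ I} a_i` in which, whenever `i, i+1 ∈ I`, the
factor `a_{i+1}` stands to the left of the factor `a_i`: the factors are multiplied in
cyclically decreasing order starting just below a gap of `I`. -/
def cycProdDesc {n : ℕ} [NeZero n] {A : Type*} [Monoid A] (a : ZMod n → A)
    (I : Finset (ZMod n)) : A :=
  ((List.range n).map fun t =>
    if zgap I - 1 - (t : ZMod n) ∈ I then a (zgap I - 1 - (t : ZMod n)) else 1).prod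

/-- The cyclic noncommutative elementary symmetric polynomial `e_r ∈ Pl`. -/
def plE (n : ℕ) [NeZero n] (r : ℕ) : Pl n :=
  ∑ I ∈ Finset.powersetCard r (Finset.univ : Finset (ZMod n)), cycProdDesc (aPl n) I

/-!
The relations say that `a_i` and `a_{i+1}` both commute with `a_{i+1} a_i`; hence `a_j` commutes
with the cyclic product `e_K` of every proper subset `K` containing `j`. If `K ⊆ J` is such that
`e_J = e_K e_{J \ K}` and `e_I = e_{I \ K} e_{I ∩ K}`, then swapping `e_{I ∩ K}` with `e_K` turns
`e_I e_J` into `e_{I ∪ K} e_{(J \ K) ∪ (I ∩ K)}`. For `|I| < |J|` such a `K` comes from the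
combinatorial `R`-matrix: run a queue around the circle with arrivals `I` and services `J`, and let
`K` be the services that find the queue empty. The new pair has the two sizes interchanged, and it
determines the queue, read backwards, hence also `(I, J)`. So the terms of `e_r e_s` are matched
with those of `e_s e_r`.
-/

section CyclicSums

variable {n : ℕ} [NeZero n]

theorem sum_range_zmod_sub {M : Type*} [AddCommMonoid M] (f : ZMod n → M) (p : ZMod n) :
    ∑ t ∈ Finset.range n, f (p - t) = ∑ q, f q := by
  refine Finset.sum_nbij' (fun t : ℕ => p - t) (fun q => (p - q).val) ?_ ?_ ?_ ?_ ?_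
  · simp
  · simp [ZMod.val_lt]
  · intro t ht
    simp [ZMod.val_natCast_of_lt (Finset.mem_range.1 ht)]
  · simp
  · simp

theorem sum_zmod_sub_one {M : Type*} [AddCommMonoid M] (f : ZMod n → M) :
    ∑ p, f (p - 1) = ∑ p, f p :=
  Equiv.sum_comp (Equiv.subRight (1 : ZMod n)) f

theorem forall_zmod_of_sub_one {P : ZMod n → Prop} (p₀ : ZMod n) (base : P p₀)
    (step : ∀ p, P p → P (p - 1)) (p : ZMod n) : P p := by
  have iterate (k : ℕ) : P (p₀ - k) := by
    induction k with
    | zero => simpa using base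
    | succ k ih => simpa [sub_sub] using step _ ih
  simpa using iterate (p₀ - p).val

end CyclicSums

section Queue

variable {n : ℕ} {u v : ZMod n → ℕ}

/-- The queue length after time `p` on the cyclic time line `ZMod n`, when `u q` customers arrive
and up to `v q` customers are served at time `q`: the largest excess of arrivals over services
among the intervals of length less than `n` that end at `p`. -/
def cyclicQueue (u v : ZMod n → ℕ) (p : ZMod n) : ℕ :=
  (Finset.range n).sup fun k =>
    ∑ t ∈ Finset.range k, u (p - t) - ∑ t ∈ Finset.range k, v (p - t)

theorem cyclicQueue_le_iff {p : ZMod n} {b : ℕ} :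
    cyclicQueue u v p ≤ b ↔
      ∀ k < n, ∑ t ∈ Finset.range k, u (p - t) ≤ b + ∑ t ∈ Finset.range k, v (p - t) := by
  simp [cyclicQueue]

variable [NeZero n]

theorem cyclicQueue_eq (h : ∑ p, u p ≤ ∑ p, v p) (p : ZMod n) :
    cyclicQueue u v p = cyclicQueue u v (p - 1) + u p - v p := by
  have sum_succ (w : ZMod n → ℕ) (k : ℕ) : ∑ t ∈ Finset.range (k + 1), w (p - t) =
      ∑ t ∈ Finset.range k, w (p - 1 - t) + w p := by
    simp [Finset.sum_range_succ', sub_sub, add_comm]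
  refine le_antisymm (cyclicQueue_le_iff.2 fun k hk => ?_) ?_
  · cases k with
    | zero => simp
    | succ k =>
      have := cyclicQueue_le_iff.1 (le_refl (cyclicQueue u v (p - 1))) k (by omega)
      rw [sum_succ, sum_succ]
      omega
  · have excess_le {k : ℕ} (hk : k < n) : ∑ t ∈ Finset.range (k + 1), u (p - t) ≤
        cyclicQueue u v p + ∑ t ∈ Finset.range (k + 1), v (p - t) := by
      rcases (Nat.succ_le_of_lt hk).lt_or_eq with hk' | hk'
      · exact cyclicQueue_le_iff.1 le_rfl _ hk'
      · rw [← Nat.succ_eq_add_one, hk', sum_range_zmod_sub, sum_range_zmod_sub]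
        exact Nat.le_add_left_of_le h
    have arrivals_le : u p ≤ cyclicQueue u v p + v p := by
      simpa using excess_le (NeZero.pos n)
    have : cyclicQueue u v (p - 1) ≤ cyclicQueue u v p + v p - u p :=
      cyclicQueue_le_iff.2 fun k hk => by
        have := excess_le hk
        rw [sum_succ, sum_succ] at this
        omega
    omega

theorem eq_of_backward_queue_of_le (h : ∑ p, u p < ∑ p, v p) {m₁ m₂ : ZMod n → ℕ}
    (h₁ : ∀ p, m₁ (p - 1) = m₁ p + u p - v p) (h₂ : ∀ p, m₂ (p - 1) = m₂ p + u p - v p)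
    (h₀ : m₁ 0 ≤ m₂ 0) : m₁ = m₂ := by
  have hle : ∀ p, m₁ p ≤ m₂ p :=
    forall_zmod_of_sub_one 0 h₀ fun p hp => by rw [h₁, h₂]; omega
  suffices ∃ p, m₁ p = m₂ p by
    obtain ⟨p₀, hp₀⟩ := this
    exact funext (forall_zmod_of_sub_one p₀ hp₀ fun p hp => by rw [h₁, h₂, hp])
  by_contra! hne
  -- Now `m₂` never vanishes, so its recursion is never truncated and arrivals balance services.
  have balance (p : ZMod n) : m₂ (p - 1) + v p = m₂ p + u p := by
    have := hle (p - 1)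
    have := hne (p - 1)
    have := h₂ p
    omega
  have sums : ∑ p, m₂ (p - 1) + ∑ p, v p = ∑ p, m₂ p + ∑ p, u p := by
    simp only [← Finset.sum_add_distrib, balance]
  rw [sum_zmod_sub_one] at sums
  omega

theorem eq_of_backward_queue (h : ∑ p, u p < ∑ p, v p) {m₁ m₂ : ZMod n → ℕ}
    (h₁ : ∀ p, m₁ (p - 1) = m₁ p + u p - v p) (h₂ : ∀ p, m₂ (p - 1) = m₂ p + u p - v p) :
    m₁ = m₂ := by
  rcases le_total (m₁ 0) (m₂ 0) with h₀ | h₀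
  · exact eq_of_backward_queue_of_le h h₁ h₂ h₀
  · exact (eq_of_backward_queue_of_le h h₂ h₁ h₀).symm

end Queue

section Exchange

variable {n : ℕ}

/-- The indicator function of a finite set of residues, with natural number values. -/
def charFn (I : Finset (ZMod n)) : ZMod n → ℕ := (I : Set (ZMod n)).indicator 1

theorem charFn_apply (I : Finset (ZMod n)) (p : ZMod n) :
    charFn I p = if p ∈ I then 1 else 0 := by
  simp [charFn, Set.indicator_apply]

theorem charFn_injective : Function.Injective (charFn (n := n)) := fun _ _ h =>
  Finset.coe_injective (Set.indicator_one_inj ℕ h)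

theorem sum_charFn [NeZero n] (I : Finset (ZMod n)) : ∑ p, charFn I p = I.card := by
  simp [charFn_apply]

variable (I J : Finset (ZMod n))

/-- The queue lengths for arrivals `I` and services `J`. -/
def finsetQueue : ZMod n → ℕ := cyclicQueue (charFn I) (charFn J)

/-- The services in `J` that find the queue empty. -/
def freeServices : Finset (ZMod n) := J.filter fun p => finsetQueue I J (p - 1) = 0

/-- The combinatorial `R`-matrix on pairs of subsets of `ZMod n`: the free services are moved from
`J` to `I`, those that are also in `I` being exchanged for their copies there. -/
def exchange (x : Finset (ZMod n) × Finset (ZMod n)) : Finset (ZMod n) × Finset (ZMod n) :=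
  (x.1 ∪ freeServices x.1 x.2, x.2 \ freeServices x.1 x.2 ∪ x.1 ∩ freeServices x.1 x.2)

variable {I J} in
theorem mem_freeServices {p : ZMod n} :
    p ∈ freeServices I J ↔ p ∈ J ∧ finsetQueue I J (p - 1) = 0 :=
  Finset.mem_filter

variable {I J} in
theorem mem_exchange_fst {p : ZMod n} :
    p ∈ (exchange (I, J)).1 ↔ p ∈ I ∨ p ∈ J ∧ finsetQueue I J (p - 1) = 0 := by
  simp only [exchange, Finset.mem_union, mem_freeServices]

variable {I J} in
theorem mem_exchange_snd {p : ZMod n} :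
    p ∈ (exchange (I, J)).2 ↔ p ∈ J ∧ (p ∈ I ∨ finsetQueue I J (p - 1) ≠ 0) := by
  simp only [exchange, Finset.mem_union, Finset.mem_sdiff, Finset.mem_inter, mem_freeServices]
  tauto

theorem charFn_exchange_add (p : ZMod n) :
    charFn (exchange (I, J)).1 p + charFn (exchange (I, J)).2 p = charFn I p + charFn J p := by
  simp only [charFn_apply, mem_exchange_fst, mem_exchange_snd]
  grind

variable [NeZero n] {I J}

theorem finsetQueue_eq (h : I.card ≤ J.card) (p : ZMod n) :
    finsetQueue I J p = finsetQueue I J (p - 1) + charFn I p - charFn J p :=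
  cyclicQueue_eq (by simpa only [sum_charFn] using h) p

theorem finsetQueue_add_charFn (h : I.card ≤ J.card) (p : ZMod n) :
    finsetQueue I J p + charFn J p = finsetQueue I J (p - 1) + charFn (exchange (I, J)).1 p := by
  have := finsetQueue_eq h p
  simp only [charFn_apply, mem_exchange_fst] at this ⊢
  grind

theorem finsetQueue_sub_one (h : I.card ≤ J.card) (p : ZMod n) :
    finsetQueue I J (p - 1) =
      finsetQueue I J p + charFn (exchange (I, J)).2 p - charFn (exchange (I, J)).1 p := by
  have := finsetQueue_eq h p
  simp only [charFn_apply, mem_exchange_fst, mem_exchange_snd] at this ⊢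
  grind

theorem card_exchange_fst (h : I.card ≤ J.card) : (exchange (I, J)).1.card = J.card := by
  have sums : ∑ p, finsetQueue I J p + ∑ p, charFn J p =
      ∑ p, finsetQueue I J (p - 1) + ∑ p, charFn (exchange (I, J)).1 p := by
    simp only [← Finset.sum_add_distrib, finsetQueue_add_charFn h]
  rw [sum_zmod_sub_one, sum_charFn, sum_charFn] at sums
  omega

theorem card_exchange_snd (h : I.card ≤ J.card) : (exchange (I, J)).2.card = I.card := by
  have sums : ∑ p, charFn (exchange (I, J)).1 p + ∑ p, charFn (exchange (I, J)).2 p =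
      ∑ p, charFn I p + ∑ p, charFn J p := by
    simp only [← Finset.sum_add_distrib, charFn_exchange_add]
  simp only [sum_charFn, card_exchange_fst h] at sums
  omega

variable (n) in
theorem exchange_injOn : Set.InjOn (exchange (n := n)) {x | x.1.card < x.2.card} := by
  rintro ⟨I, J⟩ h ⟨I', J'⟩ h' he
  replace h : I.card < J.card := h
  replace h' : I'.card < J'.card := h'
  have queue_eq : finsetQueue I J = finsetQueue I' J' := by
    refine eq_of_backward_queue ?_ (finsetQueue_sub_one h.le)
      fun p => he ▸ finsetQueue_sub_one h'.le p
    simpa only [sum_charFn, card_exchange_fst h.le, card_exchange_snd h.le] using h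
  have hJ (p : ZMod n) : charFn J p = charFn J' p := by
    have := finsetQueue_add_charFn h.le p
    have := finsetQueue_add_charFn h'.le p
    rw [← he, ← queue_eq] at this
    omega
  have hI (p : ZMod n) : charFn I p = charFn I' p := by
    have := charFn_exchange_add I J p
    have := charFn_exchange_add I' J' p
    rw [← he, ← hJ] at this
    omega
  exact Prod.ext (charFn_injective (funext hI)) (charFn_injective (funext hJ))

theorem succ_mem_freeServices (h : I.card ≤ J.card) {i : ZMod n} (hi : i ∈ freeServices I J)
    (hiJ : i + 1 ∈ J) : i + 1 ∈ freeServices I J := by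
  have := finsetQueue_eq h i
  simp only [mem_freeServices, add_sub_cancel_right, charFn_apply] at *
  grind

theorem mem_freeServices_of_succ_mem (h : I.card ≤ J.card) {i : ZMod n}
    (hi : i + 1 ∈ freeServices I J) (hiI : i ∈ I) : i ∈ freeServices I J := by
  have := finsetQueue_eq h i
  simp only [mem_freeServices, add_sub_cancel_right, charFn_apply] at *
  grind

end Exchange

section Words

variable {n : ℕ} [NeZero n] {I : Finset (ZMod n)}

theorem zgap_notMem (hI : I ≠ Finset.univ) : zgap I ∉ I := by
  have hne : ((Finset.univ \ I).image ZMod.val).Nonempty := by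
    simpa [Finset.sdiff_nonempty, Finset.univ_subset_iff] using hI
  obtain ⟨x, hx, hx_min⟩ := Finset.mem_image.1 (Finset.min'_mem _ hne)
  rw [zgap, dif_pos hne, ← hx_min, ZMod.natCast_zmod_val]
  exact (Finset.mem_sdiff.1 hx).2

/-- The word of the indices of the factors of `cycProdDesc a I`, in order. -/
def cycWord (I : Finset (ZMod n)) : List (ZMod n) :=
  ((List.range n).map fun t : ℕ => zgap I - 1 - (t : ZMod n)).filter (· ∈ I)

theorem mem_cycWord {x : ZMod n} : x ∈ cycWord I ↔ x ∈ I := by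
  simp only [cycWord, List.mem_filter, List.mem_map, List.mem_range, decide_eq_true_eq,
    and_iff_right_iff_imp]
  exact fun _ => ⟨(zgap I - 1 - x).val, ZMod.val_lt _, by simp⟩

theorem nodup_cycWord (I : Finset (ZMod n)) : (cycWord I).Nodup := by
  refine (List.nodup_range.map_on fun s hs t ht h => ?_).filter _
  exact CharP.natCast_injOn_Iio (ZMod n) n (List.mem_range.1 hs) (List.mem_range.1 ht)
    (sub_right_injective h)

theorem pairwise_cycWord (hI : I ≠ Finset.univ) :
    (cycWord I).Pairwise fun x y => y ≠ x + 1 := by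
  rw [cycWord, List.pairwise_filter, List.pairwise_map]
  refine List.pairwise_lt_range.imp_of_mem fun {s t} hs ht hst _ htI h => ?_
  rw [List.mem_range] at hs ht
  have cast_eq : ((t + 1 : ℕ) : ZMod n) = s := by
    push_cast
    linear_combination -h
  rcases (Nat.succ_le_of_lt ht).lt_or_eq with ht' | ht'
  · have := CharP.natCast_injOn_Iio (ZMod n) n ht' hs cast_eq
    omega
  · refine zgap_notMem hI ?_
    have gap_eq : zgap I - 1 - (t : ZMod n) = zgap I := by
      rw [sub_sub, add_comm, ← Nat.cast_succ, ht', ZMod.natCast_self, sub_zero]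
    simpa only [gap_eq, decide_eq_true_eq] using htI

theorem prod_map_ite_one {α M : Type*} [Monoid M] (p : α → Prop) [DecidablePred p] (f : α → M)
    (l : List α) : (l.map fun x => if p x then f x else 1).prod = ((l.filter p).map f).prod := by
  induction l with
  | nil => simp
  | cons x l ih => by_cases h : p x <;> simp [h, ih]

theorem cycProdDesc_eq_prod_cycWord {M : Type*} [Monoid M] (a : ZMod n → M)
    (I : Finset (ZMod n)) : cycProdDesc a I = ((cycWord I).map a).prod := by
  -- `cycProdDesc` casts `List.range n` to a list of residues through the list monad.
  simp only [cycProdDesc, cycWord, ← prod_map_ite_one, bind_pure_comp, List.map_eq_map,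
    List.map_map, Function.comp_def]

end Words

/-- The relations of the local affine plactic algebra for a family `a` in any monoid. The relations
`PlRel.row` and `PlRel.col` are put as: `a i` and `a (i + 1)` commute with `a (i + 1) * a i`. -/
structure IsLocalPlactic {n : ℕ} {M : Type*} [Mul M] (a : ZMod n → M) : Prop where
  commute_of_ne ⦃i j : ZMod n⦄ : i ≠ j + 1 → j ≠ i + 1 → Commute (a i) (a j)
  commute_mul (i : ZMod n) : Commute (a i) (a (i + 1) * a i)
  commute_succ_mul (i : ZMod n) : Commute (a (i + 1)) (a (i + 1) * a i)

section CommuteWord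

variable {ι M : Type*} [Monoid M] {x : M} {a : ι → M} {c : ι} {l : List ι}

theorem commute_prod_map (h : ∀ y ∈ l, Commute x (a y)) : Commute x (l.map a).prod :=
  Commute.list_prod_right _ _ (List.forall_mem_map.2 h)

theorem commute_mul_prod_map (hl : l.Nodup) (hc : Commute x (x * a c))
    (h : ∀ y ∈ l, y ≠ c → Commute x (a y)) : Commute x (x * (l.map a).prod) := by
  induction l with
  | nil => simp
  | cons b l ih =>
    obtain ⟨hb, hl⟩ := List.nodup_cons.1 hl
    rw [List.forall_mem_cons] at h
    rw [List.map_cons, List.prod_cons]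
    by_cases hbc : b = c
    · subst hbc
      rw [← mul_assoc]
      exact hc.mul_right (commute_prod_map fun y hy => h.2 y hy (ne_of_mem_of_not_mem hy hb))
    · rw [← mul_assoc, (h.1 hbc).eq, mul_assoc]
      exact (h.1 hbc).mul_right (ih hl h.2)

theorem commute_prod_map_mul (hl : l.Nodup) (hc : Commute x (a c * x))
    (h : ∀ y ∈ l, y ≠ c → Commute x (a y)) : Commute x ((l.map a).prod * x) := by
  induction l with
  | nil => simp
  | cons b l ih =>
    obtain ⟨hb, hl⟩ := List.nodup_cons.1 hl
    rw [List.forall_mem_cons] at h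
    rw [List.map_cons, List.prod_cons, mul_assoc]
    by_cases hbc : b = c
    · subst hbc
      have hcl := commute_prod_map fun y hy => h.2 y hy (ne_of_mem_of_not_mem hy hb)
      rw [← hcl.eq, ← mul_assoc]
      exact hc.mul_right hcl
    · exact (h.1 hbc).mul_right (ih hl h.2)

end CommuteWord

namespace IsLocalPlactic

variable {n : ℕ} {M : Type*} [Monoid M] {a : ZMod n → M}

theorem prod_map_eq_of_perm (ha : IsLocalPlactic a) {l₁ l₂ : List (ZMod n)} (hp : l₁.Perm l₂)
    (h₁ : l₁.Pairwise fun x y => y ≠ x + 1) (h₂ : l₂.Pairwise fun x y => y ≠ x + 1) :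
    (l₁.map a).prod = (l₂.map a).prod := by
  induction l₁ generalizing l₂ with
  | nil => rw [List.nil_perm.1 hp]
  | cons x l ih =>
    obtain ⟨u, v, rfl⟩ := List.append_of_mem (hp.subset List.mem_cons_self)
    have hp' : l.Perm (u ++ v) := (List.perm_cons x).1 (hp.trans List.perm_middle)
    have h₂' : (u ++ v).Pairwise fun x y => y ≠ x + 1 :=
      h₂.sublist ((List.sublist_cons_self x v).append_left u)
    rw [List.pairwise_cons] at h₁
    have hxu : Commute (a x) (u.map a).prod := commute_prod_map fun y hy =>
      ha.commute_of_ne ((List.pairwise_append.1 h₂).2.2 y hy x List.mem_cons_self)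
        (h₁.1 y (hp'.mem_iff.2 (List.mem_append_left v hy)))
    simp only [List.map_cons, List.prod_cons, ih hp' h₁.2 h₂', List.map_append, List.prod_append]
    rw [← mul_assoc, hxu.eq, mul_assoc]

variable [NeZero n] {I J K X Y : Finset (ZMod n)}

theorem cycProdDesc_mul_eq_union (ha : IsLocalPlactic a) (hXY : Disjoint X Y)
    (hU : X ∪ Y ≠ Finset.univ) (h : ∀ x ∈ X, x + 1 ∉ Y) :
    cycProdDesc a X * cycProdDesc a Y = cycProdDesc a (X ∪ Y) := by
  have hX : X ≠ Finset.univ := fun hX => hU (by simp [hX])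
  have hY : Y ≠ Finset.univ := fun hY => hU (by simp [hY])
  simp only [cycProdDesc_eq_prod_cycWord, ← List.prod_append, ← List.map_append]
  refine ha.prod_map_eq_of_perm ?_ ?_ (pairwise_cycWord hU)
  · refine (List.perm_ext_iff_of_nodup ?_ (nodup_cycWord _)).2 fun x => by simp [mem_cycWord]
    refine (nodup_cycWord X).append (nodup_cycWord Y) fun x hx hy => ?_
    exact Finset.disjoint_left.1 hXY (mem_cycWord.1 hx) (mem_cycWord.1 hy)
  · refine List.pairwise_append.2 ⟨pairwise_cycWord hX, pairwise_cycWord hY, ?_⟩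
    rintro x hx _ hy rfl
    exact h x (mem_cycWord.1 hx) (mem_cycWord.1 hy)

theorem commute_cycProdDesc_of_mem (ha : IsLocalPlactic a) (hK : K ≠ Finset.univ) {j : ZMod n}
    (hj : j ∈ K) : Commute (a j) (cycProdDesc a K) := by
  have hp := pairwise_cycWord hK
  have hnd := nodup_cycWord K
  rw [cycProdDesc_eq_prod_cycWord]
  obtain ⟨B, C, hBC⟩ := List.append_of_mem (mem_cycWord.2 hj)
  rw [hBC] at hp hnd ⊢
  obtain ⟨-, hp', hB⟩ := List.pairwise_append.1 hp
  have hC := (List.pairwise_cons.1 hp').1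
  have comm_left : Commute (a j) ((B.map a).prod * a j) :=
    commute_prod_map_mul hnd.of_append_left (ha.commute_mul j) fun y hy hne =>
      ha.commute_of_ne (hB y hy j List.mem_cons_self) hne
  have comm_right : Commute (a j) (a j * (C.map a).prod) := by
    refine commute_mul_prod_map (c := j - 1) hnd.of_append_right.of_cons ?_ fun y hy hne =>
      ha.commute_of_ne (fun h => hne (eq_sub_of_add_eq h.symm)) (hC y hy)
    simpa only [sub_add_cancel] using ha.commute_succ_mul (j - 1)
  simp only [List.map_append, List.prod_append, List.map_cons, List.prod_cons]
  calc a j * ((B.map a).prod * (a j * (C.map a).prod))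
      = a j * ((B.map a).prod * a j) * (C.map a).prod := by simp only [mul_assoc]
    _ = (B.map a).prod * (a j * (a j * (C.map a).prod)) := by
        rw [comm_left.eq]; simp only [mul_assoc]
    _ = (B.map a).prod * (a j * (C.map a).prod) * a j := by
        rw [comm_right.eq]; simp only [mul_assoc]

theorem commute_cycProdDesc_of_subset (ha : IsLocalPlactic a) (hK : K ≠ Finset.univ)
    (hX : X ⊆ K) : Commute (cycProdDesc a X) (cycProdDesc a K) := by
  rw [cycProdDesc_eq_prod_cycWord a X]
  exact (commute_prod_map fun y hy =>
    (ha.commute_cycProdDesc_of_mem hK (hX (mem_cycWord.1 hy))).symm).symm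

theorem cycProdDesc_mul_eq_move (ha : IsLocalPlactic a) (hKJ : K ⊆ J) (hJ : J ≠ Finset.univ)
    (hIK : I ∪ K ≠ Finset.univ) (hJK : J \ K ∪ I ∩ K ≠ Finset.univ)
    (hup : ∀ i ∈ K, i + 1 ∈ J → i + 1 ∈ K) (hdown : ∀ i ∈ I, i + 1 ∈ K → i ∈ K) :
    cycProdDesc a I * cycProdDesc a J =
      cycProdDesc a (I ∪ K) * cycProdDesc a (J \ K ∪ I ∩ K) := by
  have hI : I ≠ Finset.univ := fun hI => hIK (by simp [hI])
  have hK : K ≠ Finset.univ := fun hK => hIK (by simp [hK])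
  have split_I : cycProdDesc a (I \ K) * cycProdDesc a (I ∩ K) = cycProdDesc a I := by
    rw [ha.cycProdDesc_mul_eq_union (Finset.disjoint_sdiff_inter I K)
      (by rwa [Finset.sdiff_union_inter]) (by grind),
      Finset.sdiff_union_inter]
  have split_J : cycProdDesc a K * cycProdDesc a (J \ K) = cycProdDesc a J := by
    rw [ha.cycProdDesc_mul_eq_union Finset.disjoint_sdiff
      (by rwa [Finset.union_sdiff_of_subset hKJ]) (by grind),
      Finset.union_sdiff_of_subset hKJ]
  have join_I : cycProdDesc a (I \ K) * cycProdDesc a K = cycProdDesc a (I ∪ K) := by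
    rw [ha.cycProdDesc_mul_eq_union Finset.sdiff_disjoint (by simpa) (by grind),
      Finset.sdiff_union_self_eq_union]
  have join_J : cycProdDesc a (I ∩ K) * cycProdDesc a (J \ K) =
      cycProdDesc a (J \ K ∪ I ∩ K) := by
    rw [Finset.union_comm] at hJK ⊢
    exact ha.cycProdDesc_mul_eq_union (by grind [Finset.disjoint_left]) hJK (by grind)
  have comm_K : cycProdDesc a (I ∩ K) * cycProdDesc a K =
      cycProdDesc a K * cycProdDesc a (I ∩ K) :=
    ha.commute_cycProdDesc_of_subset hK Finset.inter_subset_right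
  calc cycProdDesc a I * cycProdDesc a J
      = cycProdDesc a (I \ K) * (cycProdDesc a (I ∩ K) * cycProdDesc a K) *
          cycProdDesc a (J \ K) := by rw [← split_I, ← split_J]; simp only [mul_assoc]
    _ = cycProdDesc a (I \ K) * cycProdDesc a K *
          (cycProdDesc a (I ∩ K) * cycProdDesc a (J \ K)) := by
        rw [comm_K]; simp only [mul_assoc]
    _ = cycProdDesc a (I ∪ K) * cycProdDesc a (J \ K ∪ I ∩ K) := by rw [join_I, join_J]

theorem cycProdDesc_mul_eq_exchange (ha : IsLocalPlactic a) (h : I.card ≤ J.card)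
    (hJ : J.card < n) :
    cycProdDesc a I * cycProdDesc a J =
      cycProdDesc a (exchange (I, J)).1 * cycProdDesc a (exchange (I, J)).2 := by
  have ne_univ {S : Finset (ZMod n)} (hS : S.card < n) : S ≠ Finset.univ := by
    rintro rfl
    simp [ZMod.card] at hS
  exact ha.cycProdDesc_mul_eq_move (Finset.filter_subset _ _) (ne_univ hJ)
    (ne_univ ((card_exchange_fst h).trans_lt hJ))
    (ne_univ ((card_exchange_snd h).trans_lt (h.trans_lt hJ)))
    (fun _ hi => succ_mem_freeServices h hi)
    (fun _ hi hi' => mem_freeServices_of_succ_mem h hi' hi)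

end IsLocalPlactic

theorem isLocalPlactic_aPl (n : ℕ) : IsLocalPlactic (aPl n) where
  commute_of_ne i j hij hji := by
    have := RingQuot.mkAlgHom_rel ℂ
      (PlRel.comm i j (sub_eq_iff_eq_add'.not.2 hij) (sub_eq_iff_eq_add'.not.2 hji))
    simpa only [Commute, SemiconjBy, aPl, map_mul] using this
  commute_mul i := by
    have := RingQuot.mkAlgHom_rel ℂ (PlRel.row i)
    simpa only [Commute, SemiconjBy, aPl, map_mul, mul_assoc] using this.symm
  commute_succ_mul i := by
    have := RingQuot.mkAlgHom_rel ℂ (PlRel.col i)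
    simpa only [Commute, SemiconjBy, aPl, map_mul, mul_assoc] using this

section Main

variable {n : ℕ} [NeZero n] {A : Type*} [Semiring A]

/-- The cyclic noncommutative elementary symmetric polynomial of degree `r` in arbitrary elements
`a i` of a semiring; `plE n r` is its value at the generators of `Pl n`. -/
def cycEsymm (a : ZMod n → A) (r : ℕ) : A :=
  ∑ I ∈ Finset.powersetCard r (Finset.univ : Finset (ZMod n)), cycProdDesc a I

theorem cycEsymm_mul_cycEsymm (a : ZMod n → A) (r s : ℕ) :
    cycEsymm a r * cycEsymm a s =
      ∑ x ∈ Finset.powersetCard r Finset.univ ×ˢ Finset.powersetCard s Finset.univ,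
        cycProdDesc a x.1 * cycProdDesc a x.2 := by
  rw [cycEsymm, cycEsymm, Finset.sum_mul_sum, Finset.sum_product]

theorem IsLocalPlactic.commute_cycEsymm_of_lt {a : ZMod n → A} (ha : IsLocalPlactic a) {r s : ℕ}
    (hrs : r < s) (hs : s < n) : Commute (cycEsymm a r) (cycEsymm a s) := by
  rw [Commute, SemiconjBy, cycEsymm_mul_cycEsymm, cycEsymm_mul_cycEsymm]
  set S : Finset (Finset (ZMod n) × Finset (ZMod n)) :=
    Finset.powersetCard r Finset.univ ×ˢ Finset.powersetCard s Finset.univ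
  set T : Finset (Finset (ZMod n) × Finset (ZMod n)) :=
    Finset.powersetCard s Finset.univ ×ˢ Finset.powersetCard r Finset.univ
  have card_of_mem {x} (hx : x ∈ S) : x.1.card = r ∧ x.2.card = s := by
    simpa [S, Finset.mem_powersetCard] using hx
  have maps_to : ∀ x ∈ S, exchange x ∈ T := fun x hx => by
    obtain ⟨rfl, rfl⟩ := card_of_mem hx
    simp [T, Finset.mem_powersetCard, card_exchange_fst hrs.le, card_exchange_snd hrs.le]
  have inj_on : Set.InjOn exchange (S : Set (Finset (ZMod n) × Finset (ZMod n))) :=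
    (exchange_injOn n).mono fun x hx => by
      obtain ⟨rfl, rfl⟩ := card_of_mem hx
      exact hrs
  have surj_on : Set.SurjOn exchange (S : Set (Finset (ZMod n) × Finset (ZMod n))) T :=
    Finset.surjOn_of_injOn_of_card_le _ maps_to inj_on
      (by simp only [S, T, Finset.card_product, mul_comm, le_refl])
  refine Finset.sum_nbij exchange maps_to inj_on surj_on fun x hx => ?_
  obtain ⟨rfl, rfl⟩ := card_of_mem hx
  exact ha.cycProdDesc_mul_eq_exchange hrs.le hs

theorem plactic_esymm_commute_general {a : ZMod n → A} (ha : IsLocalPlactic a) {r s : ℕ}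
    (hr : r < n) (hs : s < n) : Commute (cycEsymm a r) (cycEsymm a s) := by
  rcases lt_trichotomy r s with h | rfl | h
  · exact ha.commute_cycEsymm_of_lt h hs
  · exact Commute.refl _
  · exact (ha.commute_cycEsymm_of_lt h hr).symm

end Main

/-- The cyclic noncommutative elementary symmetric polynomials pairwise
commute in the local affine plactic algebra. -/
theorem plactic_esymm_commute (n : ℕ) [NeZero n] (hn : 2 ≤ n) (r s : ℕ)
    (hr1 : 1 ≤ r) (hr2 : r ≤ n - 1) (hs1 : 1 ≤ s) (hs2 : s ≤ n - 1) :
    plE n r * plE n s = plE n s * plE n r :=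
  plactic_esymm_commute_general (isLocalPlactic_aPl n) (by omega) (by omega)
end
end

section
/- Let n ≥ 2, let Pl be the local affine plactic algebra, and let e_r ∈ Pl (0 ≤ r ≤ n−1, with e_0 = 1 and e_r = 0 for r < 0) be the cyclic noncommutative elementary symmetric polynomials. For 1 ≤ r ≤ n−1 define h_r = det(e_{1−i+j})_{1≤i,j≤r}, expanded by the Leibniz formula (unambiguous since the e_r pairwise commute). Then h_r = Σ_p ∏^↻ a_i^{p_i}, the sum over all functions p : ℤ/nℤ → ℕ with Σ_i p_i = r, where ∏^↻ a_i^{p_i} is the product of the blocks a_i^{p_i} over those i with p_i > 0, taken in any order in which the block of a_i stands to the left of the block of a_j whenever j ≡ i+1 (mod n) and p_i, p_j > 0 (well-defined since r ≤ n−1 forces p_i = 0 for some i, and blocks with non-adjacent indices commute). -/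
noncomputable section

open scoped BigOperators

/-- The cyclically ordered product `∏^↻_i a_i^{p_i}` of blocks, in which the block of `a_i`
stands to the left of the block of `a_{i+1}`: the blocks are multiplied in cyclically
increasing order starting just above a gap of the support of `p`. -/
def cycBlockAsc {n : ℕ} [NeZero n] {A : Type*} [Monoid A] (a : ZMod n → A)
    (p : ZMod n → ℕ) : A :=
  ((List.range n).map fun t =>
    a (zgap (Finset.univ.filter fun i => p i ≠ 0) + 1 + (t : ZMod n)) ^
      p (zgap (Finset.univ.filter fun i => p i ≠ 0) + 1 + (t : ZMod n))).prod

/-- The `e`'s with the conventions `e_0 = 1`, `e_r = 0` for `r < 0`. -/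
def plEInt (n : ℕ) [NeZero n] (t : ℤ) : Pl n :=
  if t < 0 then 0 else if t = 0 then 1 else plE n t.toNat

/-- The determinant of a square matrix over a (possibly noncommutative) ring, expanded via
the Leibniz formula, the factors of each summand multiplied in the order of the columns. -/
def ncDet {A : Type*} [Ring A] {r : ℕ} (M : Fin r → Fin r → A) : A :=
  ∑ σ : Equiv.Perm (Fin r),
    ((Equiv.Perm.sign σ : ℤ) : A) * ((List.finRange r).map fun i => M (σ i) i).prod

/-- The cyclic noncommutative complete symmetric polynomial
`h_r = det(e_{1-i+j})_{1 ≤ i,j ≤ r}`. -/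
def plH (n : ℕ) [NeZero n] (r : ℕ) : Pl n :=
  ncDet fun i j : Fin r => plEInt n ((j : ℤ) - (i : ℤ) + 1)

/-!
Let `a : ZMod n → A` be a family in an arbitrary ring whose nonadjacent members commute.
Put `e_k = ∑ a_I` (decreasing products over `k`-subsets) and `h_k = ∑ a^p` (increasing block
products).

In `∑_{k + l = r} (-1)^k e_k h_l`, collect the terms `(-1)^|I| a_I a^p` according to their
content `c = 1_I + p`. As `0 < r < n`, some `m` has `c m ≠ 0` and `c (m - 1) = 0`; cutting the
circle between `m - 1` and `m`, the factor `a_m` comes last in `a_I` and first in `a^p`, so that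
moving it from one to the other changes nothing but the sign and the sum vanishes.

The determinants `det (e_{j-i+1})` satisfy the same recurrence: expanding repeatedly along the
first column only ever produces determinants of the same shape except for a shifted first row.
-/

section NoncommutativeDeterminant

open Equiv Finset

variable {A : Type*} [Ring A]

theorem ncDet_permute {m : ℕ} (ρ : Perm (Fin m)) (M : Fin m → Fin m → A) :
    (ncDet fun i j => M (ρ i) j) = ((Perm.sign ρ : ℤ) : A) * ncDet M := by
  rw [ncDet, ncDet, mul_sum]
  refine Fintype.sum_equiv (Equiv.mulLeft ρ) _ _ fun σ => ?_
  rw [coe_mulLeft, Perm.sign_mul, Units.val_mul, Int.cast_mul, ← mul_assoc, ← mul_assoc,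
    ← Int.cast_mul, Int.units_coe_mul_self, Int.cast_one, one_mul]
  rfl

theorem ncDet_succ_column_zero {m : ℕ} (M : Fin (m + 1) → Fin (m + 1) → A) :
    ncDet M = ∑ i : Fin (m + 1),
      (-1) ^ (i : ℕ) * (M i 0 * ncDet fun j k : Fin m => M (i.succAbove j) k.succ) := by
  have hterm (i : Fin (m + 1)) (τ : Perm (Fin m)) :
      ((Perm.sign (Perm.decomposeFin.symm (i, τ)) : ℤ) : A) *
          ((List.finRange (m + 1)).map fun k => M (Perm.decomposeFin.symm (i, τ) k) k).prod =
        (if i = 0 then 1 else -1) * (M i 0 * (((Perm.sign τ : ℤ) : A) *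
          ((List.finRange m).map fun k => M (swap 0 i (τ k).succ) k.succ).prod)) := by
    rw [List.finRange_succ, List.map_cons, List.prod_cons, List.map_map,
      Perm.decomposeFin.symm_sign, Perm.decomposeFin_symm_apply_zero,
      (Int.cast_commute (Perm.sign τ : ℤ) (M i 0)).symm.left_comm]
    simp only [Function.comp_def, Perm.decomposeFin_symm_apply_succ]
    split_ifs <;> simp
  have hsum : ncDet M = ∑ i : Fin (m + 1),
      (if i = 0 then 1 else -1) *
        (M i 0 * ncDet fun j k : Fin m => M (swap 0 i j.succ) k.succ) := by
    rw [ncDet, ← Equiv.sum_comp Perm.decomposeFin.symm, Fintype.sum_prod_type]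
    simp only [hterm, ← mul_sum, ncDet]
  rw [hsum]
  refine sum_congr rfl fun i _ => Fin.cases ?_ (fun i => ?_) i
  · simp
  -- `decomposeFin` brings row `i.succ` to the top by a transposition, `succAbove` by a cycle.
  · simp only [← Fin.succAbove_cycleRange]
    rw [ncDet_permute i.cycleRange fun j k => M (i.succ.succAbove j) k.succ,
      (Int.cast_commute _ (M i.succ 0)).symm.left_comm, ← mul_assoc]
    simp [Fin.sign_cycleRange, Fin.succ_ne_zero, pow_succ']

end NoncommutativeDeterminant

section JacobiTrudi

open Finset

variable {A : Type*} [Ring A]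

/-- The Jacobi–Trudi determinant `det (e_{1-i+j})_{1 ≤ i, j ≤ r}` of a sequence `e`. -/
def jacobiTrudi (e : ℤ → A) (r : ℕ) : A :=
  ncDet fun i j : Fin r => e ((j : ℤ) - (i : ℤ) + 1)

/-- The Jacobi–Trudi matrix of size `m + 1` whose first row has been replaced by
`e_k, e_{k+1}, …`; up to transposition of the diagram, its determinant is the Schur function of a
hook. -/
def hookMatrix (e : ℤ → A) (k : ℤ) (m : ℕ) : Fin (m + 1) → Fin (m + 1) → A :=
  fun i j => e (j + Fin.cases k (fun i' : Fin m => -(i' : ℤ)) i)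

theorem jacobiTrudi_zero (e : ℤ → A) : jacobiTrudi e 0 = 1 := by
  simp [jacobiTrudi, ncDet]

theorem ncDet_hookMatrix_one (e : ℤ → A) (m : ℕ) :
    ncDet (hookMatrix e 1 m) = jacobiTrudi e (m + 1) := by
  refine congrArg ncDet (funext₂ fun i j => congrArg e ?_)
  cases i using Fin.cases with
  | zero => simp
  | succ i => simp; ring

theorem ncDet_hookMatrix_zero (e : ℤ → A) (k : ℤ) : ncDet (hookMatrix e k 0) = e k := by
  simp [ncDet, hookMatrix, List.finRange_succ]

variable {e : ℤ → A}

theorem ncDet_hookMatrix_succ (he0 : e 0 = 1) (he : ∀ t < 0, e t = 0) (k : ℤ) (m : ℕ) :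
    ncDet (hookMatrix e k (m + 1)) =
      e k * jacobiTrudi e (m + 1) - ncDet (hookMatrix e (k + 1) m) := by
  have hrow_zero : (fun i j : Fin (m + 1) => hookMatrix e k (m + 1) i.succ j.succ) =
      fun i j : Fin (m + 1) => e ((j : ℤ) - i + 1) := by
    ext i j
    simp only [hookMatrix, Fin.cases_succ, Fin.val_succ]
    congr 1
    push_cast
    ring
  have hrow_one : (fun i j : Fin (m + 1) =>
      hookMatrix e k (m + 1) ((0 : Fin (m + 1)).succ.succAbove i) j.succ) =
      hookMatrix e (k + 1) m := by
    ext i j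
    cases i using Fin.cases <;> simp [hookMatrix, add_assoc, add_comm, add_left_comm]
  have hcolumn (i : Fin m) : hookMatrix e k (m + 1) i.succ.succ 0 = 0 :=
    he _ (by simp; omega)
  have hcolumn_one : hookMatrix e k (m + 1) (0 : Fin (m + 1)).succ 0 = 1 := by
    simp only [hookMatrix, Fin.cases_succ]
    simpa using he0
  rw [ncDet_succ_column_zero, Fin.sum_univ_succ, Fin.sum_univ_succ]
  simp only [Fin.zero_succAbove, hrow_zero, hrow_one, hcolumn, hcolumn_one]
  simp [hookMatrix, jacobiTrudi, sub_eq_add_neg]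

theorem ncDet_hookMatrix_eq_sum (he0 : e 0 = 1) (he : ∀ t < 0, e t = 0) (k : ℤ) (m : ℕ) :
    ncDet (hookMatrix e k m) =
      ∑ x ∈ antidiagonal m, (-1) ^ x.1 * (e (k + x.1) * jacobiTrudi e x.2) := by
  induction m generalizing k with
  | zero => simp [ncDet_hookMatrix_zero, jacobiTrudi_zero]
  | succ m ih =>
    rw [ncDet_hookMatrix_succ he0 he, ih, Nat.sum_antidiagonal_succ, sub_eq_add_neg,
      ← sum_neg_distrib]
    simp [pow_succ, add_assoc, add_comm (1 : ℤ)]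

theorem sum_antidiagonal_mul_jacobiTrudi (he0 : e 0 = 1) (he : ∀ t < 0, e t = 0) {r : ℕ}
    (hr : 0 < r) :
    ∑ x ∈ antidiagonal r, (-1) ^ x.1 * (e x.1 * jacobiTrudi e x.2) = 0 := by
  obtain ⟨m, rfl⟩ := Nat.exists_eq_add_of_le' hr
  rw [Nat.sum_antidiagonal_succ, ← ncDet_hookMatrix_one, ncDet_hookMatrix_eq_sum he0 he]
  simp [pow_succ, he0, add_comm (1 : ℤ)]

theorem eq_of_sum_antidiagonal_mul_eq_zero {c f g : ℕ → A} (hc : c 0 = 1) (hfg : f 0 = g 0)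
    {r : ℕ} (hf : ∀ s, 0 < s → s ≤ r → ∑ x ∈ antidiagonal s, c x.1 * f x.2 = 0)
    (hg : ∀ s, 0 < s → s ≤ r → ∑ x ∈ antidiagonal s, c x.1 * g x.2 = 0) : f r = g r := by
  induction r using Nat.strong_induction_on with
  | _ r ih =>
    obtain _ | m := r
    · exact hfg
    have hlower : ∑ x ∈ antidiagonal m, c (x.1 + 1) * f x.2 =
        ∑ x ∈ antidiagonal m, c (x.1 + 1) * g x.2 := by
      refine sum_congr rfl fun x hx => ?_
      have hx : x.2 < m + 1 := by have := mem_antidiagonal.1 hx; omega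
      rw [ih x.2 hx (fun s h0 hs => hf s h0 (by omega)) fun s h0 hs => hg s h0 (by omega)]
    have hf := hf (m + 1) m.succ_pos le_rfl
    have hg := hg (m + 1) m.succ_pos le_rfl
    rw [Nat.sum_antidiagonal_succ, hc, one_mul] at hf hg
    rwa [hlower, ← hg, add_left_inj] at hf

end JacobiTrudi

section CyclicProducts

variable {n : ℕ}

theorem natCast_zmod_ne_zero {t : ℕ} (h0 : 0 < t) (hn : t < n) : (t : ZMod n) ≠ 0 := fun h =>
  hn.not_ge (Nat.le_of_dvd h0 ((ZMod.natCast_eq_zero_iff t n).1 h))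

theorem succ_eq_of_natCast_zmod_eq {s d t u : ℕ} (hsd : s + d = n) (ht : t < s) (hu : u < d)
    (h : (t : ZMod n) = s + u + 1) : u + 1 = d := by
  by_contra hne
  have h : (t : ZMod n) = (s + u + 1 : ℕ) := by exact_mod_cast h
  rw [ZMod.natCast_eq_natCast_iff', Nat.mod_eq_of_lt (by omega), Nat.mod_eq_of_lt (by omega)] at h
  omega

theorem zgap_notMem_s4 [NeZero n] {I : Finset (ZMod n)} {g : ZMod n} (hg : g ∉ I) : zgap I ∉ I := by
  have h : ((Finset.univ \ I).image ZMod.val).Nonempty :=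
    ⟨g.val, Finset.mem_image_of_mem _ (by simp [hg])⟩
  obtain ⟨x, hx, hxmin⟩ := Finset.mem_image.1 (Finset.min'_mem _ h)
  rw [zgap, dif_pos h, ← hxmin, ZMod.natCast_zmod_val]
  simpa using hx

/-- The commutation condition on a family indexed by the circle `ZMod n`: members whose indices are
not neighbours commute. -/
def CommuteNonadjacent {A : Type*} [Mul A] (a : ZMod n → A) : Prop :=
  ∀ i j, i - j ≠ 1 → j - i ≠ 1 → Commute (a i) (a j)

theorem commuteNonadjacent_aPl (n : ℕ) : CommuteNonadjacent (aPl n) := fun i j hij hji => by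
  simpa only [Commute, SemiconjBy, aPl, map_mul] using
    RingQuot.mkAlgHom_rel ℂ (PlRel.comm i j hij hji)

variable {A : Type*} [Monoid A] {a : ZMod n → A}

namespace CommuteNonadjacent

theorem pow (ha : CommuteNonadjacent a) (p : ZMod n → ℕ) :
    CommuteNonadjacent fun i => a i ^ p i :=
  fun i j hij hji => (ha i j hij hji).pow_pow _ _

theorem ite_neg_mem (ha : CommuteNonadjacent a) (I : Finset (ZMod n)) :
    CommuteNonadjacent fun i => if -i ∈ I then a (-i) else 1 := fun i j hij hji => by
  have h : Commute (a (-i)) (a (-j)) := ha _ _ (by simpa [neg_add_eq_sub] using hji)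
    (by simpa [neg_add_eq_sub] using hij)
  dsimp only
  split_ifs <;> simp [h]

end CommuteNonadjacent

/-- The product `F i * F (i + 1) * ⋯ * F (i + k - 1)` along an arc of `k` points of the circle. -/
def arcProd (F : ZMod n → A) (i : ZMod n) (k : ℕ) : A :=
  ((List.range k).map fun t : ℕ => F (i + t)).prod

variable {F G : ZMod n → A}

theorem arcProd_succ (F : ZMod n → A) (i : ZMod n) (k : ℕ) :
    arcProd F i (k + 1) = arcProd F i k * F (i + k) := by
  simp [arcProd, List.range_succ]

theorem arcProd_add (F : ZMod n → A) (i : ZMod n) (k l : ℕ) :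
    arcProd F i (k + l) = arcProd F i k * arcProd F (i + k) l := by
  simp [arcProd, List.range_add, Function.comp_def, add_assoc]

theorem arcProd_succ' (F : ZMod n → A) (i : ZMod n) (k : ℕ) :
    arcProd F i (k + 1) = F i * arcProd F (i + 1) k := by
  rw [add_comm, arcProd_add]
  simp [arcProd]

theorem arcProd_congr {i : ZMod n} {k : ℕ} (h : ∀ t < k, F (i + t) = G (i + t)) :
    arcProd F i k = arcProd G i k :=
  congrArg List.prod (List.map_congr_left fun t ht => h t (List.mem_range.1 ht))

theorem commute_arcProd {i j : ZMod n} {k l : ℕ}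
    (h : ∀ t < k, ∀ u < l, Commute (F (i + t)) (F (j + u))) :
    Commute (arcProd F i k) (arcProd F j l) := by
  refine Commute.list_prod_left _ _ fun x hx => Commute.list_prod_right _ _ fun y hy => ?_
  simp only [List.mem_map, List.mem_range] at hx hy
  obtain ⟨t, ht, rfl⟩ := hx
  obtain ⟨u, hu, rfl⟩ := hy
  exact h t ht u hu

theorem commute_arcProd_of_eq_one (hF : CommuteNonadjacent F) {g : ZMod n} {s d : ℕ}
    (hsd : s + d = n) (hg : F g = 1) (hgs : F (g + s) = 1) :
    Commute (arcProd F (g + 1) s) (arcProd F (g + s + 1) d) := by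
  refine commute_arcProd fun t ht u hu => ?_
  have hn : (s : ZMod n) + d = 0 := by rw [← Nat.cast_add, hsd, ZMod.natCast_self]
  by_cases hleft : g + 1 + t - (g + s + 1 + u) = 1
  · have hd : u + 1 = d := succ_eq_of_natCast_zmod_eq hsd ht hu (by linear_combination hleft)
    have hu : g + s + 1 + u = g := by
      rw [← hd, Nat.cast_succ] at hn
      linear_combination hn
    simp [hu, hg]
  by_cases hright : g + s + 1 + u - (g + 1 + t) = 1
  · have hs : t + 1 = s := succ_eq_of_natCast_zmod_eq ((add_comm d s).trans hsd) hu ht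
      (by linear_combination hright - hn)
    have ht : g + 1 + t = g + s := by rw [← hs, Nat.cast_succ]; ring
    simp [ht, hgs]
  exact hF _ _ hleft hright

theorem arcProd_eq_arcProd_of_eq_one [NeZero n] (hF : CommuteNonadjacent F) {g g' : ZMod n}
    (hg : F g = 1) (hg' : F g' = 1) : arcProd F (g + 1) n = arcProd F (g' + 1) n := by
  obtain ⟨s, hs, rfl⟩ : ∃ s : ℕ, s < n ∧ g' = g + s := ⟨(g' - g).val, ZMod.val_lt _, by simp⟩
  obtain ⟨d, hsd⟩ := Nat.exists_eq_add_of_le hs.le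
  have hn : (s : ZMod n) + d = 0 := by rw [← Nat.cast_add, ← hsd, ZMod.natCast_self]
  have hfirst : g + 1 + s = g + s + 1 := by ring
  have hsecond : g + s + 1 + d = g + 1 := by linear_combination hn
  calc arcProd F (g + 1) n = arcProd F (g + 1) s * arcProd F (g + s + 1) d := by
        rw [← hfirst, ← arcProd_add, ← hsd]
    _ = arcProd F (g + s + 1) d * arcProd F (g + 1) s :=
        commute_arcProd_of_eq_one hF hsd.symm hg hg'
    _ = arcProd F (g + s + 1) n := by
        rw [← hsecond, ← arcProd_add, add_comm d, ← hsd]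

variable [NeZero n]

theorem cycBlockAsc_eq_arcProd (ha : CommuteNonadjacent a) {p : ZMod n → ℕ} {g : ZMod n}
    (hg : p g = 0) : cycBlockAsc a p = arcProd (fun i => a i ^ p i) (g + 1) n := by
  have hgap : p (zgap (Finset.univ.filter fun i => p i ≠ 0)) = 0 := by
    simpa using zgap_notMem_s4 (I := Finset.univ.filter fun i => p i ≠ 0) (g := g) (by simp [hg])
  rw [← arcProd_eq_arcProd_of_eq_one (ha.pow p)
    (g := zgap (Finset.univ.filter fun i => p i ≠ 0)) (by simp [hgap]) (by simp [hg])]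
  -- `cycBlockAsc` maps over `List.range n` coerced to a list in `ZMod n`.
  simp [cycBlockAsc, arcProd, ← List.map_eq_flatMap, Function.comp_def]

theorem cycProdDesc_eq_arcProd (ha : CommuteNonadjacent a) {I : Finset (ZMod n)} {g : ZMod n}
    (hg : g ∉ I) :
    cycProdDesc a I = arcProd (fun i => if -i ∈ I then a (-i) else 1) (-g + 1) n := by
  rw [← arcProd_eq_arcProd_of_eq_one (ha.ite_neg_mem I) (g := -zgap I) (by simp [zgap_notMem_s4 hg])
    (by simp [hg])]
  have hneg (t : ℕ) : -(-zgap I + 1 + t) = zgap I - 1 - t := by ring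
  simp only [arcProd, hneg]
  simp [cycProdDesc, ← List.map_eq_flatMap, Function.comp_def]

theorem cycBlockAsc_add_single (hn : 1 < n) (ha : CommuteNonadjacent a) {p : ZMod n → ℕ}
    {m : ZMod n} (hp : p (m - 1) = 0) :
    cycBlockAsc a (p + Pi.single m 1) = a m * cycBlockAsc a p := by
  obtain ⟨k, rfl⟩ := Nat.exists_eq_add_of_lt hn
  have hne : m - 1 ≠ m := by
    simpa using natCast_zmod_ne_zero one_pos hn
  rw [cycBlockAsc_eq_arcProd ha hp, cycBlockAsc_eq_arcProd ha (g := m - 1) (by simp [hp, hne]),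
    sub_add_cancel, arcProd_succ', arcProd_succ', ← mul_assoc]
  congr 1
  · simp [pow_succ']
  · refine arcProd_congr fun t ht => ?_
    have hmt : m + 1 + t ≠ m := by
      simpa [add_assoc, add_comm (1 : ZMod _)] using
        natCast_zmod_ne_zero t.succ_pos (Nat.succ_lt_succ ht)
    simp [hmt]

theorem cycProdDesc_insert (hn : 1 < n) (ha : CommuteNonadjacent a) {I : Finset (ZMod n)}
    {m : ZMod n} (hm : m ∉ I) (hm' : m - 1 ∉ I) :
    cycProdDesc a (insert m I) = cycProdDesc a I * a m := by
  obtain ⟨k, rfl⟩ := Nat.exists_eq_add_of_le' hn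
  have hne : m - 1 ≠ m := by
    simpa using natCast_zmod_ne_zero one_pos hn
  have hcycle : (k : ZMod (k + 2)) + 2 = 0 := by exact_mod_cast ZMod.natCast_self (k + 2)
  have hlast : -(m - 1) + 1 + (k : ZMod (k + 2)) = -m := by linear_combination hcycle
  have hgap : -(m - 1) + 1 + ((k + 1 : ℕ) : ZMod (k + 2)) = -(m - 1) := by
    push_cast
    linear_combination hcycle
  rw [cycProdDesc_eq_arcProd ha hm', cycProdDesc_eq_arcProd ha (g := m - 1) (by simp [hm', hne])]
  simp only [arcProd_succ, hlast, hgap, neg_neg, hm, hm', if_false,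
    Finset.mem_insert, hne, false_or, mul_one]
  congr 1
  refine arcProd_congr fun t ht => ?_
  have hmt : -(-(m - 1) + 1 + (t : ZMod (k + 2))) ≠ m := fun h =>
    natCast_zmod_ne_zero (n := k + 2) (t := t + 2) (by omega) (by omega) (by
      push_cast
      linear_combination -h)
  simp only [hmt, false_or]

end CyclicProducts

section CauchyRecurrence

open Finset

theorem exists_and_not_sub_one {n : ℕ} [NeZero n] {P : ZMod n → Prop} {i j : ZMod n} (hi : P i)
    (hj : ¬P j) : ∃ m, P m ∧ ¬P (m - 1) := by
  by_contra! hstep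
  have hall (t : ℕ) : P (i - t) := by
    induction t with
    | zero => simpa using hi
    | succ t ih => simpa [sub_sub] using hstep _ ih
  exact hj (by simpa using hall (i - j).val)

theorem exists_ne_zero_and_sub_one_eq_zero {n : ℕ} [NeZero n] {c : ZMod n → ℕ}
    (h0 : ∑ i, c i ≠ 0) (hn : ∑ i, c i < n) : ∃ m, c m ≠ 0 ∧ c (m - 1) = 0 := by
  obtain ⟨i, -, hi⟩ := exists_ne_zero_of_sum_ne_zero h0
  obtain ⟨j, -, hj⟩ : ∃ j ∈ univ, c j < 1 := exists_lt_of_sum_lt (by simpa [ZMod.card] using hn)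
  simpa using exists_and_not_sub_one (P := fun i => c i ≠ 0) hi (j := j) (by simpa using hj)

section Content

variable {ι : Type*} [Fintype ι]

theorem sum_indicator_one (I : Finset ι) : ∑ i, (I : Set ι).indicator (1 : ι → ℕ) i = #I := by
  classical simp [Set.indicator_apply]

theorem indicator_one_add_sub_cancel {I : Finset ι} {c : ι → ℕ}
    (hI : I ⊆ univ.filter fun i => c i ≠ 0) :
    (I : Set ι).indicator 1 + (c - (I : Set ι).indicator 1) = c :=
  add_tsub_cancel_of_le (Set.indicator_le fun _ hi =>
    Nat.one_le_iff_ne_zero.2 (mem_filter.1 (hI hi)).2)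

variable [DecidableEq ι]

theorem filter_piFinset_range_eq_piAntidiag (r : ℕ) :
    {p ∈ Fintype.piFinset fun _ : ι => range (r + 1) | ∑ i, p i = r} = piAntidiag univ r := by
  ext p
  simp only [mem_filter, Fintype.mem_piFinset, mem_range, mem_piAntidiag, mem_univ, implies_true,
    and_true, and_iff_right_iff_imp]
  rintro rfl i
  exact Nat.lt_succ_of_le (single_le_sum (fun _ _ => Nat.zero_le _) (mem_univ i))

/-- Pairs `(I, p)` with `|I| + |p| = r` correspond to pairs `(c, I)` with `|c| = r` and
`I ⊆ supp c` through `c = 1_I + p`. -/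
theorem sum_antidiagonal_eq_sum_content {M : Type*} [AddCommMonoid M]
    (f : Finset ι → (ι → ℕ) → M) (r : ℕ) :
    ∑ x ∈ antidiagonal r, ∑ I ∈ powersetCard x.1 univ, ∑ p ∈ piAntidiag univ x.2, f I p =
      ∑ c ∈ piAntidiag (univ : Finset ι) r, ∑ I ∈ ({i | c i ≠ 0} : Finset ι).powerset,
        f I (c - (I : Set ι).indicator 1) := by
  simp only [← sum_product', sum_sigma']
  refine sum_nbij' (fun y => ⟨(y.2.1 : Set ι).indicator 1 + y.2.2, y.2.1⟩)
    (fun y => ⟨(#y.2, r - #y.2), y.2, y.1 - (y.2 : Set ι).indicator 1⟩) ?_ ?_ ?_ ?_ ?_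
  · rintro ⟨⟨k, l⟩, I, p⟩ h
    obtain ⟨hkl, hI, hp⟩ : k + l = r ∧ #I = k ∧ ∑ i, p i = l := by simpa using h
    have hsub : I ⊆ ({i | (I : Set ι).indicator 1 i + p i ≠ 0} : Finset ι) := fun i hi => by
      simp [hi]
    simpa [sum_add_distrib, sum_indicator_one, hI, hp, hkl] using hsub
  · rintro ⟨c, I⟩ h
    obtain ⟨rfl, hI⟩ : ∑ i, c i = r ∧ I ⊆ ({i | c i ≠ 0} : Finset ι) := by simpa using h
    have hsum : #I + ∑ i, (c - (I : Set ι).indicator 1 : ι → ℕ) i = ∑ i, c i := by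
      rw [← sum_indicator_one, ← sum_add_distrib]
      exact congrArg (∑ i, · i) (indicator_one_add_sub_cancel hI)
    simp only [mem_sigma, HasAntidiagonal.mem_antidiagonal, mem_product, mem_powersetCard,
      subset_univ, true_and, mem_piAntidiag, mem_univ, implies_true, and_true]
    exact ⟨Nat.add_sub_of_le (hsum ▸ Nat.le_add_right _ _), Nat.eq_sub_of_add_eq' hsum⟩
  · rintro ⟨⟨k, l⟩, I, p⟩ h
    obtain ⟨rfl, rfl, rfl⟩ : k + l = r ∧ #I = k ∧ ∑ i, p i = l := by simpa using h
    simp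
  · rintro ⟨c, I⟩ h
    have hI : I ⊆ ({i | c i ≠ 0} : Finset ι) := mem_powerset.1 (mem_sigma.1 h).2
    simp only [indicator_one_add_sub_cancel hI]
  · rintro ⟨⟨k, l⟩, I, p⟩ -
    simp only [add_tsub_cancel_left]

end Content

variable {n : ℕ} [NeZero n] {A : Type*} [Ring A] {a : ZMod n → A}

/-- The cyclic noncommutative elementary symmetric polynomial `e_r` of a family in a ring. -/
def cycElemSymm (a : ZMod n → A) (r : ℕ) : A :=
  ∑ I ∈ powersetCard r univ, cycProdDesc a I

/-- The polynomials `e_r` for integer `r`, with `e_r = 0` for `r < 0`. -/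
def cycElemSymmInt (a : ZMod n → A) (t : ℤ) : A :=
  if t < 0 then 0 else cycElemSymm a t.toNat

/-- The cyclic noncommutative complete symmetric polynomial `h_r` of a family in a ring, as a sum
of cyclically ordered monomials. -/
def cycCompleteSymm (a : ZMod n → A) (r : ℕ) : A :=
  ∑ p ∈ piAntidiag univ r, cycBlockAsc a p

theorem cycElemSymm_zero (a : ZMod n → A) : cycElemSymm a 0 = 1 := by
  simp [cycElemSymm, cycProdDesc]

theorem cycCompleteSymm_zero (a : ZMod n → A) : cycCompleteSymm a 0 = 1 := by
  simp [cycCompleteSymm, cycBlockAsc]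

theorem cycElemSymmInt_natCast (a : ZMod n → A) (r : ℕ) :
    cycElemSymmInt a r = cycElemSymm a r := by
  simp [cycElemSymmInt]

theorem plEInt_eq_cycElemSymmInt (n : ℕ) [NeZero n] : plEInt n = cycElemSymmInt (aPl n) := by
  ext t
  obtain ht | rfl | ht := lt_trichotomy t 0
  · simp [plEInt, cycElemSymmInt, ht]
  · simp [plEInt, cycElemSymmInt, cycElemSymm_zero]
  · simp [plEInt, cycElemSymmInt, ht.not_gt, ht.ne', plE, cycElemSymm]

theorem sum_powerset_support_eq_zero (hn : 1 < n) (ha : CommuteNonadjacent a) {c : ZMod n → ℕ}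
    {m : ZMod n} (hm : c m ≠ 0) (hm' : c (m - 1) = 0) :
    ∑ I ∈ ({i | c i ≠ 0} : Finset (ZMod n)).powerset,
      (-1) ^ #I * (cycProdDesc a I * cycBlockAsc a (c - (I : Set (ZMod n)).indicator 1)) = 0 := by
  rw [← insert_erase (show m ∈ ({i | c i ≠ 0} : Finset (ZMod n)) by simpa using hm),
    sum_powerset_insert (notMem_erase _ _), ← sum_add_distrib]
  refine sum_eq_zero fun I hI => ?_
  have hmI : m ∉ I := fun h => notMem_erase _ _ (mem_powerset.1 hI h)
  have hmI' : m - 1 ∉ I := fun h => by simpa [hm'] using mem_powerset.1 hI h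
  set q := c - (↑(insert m I) : Set (ZMod n)).indicator 1 with hq
  have hsplit : c - (I : Set (ZMod n)).indicator 1 = q + Pi.single m 1 := by
    ext i
    obtain rfl | hi := eq_or_ne i m
    · simp [hq, hmI]
      omega
    · simp [hq, hi, Set.indicator_apply]
  rw [hsplit, cycBlockAsc_add_single hn ha (by simp [hq, hm']), cycProdDesc_insert hn ha hmI hmI',
    card_insert_of_notMem hmI, pow_succ]
  noncomm_ring

theorem sum_antidiagonal_cycElemSymm_mul_cycCompleteSymm (ha : CommuteNonadjacent a) {r : ℕ}
    (hr : 0 < r) (hrn : r < n) :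
    ∑ x ∈ antidiagonal r, (-1) ^ x.1 * (cycElemSymm a x.1 * cycCompleteSymm a x.2) = 0 := by
  have hexpand (x : ℕ × ℕ) : (-1) ^ x.1 * (cycElemSymm a x.1 * cycCompleteSymm a x.2) =
      ∑ I ∈ powersetCard x.1 univ, ∑ p ∈ piAntidiag univ x.2,
        (-1) ^ #I * (cycProdDesc a I * cycBlockAsc a p) := by
    rw [cycElemSymm, cycCompleteSymm, sum_mul_sum, mul_sum]
    refine sum_congr rfl fun I hI => ?_
    rw [mul_sum, (mem_powersetCard.1 hI).2]
  simp only [hexpand]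
  rw [sum_antidiagonal_eq_sum_content fun I p => (-1) ^ #I * (cycProdDesc a I * cycBlockAsc a p)]
  refine sum_eq_zero fun c hc => ?_
  have hc : ∑ i, c i = r := (mem_piAntidiag.1 hc).1
  obtain ⟨m, hm, hm'⟩ := exists_ne_zero_and_sub_one_eq_zero (c := c) (by omega) (by omega)
  exact sum_powerset_support_eq_zero (by omega) ha hm hm'

theorem plactic_hsymm_formula_general (ha : CommuteNonadjacent a) {r : ℕ} (hr : r < n) :
    jacobiTrudi (cycElemSymmInt a) r = cycCompleteSymm a r := by
  have he0 : cycElemSymmInt a 0 = 1 := by simp [cycElemSymmInt, cycElemSymm_zero]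
  have he : ∀ t < 0, cycElemSymmInt a t = 0 := fun t ht => by simp [cycElemSymmInt, ht]
  refine eq_of_sum_antidiagonal_mul_eq_zero (c := fun k => (-1) ^ k * cycElemSymm a k)
    (by simp [cycElemSymm_zero]) (by rw [jacobiTrudi_zero, cycCompleteSymm_zero])
    (fun s hs _ => ?_) fun s hs hsr => ?_
  · simpa only [mul_assoc, cycElemSymmInt_natCast] using
      sum_antidiagonal_mul_jacobiTrudi he0 he hs
  · simpa only [mul_assoc] using
      sum_antidiagonal_cycElemSymm_mul_cycCompleteSymm ha hs (hsr.trans_lt hr)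

end CauchyRecurrence

/-- For `1 ≤ r ≤ n-1`, the cyclic noncommutative complete symmetric
polynomial `h_r` equals the sum, over all `p : ℤ/nℤ → ℕ` with `Σ_i p_i = r`, of the
cyclically ordered products `∏^↻ a_i^{p_i}`. -/
theorem plactic_hsymm_formula (n : ℕ) [NeZero n] (hn : 2 ≤ n) (r : ℕ)
    (hr1 : 1 ≤ r) (hr2 : r ≤ n - 1) :
    plH n r =
      ∑ p ∈ (Fintype.piFinset fun _ : ZMod n => Finset.range (r + 1)).filter
          (fun p => ∑ i, p i = r),
        cycBlockAsc (aPl n) p := by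
  rw [plH, plEInt_eq_cycElemSymmInt, filter_piFinset_range_eq_piAntidiag]
  exact plactic_hsymm_formula_general (commuteNonadjacent_aPl n) (by omega)
end
end

section
/- Let n, k ≥ 1 and z ∈ ℂ, and let x = (x_1,…,x_k) ∈ ℂ^k have nonzero, pairwise distinct entries and satisfy x_i^{n+k} = (−1)^{k−1} z·(x_1⋯x_k) for every i = 1,…,k. Then for every integer r with 0 ≤ r ≤ n one has h_{n−r}(x_1,…,x_k) = z·h_r(x_1^{−1},…,x_k^{−1}). -/
noncomputable section

open scoped BigOperators

/-- Elementary symmetric polynomial `e_r(x)` of a tuple of complex numbers,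
with `e_0 = 1` and `e_r = 0` for `r < 0` or `r > m`. -/
def eC {m : ℕ} (x : Fin m → ℂ) (r : ℤ) : ℂ :=
  if 0 ≤ r then ∑ I ∈ Finset.powersetCard r.toNat (Finset.univ : Finset (Fin m)), ∏ i ∈ I, x i
  else 0

/-- Complete homogeneous symmetric polynomial `h_r(x)` of a tuple of complex numbers,
with `h_0 = 1` and `h_r = 0` for `r < 0`. -/
def hC {m : ℕ} (x : Fin m → ℂ) (r : ℤ) : ℂ :=
  if 0 ≤ r then
    ∑ p ∈ (Fintype.piFinset fun _ : Fin m => Finset.range (r.toNat + 1)).filter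
        (fun p => ∑ i, p i = r.toNat),
      ∏ i, x i ^ p i
  else 0

/-!
With the barycentric weights `w_i = ∏_{j ≠ i} (x_i - x_j)⁻¹`, one has
`h_m(x) = ∑_i w_i x_i^(m + k - 1)` for all `m ≥ 0`: both sides satisfy the same recurrence on
adding a variable, and for `m = 0` this is Lagrange interpolation of `X^(k - 1)`. Replacing every
`x_i` by its inverse multiplies `w_i` by `(-1)^(k - 1) x_i^(k - 1) ∏_{j ≠ i} x_j`, so
`h_r(x⁻¹) = (-1)^(k - 1) e_k(x) ∑_i w_i x_i^(-r - 1)`. After multiplication by `z`, the Bethe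
equations turn the prefactor into `x_i^(n + k)`, and the sum becomes the one for `h_(n - r)(x)`.
-/

open Finset

variable {ι R K : Type*} [DecidableEq ι] [CommSemiring R] [Field K] {s : Finset ι}

section CompleteHomogeneous

/-- The complete homogeneous symmetric polynomial `h_n` of the values `v i`, `i ∈ s`. Unlike the
evaluation of `MvPolynomial.hsymm`, it allows induction on the set `s` of variables inside a fixed
index type. -/
def hsymmOn (s : Finset ι) (v : ι → R) (n : ℕ) : R :=
  ∑ p ∈ s.piAntidiag n, ∏ i ∈ s, v i ^ p i

theorem aeval_hsymm [Fintype ι] (v : ι → R) (n : ℕ) :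
    MvPolynomial.aeval v (MvPolynomial.hsymm ι R n) = hsymmOn univ v n := by
  rw [hsymmOn, ← map_sym_eq_piAntidiag, sum_map, sym_univ, MvPolynomial.hsymm, map_sum]
  refine sum_congr rfl fun m _ => ?_
  rw [map_multiset_prod, Multiset.map_map, prod_multiset_map_count]
  simp only [Function.comp_apply, MvPolynomial.aeval_X]
  refine prod_subset (subset_univ _) fun i _ hi => ?_
  rw [Multiset.count_eq_zero.2 (by simpa using hi), pow_zero]

theorem hC_natCast {m : ℕ} (x : Fin m → ℂ) (n : ℕ) : hC x n = hsymmOn univ x n := by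
  simp only [hC, Int.natCast_nonneg, if_true, Int.toNat_natCast, hsymmOn]
  refine sum_congr (Finset.ext fun p => ?_) fun _ _ => rfl
  have le_sum (i : Fin m) : p i ≤ ∑ j, p j := single_le_sum_of_canonicallyOrdered (mem_univ i)
  simp only [mem_filter, Fintype.mem_piFinset, mem_range, Nat.lt_succ_iff, mem_piAntidiag]
  exact ⟨fun h => ⟨h.2, fun i _ => mem_univ i⟩, fun h => ⟨fun i => h.1 ▸ le_sum i, h.1⟩⟩

theorem hsymmOn_eq_coeff_prod (s : Finset ι) (v : ι → R) (n : ℕ) :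
    hsymmOn s v n = PowerSeries.coeff n (∏ i ∈ s, PowerSeries.mk fun m => v i ^ m) := by
  simp only [hsymmOn, PowerSeries.coeff_prod, PowerSeries.coeff_mk, finsuppAntidiag, sum_map]
  exact (sum_attach (s.piAntidiag n) fun p => ∏ i ∈ s, v i ^ p i).symm

theorem hsymmOn_zero (s : Finset ι) (v : ι → R) : hsymmOn s v 0 = 1 := by
  simp [hsymmOn]

theorem hsymmOn_singleton (a : ι) (v : ι → R) (n : ℕ) : hsymmOn {a} v n = v a ^ n := by
  simp [hsymmOn_eq_coeff_prod]

theorem hsymmOn_cons_succ {a : ι} (ha : a ∉ s) (v : ι → R) (n : ℕ) :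
    hsymmOn (s.cons a ha) v (n + 1) = v a * hsymmOn (s.cons a ha) v n + hsymmOn s v (n + 1) := by
  have geom : (PowerSeries.mk fun m => v a ^ m) =
      PowerSeries.X * (PowerSeries.C (v a) * PowerSeries.mk fun m => v a ^ m) + 1 := by
    ext (_ | m) <;> simp [PowerSeries.coeff_succ_X_mul, PowerSeries.coeff_one, pow_succ']
  simp only [hsymmOn_eq_coeff_prod, prod_cons]
  conv_lhs => rw [geom]
  simp only [add_mul, one_mul, mul_assoc, map_add, PowerSeries.coeff_succ_X_mul,
    PowerSeries.coeff_C_mul]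

end CompleteHomogeneous

section NodalWeight

open Lagrange

variable {v : ι → K}

theorem sum_nodalWeight_mul_pow_card_sub_one (hs : s.Nonempty) (hv : Set.InjOn v s) :
    ∑ i ∈ s, nodalWeight s v i * v i ^ (#s - 1) = 1 := by
  have degree_lt : (Polynomial.X ^ (#s - 1) : Polynomial K).degree < #s := by
    rw [Polynomial.degree_X_pow]
    exact_mod_cast Nat.sub_lt hs.card_pos one_pos
  simpa [nodalWeight, div_eq_inv_mul] using (coeff_eq_sum hv degree_lt).symm

theorem nodalWeight_cons_mul_sub {a i : ι} (ha : a ∉ s) (hi : i ∈ s) (hia : v i ≠ v a) :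
    nodalWeight (s.cons a ha) v i * (v i - v a) = nodalWeight s v i := by
  have hai : a ≠ i := fun h => ha (h ▸ hi)
  rw [nodalWeight, nodalWeight, cons_eq_insert, erase_insert_of_ne hai,
    prod_insert (fun h => ha (mem_of_mem_erase h)), mul_right_comm,
    inv_mul_cancel₀ (sub_ne_zero.2 hia), one_mul]

theorem sum_cons_nodalWeight_mul_pow_succ {a : ι} (ha : a ∉ s) (hva : ∀ i ∈ s, v i ≠ v a)
    (n : ℕ) :
    ∑ i ∈ s.cons a ha, nodalWeight (s.cons a ha) v i * v i ^ (n + 1) =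
      v a * ∑ i ∈ s.cons a ha, nodalWeight (s.cons a ha) v i * v i ^ n +
        ∑ i ∈ s, nodalWeight s v i * v i ^ n := by
  rw [← sub_eq_iff_eq_add', mul_sum, ← sum_sub_distrib, sum_cons, pow_succ', mul_left_comm,
    sub_self, zero_add]
  refine sum_congr rfl fun i hi => ?_
  rw [← nodalWeight_cons_mul_sub ha hi (hva i hi)]
  ring

theorem hsymmOn_eq_sum_nodalWeight_mul_pow (hs : s.Nonempty) (hv : Set.InjOn v s) (n : ℕ) :
    hsymmOn s v n = ∑ i ∈ s, nodalWeight s v i * v i ^ (n + (#s - 1)) := by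
  induction hs using Nonempty.cons_induction generalizing n with
  | singleton a => simp [hsymmOn_singleton, nodalWeight]
  | cons a s ha hs ih =>
    induction n with
    | zero =>
      rw [hsymmOn_zero, zero_add, sum_nodalWeight_mul_pow_card_sub_one (cons_nonempty ha) hv]
    | succ n ihn =>
      have hva (i : ι) (hi : i ∈ s) : v i ≠ v a := fun h =>
        ha (hv (mem_cons_of_mem hi) (mem_cons_self a s) h ▸ hi)
      have exponent : n + 1 + (#s - 1) = n + #s := by have := hs.card_pos; omega
      rw [card_cons, Nat.add_sub_cancel] at ihn ⊢
      rw [hsymmOn_cons_succ, ihn, ih (hv.mono (by simp)), exponent, Nat.add_right_comm,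
        sum_cons_nodalWeight_mul_pow_succ ha hva]

theorem nodalWeight_inv {i : ι} (hi : i ∈ s) (hv0 : ∀ j ∈ s, v j ≠ 0) :
    nodalWeight s v⁻¹ i =
      (-1) ^ (#s - 1) * v i ^ (#s - 1) * (∏ j ∈ s.erase i, v j) * nodalWeight s v i := by
  simp only [nodalWeight, ← card_erase_of_mem hi, ← prod_const, ← prod_mul_distrib, Pi.inv_apply]
  refine prod_congr rfl fun j hj => ?_
  rw [inv_sub_inv (hv0 i hi) (hv0 j (mem_of_mem_erase hj)), inv_div, ← neg_sub (v i), div_neg,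
    div_eq_mul_inv]
  ring

theorem hsymmOn_inv_eq_sum_nodalWeight_mul_inv_pow (hs : s.Nonempty) (hv : Set.InjOn v s)
    (hv0 : ∀ i ∈ s, v i ≠ 0) (n : ℕ) :
    hsymmOn s v⁻¹ n =
      (-1) ^ (#s - 1) * (∏ i ∈ s, v i) * ∑ i ∈ s, nodalWeight s v i * (v i)⁻¹ ^ (n + 1) := by
  have hv_inv : Set.InjOn v⁻¹ s := inv_injective.comp_injOn hv
  rw [hsymmOn_eq_sum_nodalWeight_mul_pow hs hv_inv, mul_sum]
  refine sum_congr rfl fun i hi => ?_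
  have cancel : v i ^ (#s - 1) * (v i)⁻¹ ^ (n + (#s - 1)) = v i * (v i)⁻¹ ^ (n + 1) := by
    have := hv0 i hi
    simp only [pow_add, inv_pow]
    field_simp
  rw [nodalWeight_inv hi hv0, ← mul_prod_erase s v hi, Pi.inv_apply]
  linear_combination (-1) ^ (#s - 1) * (∏ j ∈ s.erase i, v j) * nodalWeight s v i * cancel

end NodalWeight

theorem hsymm_duality_of_bethe_general [Fintype ι] [Nonempty ι] {n : ℕ} {z : K} {x : ι → K}
    (hx0 : ∀ i, x i ≠ 0) (hx : Function.Injective x)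
    (hbethe : ∀ i, x i ^ (n + Fintype.card ι) = (-1) ^ (Fintype.card ι - 1) * z * ∏ j, x j)
    {r : ℕ} (hr : r ≤ n) :
    MvPolynomial.aeval x (MvPolynomial.hsymm ι K (n - r)) =
      z * MvPolynomial.aeval x⁻¹ (MvPolynomial.hsymm ι K r) := by
  rw [aeval_hsymm, aeval_hsymm, hsymmOn_eq_sum_nodalWeight_mul_pow univ_nonempty hx.injOn,
    hsymmOn_inv_eq_sum_nodalWeight_mul_inv_pow univ_nonempty hx.injOn fun i _ => hx0 i,
    ← mul_assoc, mul_sum, card_univ]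
  refine sum_congr rfl fun i _ => ?_
  have exponent : n + Fintype.card ι = n - r + (Fintype.card ι - 1) + (r + 1) := by
    have := Fintype.card_pos (α := ι)
    omega
  calc Lagrange.nodalWeight univ x i * x i ^ (n - r + (Fintype.card ι - 1))
      = Lagrange.nodalWeight univ x i * (x i ^ (n + Fintype.card ι) * (x i)⁻¹ ^ (r + 1)) := by
        rw [exponent, pow_add _ _ (r + 1), inv_pow, mul_inv_cancel_right₀ (pow_ne_zero _ (hx0 i))]
    _ = z * ((-1) ^ (Fintype.card ι - 1) * ∏ j, x j) *
          (Lagrange.nodalWeight univ x i * (x i)⁻¹ ^ (r + 1)) := by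
        rw [hbethe i]
        ring

/-- If the nonzero, pairwise distinct complex numbers `x_1, …, x_k` satisfy the
Bethe Ansatz equations `x_i^{n+k} = (-1)^{k-1} z e_k(x)`, then
`h_{n-r}(x) = z ⬝ h_r(x⁻¹)` for all `0 ≤ r ≤ n`. -/
theorem hsymm_duality_of_bethe (n k : ℕ) (hn : 1 ≤ n) (hk : 1 ≤ k) (z : ℂ)
    (x : Fin k → ℂ) (hx0 : ∀ i, x i ≠ 0) (hxd : Function.Injective x)
    (hbae : ∀ i, x i ^ (n + k) = (-1) ^ (k - 1) * z * ∏ j, x j)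
    (r : ℕ) (hr : r ≤ n) :
    hC x ((n : ℤ) - (r : ℤ)) = z * hC (fun i => (x i)⁻¹) (r : ℤ) := by
  have : Nonempty (Fin k) := ⟨⟨0, hk⟩⟩
  rw [← Nat.cast_sub hr, hC_natCast, hC_natCast, ← aeval_hsymm, ← aeval_hsymm]
  exact hsymm_duality_of_bethe_general hx0 hxd (by simpa using hbae) hr
end
end

section
/- Let n, k ≥ 1 and z ∈ ℂ, and let x = (x_1,…,x_k) ∈ ℂ^k have nonzero, pairwise distinct entries. Then x satisfies the Bethe Ansatz equations x_i^{n+k} = (−1)^{k−1} z·(x_1⋯x_k) for all i = 1,…,k if and only if h_{n+1}(x) = h_{n+2}(x) = ⋯ = h_{n+k−1}(x) = 0, h_{n+k}(x) + (−1)^k z·e_k(x) = 0, and h_n(x) = z. -/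
noncomputable section

open scoped BigOperators

/-!
With `H(t) = ∑ h_r t^r` and `P(X) = ∏ (X - x_i)`, the reversed polynomial `P*(t) = ∏ (1 - x_i t)`
satisfies `H P* = 1`. Put `k = deg P` and `c = (-1)^(k-1) z e_k`.

If every `x_i^(n+k)` equals `c`, then `P` divides `X^(n+k) - c`, with a quotient of degree `n`;
reversing, `H(t) (1 - c t^(n+k))` is a polynomial of degree at most `n`, so that
`h_(n+1) = ⋯ = h_(n+k-1) = 0` and `h_(n+k) = c`. Conversely, these `k` equations leave a single term
in the coefficient of `t^(n+k)` in `H(t) ∏_{j ≠ i} (1 - x_j t) = 1 / (1 - x_i t)`, which then says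
`x_i^(n+k) = h_(n+k)`. Finally, the coefficient of `t^(n+k)` in `H P* = 1` reads
`h_(n+k) + (-1)^k e_k h_n = 0`, which ties the value of `h_n` to that of `h_(n+k)`.
-/

section HsymmSeries

open MvPolynomial (aeval esymm hsymm)
open Lagrange (nodal)
open scoped Polynomial PowerSeries

section PowerSeries

variable {R : Type*} [CommRing R]

theorem mk_pow_mul_one_sub_C_mul_X (a : R) :
    (PowerSeries.mk (a ^ ·)) * (1 - PowerSeries.C a * PowerSeries.X) = 1 := by
  simpa [PowerSeries.rescale_mk, PowerSeries.rescale_X] using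
    congrArg (PowerSeries.rescale a) (PowerSeries.mk_one_mul_one_sub_eq_one R)

theorem coeff_mul_coe_of_gap {f : R⟦X⟧} {q : R[X]} {n k : ℕ} (hk : 0 < k)
    (hq : q.natDegree ≤ k) (hf : ∀ j, 0 < j → j < k → f.coeff (n + j) = 0) :
    (f * (q : R⟦X⟧)).coeff (n + k) =
      f.coeff (n + k) * q.coeff 0 + f.coeff n * q.coeff k := by
  simp only [PowerSeries.coeff_mul, Polynomial.coeff_coe]
  refine Finset.sum_eq_add_of_mem (n + k, 0) (n, k) (by simp) (by simp) (by simp [hk.ne']) ?_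
  rintro ⟨a, b⟩ hab ⟨hne, hne'⟩
  have hsum : a + b = n + k := Finset.HasAntidiagonal.mem_antidiagonal.mp hab
  simp only [ne_eq, Prod.mk.injEq] at hne hne'
  rcases lt_or_ge k b with hb | hb
  · rw [Polynomial.coeff_eq_zero_of_natDegree_lt (hq.trans_lt hb), mul_zero]
  · obtain rfl : a = n + (k - b) := by omega
    rw [hf _ (by omega) (by omega), zero_mul]

end PowerSeries

section Nodal

variable {σ R : Type*} [CommRing R]

theorem reverse_nodal (s : Finset σ) (x : σ → R) :
    (nodal s x).reverse = ∏ i ∈ s, (1 - Polynomial.C (x i) * Polynomial.X) := by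
  classical
  nontriviality R
  induction s using Finset.induction_on with
  | empty => simp [Polynomial.reverse]
  | insert i s hi ih =>
    have hlead :
        (Polynomial.X - Polynomial.C (x i)).leadingCoeff * (nodal s x).leadingCoeff ≠ 0 := by
      simp [Lagrange.nodal_monic.leadingCoeff]
    rw [Lagrange.nodal_insert_eq_nodal hi, Polynomial.reverse_mul hlead, ih, Finset.prod_insert hi]
    simp [Polynomial.reverse, Polynomial.reflect_sub]

theorem natDegree_reverse_nodal_le (s : Finset σ) (x : σ → R) :
    (nodal s x).reverse.natDegree ≤ s.card := by
  nontriviality R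
  exact (Polynomial.reverse_natDegree_le _).trans_eq Lagrange.natDegree_nodal

theorem coeff_zero_reverse_nodal (s : Finset σ) (x : σ → R) :
    (nodal s x).reverse.coeff 0 = 1 := by
  rw [Polynomial.coeff_zero_reverse, Lagrange.nodal_monic.leadingCoeff]

theorem coeff_card_reverse_nodal (s : Finset σ) (x : σ → R) :
    (nodal s x).reverse.coeff s.card = (-1) ^ s.card * ∏ i ∈ s, x i := by
  nontriviality R
  rw [Polynomial.coeff_reverse, Lagrange.natDegree_nodal, Polynomial.revAt_le le_rfl, Nat.sub_self,
    Polynomial.coeff_zero_eq_eval_zero, Lagrange.eval_nodal]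
  simp only [zero_sub, Finset.prod_neg]

theorem nodal_dvd_of_forall_eval_eq_zero [IsDomain R] {s : Finset σ} {x : σ → R}
    (hx : Set.InjOn x s) {p : R[X]} (hp : ∀ i ∈ s, p.eval (x i) = 0) : nodal s x ∣ p := by
  rcases eq_or_ne p 0 with rfl | hp0
  · exact dvd_zero _
  have hle : s.val.map x ≤ p.roots := by
    rw [Multiset.le_iff_subset (s.nodup.map_on hx)]
    intro a ha
    obtain ⟨i, hi, rfl⟩ := Multiset.mem_map.mp ha
    exact (Polynomial.mem_roots hp0).mpr (hp i hi)
  simpa [Lagrange.nodal_eq, Multiset.map_map] using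
    (Multiset.prod_X_sub_C_dvd_iff_le_roots hp0 _).mpr hle

theorem reverse_X_pow_sub_C (m : ℕ) (c : R) :
    (Polynomial.X ^ m - Polynomial.C c).reverse = 1 - Polynomial.C c * Polynomial.X ^ m := by
  nontriviality R
  simp [Polynomial.reverse, Polynomial.reflect_sub]

end Nodal

variable {σ R : Type*} [Fintype σ] [CommRing R]

theorem aeval_esymm_card (x : σ → R) : aeval x (esymm σ R (Fintype.card σ)) = ∏ i, x i := by
  simp [esymm, ← Finset.card_univ, Finset.powersetCard_self]

variable [DecidableEq σ]

theorem aeval_hsymm_eq_sum_piAntidiag (x : σ → R) (r : ℕ) :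
    aeval x (hsymm σ R r) = ∑ p ∈ Finset.univ.piAntidiag r, ∏ i, x i ^ p i := by
  rw [← Finset.map_sym_eq_piAntidiag, Finset.sum_map, Finset.sym_univ, hsymm, map_sum]
  refine Finset.sum_congr rfl fun s _ => ?_
  calc aeval x (s.1.map MvPolynomial.X).prod
      = ∏ i ∈ s.1.toFinset, x i ^ s.1.count i := by
        simp [Finset.prod_multiset_map_count]
    _ = ∏ i, x i ^ s.1.count i :=
        Finset.prod_subset (Finset.subset_univ _) fun i _ hi => by
          rw [Multiset.count_eq_zero.mpr (by simpa using hi), pow_zero]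

/-- The generating series `H(t) = ∑ h_r(x) t^r` of the complete homogeneous symmetric polynomials
evaluated at `x`. -/
def hsymmSeries (x : σ → R) : R⟦X⟧ :=
  .mk fun r => aeval x (hsymm σ R r)

@[simp]
theorem coeff_hsymmSeries (x : σ → R) (r : ℕ) :
    (hsymmSeries x).coeff r = aeval x (hsymm σ R r) :=
  PowerSeries.coeff_mk _ _

theorem hsymmSeries_eq_prod (x : σ → R) : hsymmSeries x = ∏ i, .mk (x i ^ ·) := by
  ext r
  rw [coeff_hsymmSeries, aeval_hsymm_eq_sum_piAntidiag, PowerSeries.coeff_prod]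
  simp only [PowerSeries.coeff_mk]
  refine Finset.sum_nbij' Finsupp.equivFunOnFinite.symm (fun l => l) ?_ ?_ ?_ ?_ ?_ <;>
    simp [Finset.mem_finsuppAntidiag]

theorem hsymmSeries_mul_reverse_nodal (x : σ → R) (s : Finset σ) :
    hsymmSeries x * ((nodal s x).reverse : R⟦X⟧) = ∏ i ∈ sᶜ, .mk (x i ^ ·) := by
  have hprod : ((nodal s x).reverse : R⟦X⟧) =
      ∏ i ∈ s, (1 - PowerSeries.C (x i) * PowerSeries.X) := by
    rw [reverse_nodal, ← Polynomial.coeToPowerSeries.ringHom_apply, map_prod]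
    simp
  rw [hprod, hsymmSeries_eq_prod, ← Finset.prod_compl_mul_prod s, mul_assoc,
    ← Finset.prod_mul_distrib,
    Finset.prod_eq_one fun i _ => mk_pow_mul_one_sub_C_mul_X (x i), mul_one]

theorem hsymmSeries_mul_reverse_nodal_univ (x : σ → R) :
    hsymmSeries x * ((nodal Finset.univ x).reverse : R⟦X⟧) = 1 := by
  simpa using hsymmSeries_mul_reverse_nodal x Finset.univ

theorem pow_eq_aeval_hsymm_of_gap {x : σ → R} {n : ℕ}
    (hgap : ∀ j, 0 < j → j < Fintype.card σ → aeval x (hsymm σ R (n + j)) = 0) (i : σ) :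
    x i ^ (n + Fintype.card σ) = aeval x (hsymm σ R (n + Fintype.card σ)) := by
  have hcard : 0 < Fintype.card σ := Fintype.card_pos_iff.mpr ⟨i⟩
  have hdeg : (nodal {i}ᶜ x).reverse.natDegree < Fintype.card σ :=
    (natDegree_reverse_nodal_le _ x).trans_lt (Finset.card_lt_univ_of_notMem (x := i) (by simp))
  calc x i ^ (n + Fintype.card σ)
      = (hsymmSeries x * ((nodal {i}ᶜ x).reverse : R⟦X⟧)).coeff (n + Fintype.card σ) := by
        simp [hsymmSeries_mul_reverse_nodal]
    _ = aeval x (hsymm σ R (n + Fintype.card σ)) := by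
        rw [coeff_mul_coe_of_gap hcard hdeg.le (by simpa using hgap), coeff_zero_reverse_nodal,
          Polynomial.coeff_eq_zero_of_natDegree_lt hdeg, coeff_hsymmSeries, mul_one, mul_zero,
          add_zero]

theorem aeval_hsymm_add_card_of_gap [Nonempty σ] {x : σ → R} {n : ℕ}
    (hgap : ∀ j, 0 < j → j < Fintype.card σ → aeval x (hsymm σ R (n + j)) = 0) :
    aeval x (hsymm σ R (n + Fintype.card σ)) =
      -((-1) ^ Fintype.card σ * aeval x (hsymm σ R n) * ∏ i, x i) := by
  have hcoeff := coeff_mul_coe_of_gap Fintype.card_pos (natDegree_reverse_nodal_le Finset.univ x)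
    (f := hsymmSeries x) (n := n) (by simpa using hgap)
  rw [hsymmSeries_mul_reverse_nodal_univ, coeff_zero_reverse_nodal, ← Finset.card_univ,
    coeff_card_reverse_nodal, PowerSeries.coeff_one, if_neg (by simp)] at hcoeff
  simp only [coeff_hsymmSeries] at hcoeff
  rw [← Finset.card_univ]
  linear_combination -hcoeff

variable [IsDomain R]

theorem exists_hsymmSeries_mul_eq_coe {x : σ → R} (hx : Function.Injective x) {n : ℕ} {c : R}
    (h : ∀ i, x i ^ (n + Fintype.card σ) = c) :
    ∃ q : R[X], q.natDegree ≤ n ∧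
      hsymmSeries x * (1 - PowerSeries.C c * PowerSeries.X ^ (n + Fintype.card σ)) =
        (q : R⟦X⟧) := by
  obtain ⟨q, hq⟩ := nodal_dvd_of_forall_eval_eq_zero (s := Finset.univ) hx.injOn
    (p := Polynomial.X ^ (n + Fintype.card σ) - Polynomial.C c) (by simp [h])
  refine ⟨q.reverse, q.reverse_natDegree_le.trans ?_, ?_⟩
  · rcases eq_or_ne q 0 with rfl | hq0
    · simp
    have hdeg := congrArg Polynomial.natDegree hq
    rw [Polynomial.natDegree_X_pow_sub_C, Lagrange.nodal_monic.natDegree_mul' hq0,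
      Lagrange.natDegree_nodal, Finset.card_univ] at hdeg
    omega
  · have hrev := congrArg Polynomial.reverse hq
    rw [reverse_X_pow_sub_C, Polynomial.reverse_mul_of_domain] at hrev
    calc hsymmSeries x * (1 - PowerSeries.C c * PowerSeries.X ^ (n + Fintype.card σ))
        = hsymmSeries x * (((nodal Finset.univ x).reverse * q.reverse : R[X]) : R⟦X⟧) := by
          simp [← hrev]
      _ = q.reverse := by
          rw [Polynomial.coe_mul, ← mul_assoc, hsymmSeries_mul_reverse_nodal_univ, one_mul]

variable [Nonempty σ]

theorem forall_pow_eq_iff_aeval_hsymm {x : σ → R} (hx : Function.Injective x) (n : ℕ) (c : R) :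
    (∀ i, x i ^ (n + Fintype.card σ) = c) ↔
      (∀ j, 0 < j → j < Fintype.card σ → aeval x (hsymm σ R (n + j)) = 0) ∧
        aeval x (hsymm σ R (n + Fintype.card σ)) = c := by
  refine ⟨fun h => ?_, fun ⟨hgap, hc⟩ i => (pow_eq_aeval_hsymm_of_gap hgap i).trans hc⟩
  obtain ⟨q, hdeg, hq⟩ := exists_hsymmSeries_mul_eq_coe hx h
  have hcoeff (j : ℕ) (hj : 0 < j) :
      aeval x (hsymm σ R (n + j)) =
        if Fintype.card σ ≤ j then c * aeval x (hsymm σ R (j - Fintype.card σ)) else 0 := by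
    have hzero : q.coeff (n + j) = 0 := Polynomial.coeff_eq_zero_of_natDegree_lt (by omega)
    rw [← Polynomial.coeff_coe, ← hq, mul_sub, mul_one, mul_left_comm, map_sub,
      PowerSeries.coeff_C_mul, PowerSeries.coeff_mul_X_pow', sub_eq_zero] at hzero
    simpa [Nat.add_sub_add_left] using hzero
  refine ⟨fun j hj hjk => ?_, ?_⟩
  · rw [hcoeff j hj, if_neg hjk.not_ge]
  · rw [hcoeff _ Fintype.card_pos, if_pos le_rfl, Nat.sub_self, MvPolynomial.hsymm_zero, map_one,
      mul_one]

theorem bethe_iff_hsymm_relations_general (n : ℕ) (z : R) {x : σ → R} (hx0 : ∀ i, x i ≠ 0)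
    (hxd : Function.Injective x) :
    (∀ i, x i ^ (n + Fintype.card σ) = (-1) ^ (Fintype.card σ - 1) * z * ∏ j, x j) ↔
      (∀ j, 0 < j → j < Fintype.card σ → aeval x (hsymm σ R (n + j)) = 0) ∧
        aeval x (hsymm σ R (n + Fintype.card σ)) +
          (-1) ^ Fintype.card σ * z * aeval x (esymm σ R (Fintype.card σ)) = 0 ∧
        aeval x (hsymm σ R n) = z := by
  have hsign : (-1 : R) ^ Fintype.card σ = -(-1) ^ (Fintype.card σ - 1) := by
    rw [← pow_sub_one_mul Fintype.card_ne_zero, mul_neg_one]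
  rw [forall_pow_eq_iff_aeval_hsymm hxd, aeval_esymm_card]
  refine and_congr_right fun hgap => ?_
  rw [aeval_hsymm_add_card_of_gap hgap, hsign]
  have hne : (-1) ^ (Fintype.card σ - 1) * ∏ i, x i ≠ 0 :=
    mul_ne_zero (by simp) (Finset.prod_ne_zero_iff.mpr fun i _ => hx0 i)
  constructor
  · intro h
    have hz : aeval x (hsymm σ R n) = z := mul_left_cancel₀ hne (by linear_combination h)
    exact ⟨by rw [hz]; ring, hz⟩
  · rintro ⟨-, rfl⟩
    ring

end HsymmSeries

theorem hC_natCast_s6 {m : ℕ} (x : Fin m → ℂ) (r : ℕ) :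
    hC x r = MvPolynomial.aeval x (MvPolynomial.hsymm (Fin m) ℂ r) := by
  rw [aeval_hsymm_eq_sum_piAntidiag, hC, if_pos (Int.natCast_nonneg r), Int.toNat_natCast]
  refine Finset.sum_congr ?_ fun _ _ => rfl
  ext p
  have hle (hp : ∑ i, p i = r) (i : Fin m) : p i ≤ r :=
    hp ▸ Finset.single_le_sum (fun _ _ => Nat.zero_le _) (Finset.mem_univ i)
  simpa using hle

theorem eC_natCast {m : ℕ} (x : Fin m → ℂ) (r : ℕ) :
    eC x r = MvPolynomial.aeval x (MvPolynomial.esymm (Fin m) ℂ r) := by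
  simp [eC, MvPolynomial.esymm]

/-- For nonzero, pairwise distinct complex numbers `x_1, …, x_k`, the
Bethe Ansatz equations `x_i^{n+k} = (-1)^{k-1} z e_k(x)` hold for all `i` if and only if
`h_{n+1}(x) = ⋯ = h_{n+k-1}(x) = 0`, `h_{n+k}(x) + (-1)^k z e_k(x) = 0` and `h_n(x) = z`. -/
theorem bethe_iff_hsymm_relations (n k : ℕ) (hn : 1 ≤ n) (hk : 1 ≤ k) (z : ℂ)
    (x : Fin k → ℂ) (hx0 : ∀ i, x i ≠ 0) (hxd : Function.Injective x) :
    (∀ i, x i ^ (n + k) = (-1) ^ (k - 1) * z * ∏ j, x j) ↔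
      ((∀ j : ℕ, 1 ≤ j → j ≤ k - 1 → hC x ((n : ℤ) + (j : ℤ)) = 0) ∧
        hC x ((n : ℤ) + (k : ℤ)) + (-1) ^ k * z * eC x (k : ℤ) = 0 ∧
        hC x (n : ℤ) = z) := by
  have : Nonempty (Fin k) := ⟨⟨0, hk⟩⟩
  simpa only [← Nat.cast_add, hC_natCast_s6, eC_natCast, Nat.le_sub_one_iff_lt hk,
    Order.one_le_iff_pos, Fintype.card_fin] using bethe_iff_hsymm_relations_general n z hx0 hxd
end
end

section
/- Let n, k ≥ 1 with n + k > 2, let z ∈ ℂ∖{0}, and fix t ∈ ℂ with t^n = z. For σ ∈ 𝔓_{≤n−1,k} define x_σ ∈ ℂ^k by (x_σ)_j = t·ζ^{|σ|/n + I^{(k)}(σ^t)_j} for j = 1,…,k. Then: (i) the entries of x_σ are nonzero and pairwise distinct and x_σ satisfies the Bethe Ansatz equations x_i^{n+k} = (−1)^{k−1} z·(x_1⋯x_k) for all i; (ii) the assignment σ ↦ (orbit of x_σ under permutation of coordinates) is a bijection from 𝔓_{≤n−1,k} onto the set of orbits, under the permutation action of the symmetric group S_k on ℂ^k, of the solutions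 of the Bethe Ansatz equations with nonzero, pairwise distinct entries; (iii) multiplication of all coordinates by e^{2πi/n} maps this solution set to itself. -/
noncomputable section

open scoped BigOperators

/-- `𝔓_{≤r,c}`: partitions with at most `r` parts, each part at most `c`,
encoded as weakly decreasing functions `Fin r → Fin (c+1)`. -/
abbrev PartBox (r c : ℕ) :=
  {f : Fin r → Fin (c + 1) // ∀ i j : Fin r, i ≤ j → (f j : ℕ) ≤ (f i : ℕ)}

/-- The parts of a partition, as natural numbers. -/
def partVal {r c : ℕ} (σ : PartBox r c) (i : Fin r) : ℕ := (σ.1 i : ℕ)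

/-- `|σ|`, the number of boxes of the partition. -/
def partSum {r c : ℕ} (σ : PartBox r c) : ℕ := ∑ i, partVal σ i

/-- The transpose (conjugate) partition of `μ`, with `c` parts: `μ^t_j = #{i | μ_i ≥ j}`
(here `j` is the 0-based index, so this computes `μ^t_{j+1}`). -/
def transpGen {r : ℕ} (μ : Fin r → ℕ) (c : ℕ) : Fin c → ℕ :=
  fun j => (Finset.univ.filter fun i : Fin r => (j : ℕ) + 1 ≤ μ i).card

/-- `I^{(m)}(τ)_j = (m+1)/2 + τ_{m+1-j} - (m+1-j)` (1-based `j`), as a rational number. -/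
def Imap (m : ℕ) (τ : Fin m → ℕ) (j : Fin m) : ℚ :=
  ((m : ℚ) + 1) / 2 + (τ j.rev : ℚ) - ((m : ℚ) - (j : ℚ))

/-- `ζ^t = exp(2πι t/N)` for rational exponents `t`. -/
def zeta (N : ℕ) (t : ℚ) : ℂ :=
  Complex.exp (2 * Real.pi * Complex.I * (t : ℂ) / (N : ℂ))

/-- The set of solutions of the Bethe Ansatz equations having nonzero,
pairwise distinct entries. -/
def BAESol (n k : ℕ) (z : ℂ) : Set (Fin k → ℂ) :=
  {x | (∀ i, x i ≠ 0) ∧ Function.Injective x ∧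
    ∀ i, x i ^ (n + k) = (-1) ^ (k - 1) * z * ∏ j, x j}

/-- The Bethe root `x_σ` attached to a partition `σ ∈ 𝔓_{≤ n-1,k}`:
`(x_σ)_j = t · ζ^{|σ|/n + I^{(k)}(σ^t)_j}` where `t^n = z`. -/
def betheRoot (n k : ℕ) (t : ℂ) (σ : PartBox (n - 1) k) (j : Fin k) : ℂ :=
  t * zeta (n + k) ((partSum σ : ℚ) / (n : ℚ) + Imap k (transpGen (partVal σ) k) j)

/-!
Put `N = n + k` and write a tuple with nonzero entries as `x j = t * ζ ^ u j`. The Bethe Ansatz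
equations say that `u i - (k - 1) / 2 - (∑ u) / N` is an integer for every `i`, so the exponents are
determined by an integer tuple `a`. The freedom of changing each `u j` by a multiple of `N` means
that two integer tuples encode the same solution exactly when they differ by
`N m - (∑ m) (1, …, 1)` for an integer tuple `m`, and the entries of the solution are distinct
exactly when those of `a` are distinct modulo `N`.

Each such class contains exactly one tuple with values in `{0, …, N - 2}`. Indeed, translating `a`
by `P` and reducing modulo `N` stays in the class when `∑ ⌊(a j + P) / N⌋ = P`. By distinctness
modulo `N`, a unit translation carries at most one entry past a multiple of `N`, so
`P - ∑ ⌊(a j + P) / N⌋` is monotone in `P` with steps `0` or `1`, and it grows by `n` per period.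
It therefore has a last zero, and the zero `P` is the last one precisely when no entry reduces to
`N - 1`. Finally, the `k`-element subsets of `{0, …, N - 2}` are the sets of beta numbers of the
transposes of partitions in `𝔓_{≤ n-1,k}`.
-/

open Function.Periodic (qParam invQParam qParam_ne_zero qParam_right_inv)

section Transpose

variable {r : ℕ} {μ : Fin r → ℕ} {c : ℕ}

lemma transpGen_antitone (μ : Fin r → ℕ) (c : ℕ) : Antitone (transpGen μ c) := fun _ _ hij =>
  Finset.card_le_card <| Finset.monotone_filter_right _ fun _ _ h =>
    (Nat.succ_le_succ (Fin.le_def.1 hij)).trans h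

lemma transpGen_le (μ : Fin r → ℕ) (c : ℕ) (j : Fin c) : transpGen μ c j ≤ r :=
  (Finset.card_le_univ _).trans_eq (Fintype.card_fin r)

lemma lt_transpGen_iff (hμ : Antitone μ) {i : Fin r} {j : Fin c} :
    (i : ℕ) < transpGen μ c j ↔ (j : ℕ) < μ i :=
  Fin.lt_card_filter_univ_iff_apply_of_imp (fun i => (j : ℕ) + 1 ≤ μ i)
    fun _ _ h h' => h'.trans (hμ h)

lemma transpGen_transpGen (hμ : Antitone μ) (hc : ∀ i, μ i ≤ c) :
    transpGen (transpGen μ c) r = μ := by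
  funext i
  calc transpGen (transpGen μ c) r i
      = (Finset.univ.filter fun j : Fin c => (j : ℕ) < μ i).card := by
        rw [transpGen]
        simp only [Nat.succ_le_iff, lt_transpGen_iff hμ]
    _ = μ i := by rw [Fin.card_filter_val_lt, min_eq_right (hc i)]

lemma sum_transpGen (hc : ∀ i, μ i ≤ c) : ∑ j, transpGen μ c j = ∑ i, μ i := by
  simp only [transpGen, Nat.succ_le_iff, Finset.card_filter]
  rw [Finset.sum_comm]
  refine Finset.sum_congr rfl fun i _ => ?_
  rw [← Finset.card_filter, Fin.card_filter_val_lt, min_eq_right (hc i)]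

end Transpose

section BetaNumbers

variable {r k : ℕ}

lemma partVal_le (σ : PartBox r k) (i : Fin r) : partVal σ i ≤ k :=
  Nat.le_of_lt_succ (σ.1 i).2

lemma partVal_antitone (σ : PartBox r k) : Antitone (partVal σ) := σ.2

lemma partVal_injective : Function.Injective (partVal : PartBox r k → Fin r → ℕ) :=
  fun _ _ h => Subtype.ext <| funext fun i => Fin.ext (congrFun h i)

lemma exists_partVal_eq {μ : Fin r → ℕ} (hμ : Antitone μ) (hk : ∀ i, μ i ≤ k) :
    ∃ σ : PartBox r k, partVal σ = μ :=
  ⟨⟨fun i => ⟨μ i, Nat.lt_succ_of_le (hk i)⟩, fun _ _ h => hμ h⟩, rfl⟩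

/-- The beta numbers of the transpose of `σ` (padded to `k` parts), in increasing order. They encode
`σ` as a `k`-element subset of `{0, …, r + k - 1}`. -/
def betaNum (σ : PartBox r k) (j : Fin k) : ℤ :=
  j + transpGen (partVal σ) k j.rev

lemma betaNum_strictMono (σ : PartBox r k) : StrictMono (betaNum σ) := fun i j hij => by
  have := transpGen_antitone (partVal σ) k (Fin.rev_le_rev.2 hij.le)
  have : (i : ℕ) < j := hij
  unfold betaNum
  omega

lemma betaNum_mem_Ico (σ : PartBox r k) (j : Fin k) : betaNum σ j ∈ Set.Ico (0 : ℤ) (r + k) := by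
  have := transpGen_le (partVal σ) k j.rev
  rw [Set.mem_Ico, betaNum]
  omega

lemma sum_fin_val_mul_two (k : ℕ) : (∑ j : Fin k, (j : ℤ)) * 2 = k * (k - 1) := by
  cases k with
  | zero => simp
  | succ k =>
    have gauss_sum := Finset.sum_range_id_mul_two (k + 1)
    rw [← Fin.sum_univ_eq_sum_range, Nat.add_sub_cancel] at gauss_sum
    rw [Nat.cast_succ, add_sub_cancel_right]
    exact_mod_cast gauss_sum

lemma sum_betaNum_mul_two (σ : PartBox r k) :
    (∑ j, betaNum σ j) * 2 = 2 * partSum σ + k * (k - 1) := by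
  have sum_transp : ∑ j : Fin k, (transpGen (partVal σ) k j.rev : ℤ) = partSum σ := by
    rw [partSum, ← sum_transpGen (partVal_le σ), Nat.cast_sum]
    exact Equiv.sum_comp Fin.revPerm fun j => (transpGen (partVal σ) k j : ℤ)
  simp only [betaNum, Finset.sum_add_distrib]
  linear_combination sum_fin_val_mul_two k + 2 * sum_transp

lemma betaNum_injective : Function.Injective (betaNum : PartBox r k → Fin k → ℤ) := by
  intro σ τ h
  have transp_eq : transpGen (partVal σ) k = transpGen (partVal τ) k := by
    funext j
    simpa [betaNum] using congrFun h j.rev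
  apply partVal_injective
  rw [← transpGen_transpGen (partVal_antitone σ) (partVal_le σ), transp_eq,
    transpGen_transpGen (partVal_antitone τ) (partVal_le τ)]

lemma monotone_sub_val_of_strictMono {a : Fin k → ℤ} (ha : StrictMono a) :
    Monotone fun j => a j - (j : ℤ) := by
  rw [monotone_iff_forall_covBy]
  intro i j hij
  have := ha hij.lt
  have : (i : ℕ) + 1 = j := Nat.covBy_iff_add_one_eq.1 (Fin.covBy_iff.1 hij)
  omega

lemma exists_betaNum_eq {a : Fin k → ℤ} (ha : StrictMono a)
    (hmem : ∀ j, a j ∈ Set.Ico (0 : ℤ) (r + k)) : ∃ σ : PartBox r k, betaNum σ = a := by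
  have gap_mono := monotone_sub_val_of_strictMono ha
  have gap_nonneg (j : Fin k) : 0 ≤ a j - j := by
    have first := gap_mono (show ⟨0, j.pos⟩ ≤ j from Nat.zero_le _)
    have := (hmem ⟨0, j.pos⟩).1
    dsimp only at first
    omega
  have gap_le (j : Fin k) : a j - j ≤ r := by
    have last := gap_mono (show j ≤ ⟨k - 1, Nat.sub_one_lt_of_lt j.2⟩ from Nat.le_sub_one_of_lt j.2)
    have := (hmem ⟨k - 1, Nat.sub_one_lt_of_lt j.2⟩).2
    dsimp only at last
    omega
  let ν : Fin k → ℕ := fun j => (a j.rev - (j.rev : ℕ)).toNat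
  have ν_antitone : Antitone ν := fun i j hij =>
    Int.toNat_le_toNat (gap_mono (Fin.rev_le_rev.2 hij))
  have ν_le (j : Fin k) : ν j ≤ r := Int.toNat_le.2 (gap_le j.rev)
  obtain ⟨σ, hσ⟩ := exists_partVal_eq (transpGen_antitone ν r) (transpGen_le ν r)
  refine ⟨σ, funext fun j => ?_⟩
  rw [betaNum, hσ, transpGen_transpGen ν_antitone ν_le]
  have := gap_nonneg j
  simp only [ν, Fin.rev_rev]
  omega

end BetaNumbers

lemma existsUnique_eq_zero_and_succ_eq_one_of_monotone {f : ℤ → ℤ} (hf : Monotone f)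
    (hstep : ∀ P, f (P + 1) ≤ f P + 1) (hneg : ∃ P, f P ≤ 0) (hpos : ∃ P, 0 < f P) :
    ∃! P, f P = 0 ∧ f (P + 1) = 1 := by
  obtain ⟨B, hB⟩ := hpos
  obtain ⟨P, hP, hmax⟩ := Int.exists_greatest_of_bdd (P := fun P => f P ≤ 0)
    ⟨B, fun Q hQ => (hf.reflect_lt (hQ.trans_lt hB)).le⟩ hneg
  have hsucc : 0 < f (P + 1) := not_le.1 fun h => (lt_add_one P).not_ge (hmax _ h)
  have := hstep P
  refine ⟨P, ⟨by omega, by omega⟩, fun Q ⟨hQ, hQ_succ⟩ => le_antisymm (hmax Q hQ.le) ?_⟩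
  have : f P < f (Q + 1) := by rw [hQ_succ]; omega
  exact Int.lt_add_one_iff.1 (hf.reflect_lt this)

lemma add_one_ediv_eq_ite {N : ℤ} (hN : 0 < N) (x : ℤ) :
    (x + 1) / N = x / N + if N ∣ x + 1 then 1 else 0 := by
  have hdiv := Int.mul_ediv_add_emod x N
  have := Int.emod_nonneg x hN.ne'
  have := Int.emod_lt_of_pos x hN
  rw [Int.ediv_eq_iff_of_pos hN]
  split_ifs with h
  · have : x % N = N - 1 := by
      have : N ∣ x % N + 1 := by
        rw [show x % N + 1 = x + 1 - N * (x / N) by linarith]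
        exact h.sub (dvd_mul_right _ _)
      linarith [Int.le_of_dvd (by omega) this]
    constructor <;> linarith
  · have : x % N ≠ N - 1 := fun hr => h ⟨x / N + 1, by linarith⟩
    have : x % N + 1 < N := by omega
    constructor <;> linarith

section LatticeEquiv

variable {ι : Type*} [Fintype ι] {N : ℤ} {a b : ι → ℤ}

/-- `P` minus the number of times the points `a j` pass a multiple of `N` when all of them are
translated by `P`. -/
def windingDefect (N : ℤ) (a : ι → ℤ) (P : ℤ) : ℤ := P - ∑ j, (a j + P) / N

lemma windingDefect_add_one (hN : 0 < N) (a : ι → ℤ) (P : ℤ) :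
    windingDefect N a (P + 1) =
      windingDefect N a P + 1 - (Finset.univ.filter fun j => N ∣ a j + P + 1).card := by
  simp only [windingDefect, ← add_assoc, add_one_ediv_eq_ite hN, Finset.sum_add_distrib,
    Finset.sum_boole]
  ring

lemma windingDefect_mul (hN : N ≠ 0) (a : ι → ℤ) (c : ℤ) :
    windingDefect N a (N * c) = windingDefect N a 0 + c * (N - Fintype.card ι) := by
  simp only [windingDefect, Int.add_mul_ediv_left _ _ hN, Finset.sum_add_distrib,
    Finset.sum_const, Finset.card_univ, add_zero, nsmul_eq_mul]
  ring

lemma card_filter_dvd_add_le_one (ha : Function.Injective fun j => a j % N) (P : ℤ) :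
    (Finset.univ.filter fun j => N ∣ a j + P).card ≤ 1 := by
  simp only [Finset.card_le_one, Finset.mem_filter_univ]
  intro i hi j hj
  have mod_eq : a j ≡ a i [ZMOD N] := Int.modEq_iff_dvd.2 <| by simpa using dvd_sub hi hj
  exact ha mod_eq.symm

lemma windingDefect_monotone (hN : 0 < N) (ha : Function.Injective fun j => a j % N) :
    Monotone (windingDefect N a) := monotone_int_of_le_succ fun P => by
  have := card_filter_dvd_add_le_one ha (P + 1)
  simp only [windingDefect_add_one hN, ← add_assoc] at this ⊢
  omega

lemma existsUnique_shift (hN : Fintype.card ι < N) (ha : Function.Injective fun j => a j % N) :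
    ∃! P, ∑ j, (a j + P) / N = P ∧ ∀ j, ¬ N ∣ a j + P + 1 := by
  have N_pos : 0 < N := by omega
  suffices ∃! P, windingDefect N a P = 0 ∧ windingDefect N a (P + 1) = 1 by
    refine (existsUnique_congr fun P => ?_).1 this
    have zero_iff : windingDefect N a P = 0 ↔ ∑ j, (a j + P) / N = P :=
      sub_eq_zero.trans eq_comm
    rw [← zero_iff]
    exact and_congr_right fun hP => by
      simp [windingDefect_add_one N_pos, hP, Finset.filter_eq_empty_iff]
  set d := windingDefect N a 0
  have abs_le : |d| ≤ |d| * (N - Fintype.card ι) :=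
    le_mul_of_one_le_right (abs_nonneg d) (by omega)
  refine existsUnique_eq_zero_and_succ_eq_one_of_monotone (windingDefect_monotone N_pos ha)
    (fun P => ?_) ⟨N * -|d|, ?_⟩ ⟨N * (|d| + 1), ?_⟩
  · rw [windingDefect_add_one N_pos]
    omega
  · rw [windingDefect_mul N_pos.ne']
    linarith [le_abs_self d]
  · rw [windingDefect_mul N_pos.ne']
    linarith [neg_abs_le d]

/-- Equivalence of integer tuples modulo the lattice of vectors `N m - (∑ m) (1, …, 1)`; these are
the tuples that encode the same solution of the Bethe Ansatz equations
(`betheVector_eq_iff`). -/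
def LatticeEquiv (N : ℤ) (a b : ι → ℤ) : Prop :=
  ∃ m : ι → ℤ, ∀ j, a j = b j + N * m j - ∑ i, m i

lemma exists_latticeEquiv_mem_Ico (hN : Fintype.card ι < N)
    (ha : Function.Injective fun j => a j % N) :
    ∃ b, LatticeEquiv N a b ∧ ∀ j, b j ∈ Set.Ico 0 (N - 1) := by
  have N_pos : 0 < N := by omega
  obtain ⟨P, ⟨hsum, hdvd⟩, -⟩ := existsUnique_shift hN ha
  refine ⟨fun j => (a j + P) % N, ⟨fun j => (a j + P) / N, fun j => ?_⟩, fun j => ?_⟩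
  · rw [hsum, Int.emod_add_mul_ediv, add_sub_cancel_right]
  · have ne_last : (a j + P) % N ≠ N - 1 := fun h =>
      hdvd j ⟨(a j + P) / N + 1, by linarith [Int.mul_ediv_add_emod (a j + P) N]⟩
    have := Int.emod_lt_of_pos (a j + P) N_pos
    exact ⟨Int.emod_nonneg _ N_pos.ne', by dsimp only; omega⟩

lemma LatticeEquiv.eq_of_mem_Ico (hab : LatticeEquiv N a b) (hN : Fintype.card ι < N)
    (hb : Function.Injective b) (ha_mem : ∀ j, a j ∈ Set.Ico 0 (N - 1))
    (hb_mem : ∀ j, b j ∈ Set.Ico 0 (N - 1)) : a = b := by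
  have hb_mod : Function.Injective fun j => b j % N := by
    convert hb using 2 with j
    exact Int.emod_eq_of_lt (hb_mem j).1 (by linarith [(hb_mem j).2])
  have ediv_eq_zero {x : ℤ} (hx : x ∈ Set.Ico 0 (N - 1)) : x / N = 0 :=
    Int.ediv_eq_zero_of_lt hx.1 (by linarith [hx.2])
  have not_dvd {x : ℤ} (hx : x ∈ Set.Ico 0 (N - 1)) : ¬ N ∣ x + 1 := fun h =>
    (Int.le_of_dvd (by linarith [hx.1]) h).not_gt (by linarith [hx.2])
  obtain ⟨m, hm⟩ := hab
  have N_ne : N ≠ 0 := by omega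
  have shift_eq (j : ι) : b j + -∑ i, m i = a j + N * -m j := by rw [hm j]; ring
  have winding_eq (j : ι) : (b j + -∑ i, m i) / N = -m j := by
    rw [shift_eq, Int.add_mul_ediv_left _ _ N_ne, ediv_eq_zero (ha_mem j), zero_add]
  have sum_eq_zero : -∑ i, m i = 0 := by
    refine (existsUnique_shift hN hb_mod).unique ⟨?_, fun j => ?_⟩ ⟨?_, fun j => ?_⟩
    · simp only [winding_eq, Finset.sum_neg_distrib]
    · rw [shift_eq, add_right_comm, dvd_add_left (dvd_mul_right _ _)]
      exact not_dvd (ha_mem j)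
    · simp only [add_zero, ediv_eq_zero (hb_mem _), Finset.sum_const_zero]
    · rw [add_zero]
      exact not_dvd (hb_mem j)
  funext j
  have m_eq_zero := winding_eq j
  rw [sum_eq_zero, add_zero, ediv_eq_zero (hb_mem j), zero_eq_neg] at m_eq_zero
  rw [hm j, m_eq_zero, neg_eq_zero.1 sum_eq_zero, mul_zero, add_zero, sub_zero]

end LatticeEquiv

section QParam

variable {h : ℝ}

lemma qParam_add (h : ℝ) (x y : ℂ) : qParam h (x + y) = qParam h x * qParam h y := by
  simp only [qParam, mul_add, add_div, Complex.exp_add]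

lemma qParam_pow (h : ℝ) (x : ℂ) (m : ℕ) : qParam h x ^ m = qParam h (m * x) := by
  rw [qParam, qParam, ← Complex.exp_nat_mul]
  ring_nf

lemma prod_qParam {ι : Type*} (h : ℝ) (s : Finset ι) (f : ι → ℂ) :
    ∏ j ∈ s, qParam h (f j) = qParam h (∑ j ∈ s, f j) := by
  simp only [qParam, Finset.mul_sum, Finset.sum_div, Complex.exp_sum]

lemma qParam_half (hh : h ≠ 0) : qParam h (h / 2) = -1 := by
  rw [qParam, ← Complex.exp_pi_mul_I]
  congr 1
  field_simp [Complex.ofReal_ne_zero.2 hh]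

lemma qParam_eq_qParam_iff (hh : h ≠ 0) {x y : ℂ} :
    qParam h x = qParam h y ↔ ∃ m : ℤ, x = y + m * h := by
  have hh' : (h : ℂ) ≠ 0 := Complex.ofReal_ne_zero.2 hh
  rw [qParam, qParam, Complex.exp_eq_exp_iff_exists_int]
  refine exists_congr fun m => ?_
  rw [show 2 * Real.pi * Complex.I * y / h + m * (2 * Real.pi * Complex.I) =
      2 * Real.pi * Complex.I * (y + m * h) / h by field_simp,
    div_left_inj' hh', mul_right_inj' Complex.two_pi_I_ne_zero]

end QParam

lemma smul_mem_BAESol {n k : ℕ} {z w : ℂ} (hw0 : w ≠ 0) (hw : w ^ n = 1) {x : Fin k → ℂ}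
    (hx : x ∈ BAESol n k z) : (fun j => w * x j) ∈ BAESol n k z := by
  obtain ⟨x_ne, x_inj, x_eq⟩ := hx
  refine ⟨fun i => mul_ne_zero hw0 (x_ne i), (mul_right_injective₀ hw0).comp x_inj, fun i => ?_⟩
  rw [mul_pow, x_eq, pow_add, hw, Finset.prod_mul_distrib, Fin.prod_const]
  ring

section BetheVector

variable {n k : ℕ} {t : ℂ}

/-- The exponents `u` for which `t * ζ ^ u j` solves the Bethe Ansatz equations. They differ from an
integer tuple `a` by a constant that depends on `∑ a`; `a` is normalized so that `betaNum σ` gives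
the exponents of `betheRoot n k t σ`. -/
def betheExponent (n : ℕ) (a : Fin k → ℤ) (j : Fin k) : ℂ :=
  a j + (∑ i, (a i : ℂ)) / n - (k - 1) * (n + k) / (2 * n)

/-- The solution `t * ζ ^ u j` of the Bethe Ansatz equations, `u = betheExponent n a`, encoded by
an integer tuple `a`. -/
def betheVector (n : ℕ) (t : ℂ) (a : Fin k → ℤ) (j : Fin k) : ℂ :=
  t * qParam (n + k) (betheExponent n a j)

lemma mul_betheExponent (hn : n ≠ 0) (a : Fin k → ℤ) (j : Fin k) :
    n * betheExponent n a j = n * a j + ∑ i, (a i : ℂ) - (k - 1) * (n + k) / 2 := by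
  rw [betheExponent]
  field_simp

lemma mul_sum_betheExponent (hn : n ≠ 0) (a : Fin k → ℤ) :
    n * ∑ j, betheExponent n a j = (n + k) * (∑ j, (a j : ℂ) - k * (k - 1) / 2) := by
  rw [Finset.mul_sum]
  simp only [mul_betheExponent hn, Finset.sum_sub_distrib, Finset.sum_add_distrib, Fin.sum_const,
    nsmul_eq_mul, ← Finset.mul_sum]
  ring

lemma bethe_equation_iff (hn : n ≠ 0) (ht : t ≠ 0) (u : Fin k → ℂ) (i : Fin k) :
    (t * qParam (n + k) (u i)) ^ (n + k) =
        (-1) ^ (k - 1) * t ^ n * ∏ j, t * qParam (n + k) (u j) ↔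
      ∃ m : ℤ, (n + k) * u i = (n + k) * ((k - 1) / 2 + m) + ∑ j, u j := by
  have hN : (n + k : ℝ) ≠ 0 := by positivity
  have lhs_eq : (t * qParam (n + k) (u i)) ^ (n + k) =
      t ^ (n + k) * qParam (n + k) ((n + k) * u i) := by
    rw [mul_pow, qParam_pow, Nat.cast_add]
  have rhs_eq : (-1) ^ (k - 1) * t ^ n * ∏ j, t * qParam (n + k) (u j) =
      t ^ (n + k) * qParam (n + k) ((n + k) * (k - 1) / 2 + ∑ j, u j) := by
    rw [← qParam_half hN, qParam_pow, Finset.prod_mul_distrib, prod_qParam, Fin.prod_const,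
      qParam_add, pow_add, Nat.cast_pred i.pos]
    push_cast
    ring_nf
  rw [lhs_eq, rhs_eq, mul_right_inj' (pow_ne_zero _ ht), qParam_eq_qParam_iff hN]
  refine exists_congr fun m => ?_
  push_cast
  ring_nf

lemma forall_exists_int_iff_exists_betheExponent (hn : n ≠ 0) (u : Fin k → ℂ) :
    (∀ i, ∃ m : ℤ, (n + k) * u i = (n + k) * ((k - 1) / 2 + m) + ∑ j, u j) ↔
      ∃ a : Fin k → ℤ, u = betheExponent n a := by
  have hn0 : (n : ℂ) ≠ 0 := Nat.cast_ne_zero.2 hn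
  have hN : (n + k : ℂ) ≠ 0 := by norm_cast; omega
  constructor
  · intro hu
    choose m hm using hu
    have sum_u : n * ∑ j, u j = (n + k) * (∑ j, (m j : ℂ) + k * (k - 1) / 2) := by
      have := Fintype.sum_congr _ _ hm
      simp only [Finset.sum_add_distrib, ← Finset.mul_sum, Fin.sum_const, nsmul_eq_mul] at this
      linear_combination this
    refine ⟨fun j => m j + (k - 1), funext fun i => mul_left_cancel₀ (mul_ne_zero hN hn0) ?_⟩
    rw [mul_assoc _ _ (betheExponent _ _ _), mul_betheExponent hn]
    push_cast [Finset.sum_add_distrib, Fin.sum_const]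
    linear_combination n * hm i + sum_u
  · rintro ⟨a, rfl⟩ i
    refine ⟨a i - (k - 1), mul_left_cancel₀ hn0 ?_⟩
    push_cast
    linear_combination (n + k : ℂ) * mul_betheExponent hn a i - mul_sum_betheExponent hn a

lemma betheVector_equation (hn : n ≠ 0) (ht : t ≠ 0) (a : Fin k → ℤ) (i : Fin k) :
    betheVector n t a i ^ (n + k) = (-1) ^ (k - 1) * t ^ n * ∏ j, betheVector n t a j :=
  (bethe_equation_iff hn ht _ i).2
    ((forall_exists_int_iff_exists_betheExponent hn _).2 ⟨a, rfl⟩ i)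

lemma exists_betheVector_eq (hn : n ≠ 0) (ht : t ≠ 0) {x : Fin k → ℂ}
    (hx : x ∈ BAESol n k (t ^ n)) : ∃ a : Fin k → ℤ, betheVector n t a = x := by
  obtain ⟨x_ne, -, x_eq⟩ := hx
  have hN : (n + k : ℝ) ≠ 0 := by positivity
  let u : Fin k → ℂ := fun j => invQParam (n + k) (x j / t)
  have x_eq_u (j : Fin k) : x j = t * qParam (n + k) (u j) := by
    rw [qParam_right_inv hN (div_ne_zero (x_ne j) ht), mul_div_cancel₀ _ ht]
  simp only [x_eq_u, bethe_equation_iff hn ht] at x_eq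
  obtain ⟨a, ha⟩ := (forall_exists_int_iff_exists_betheExponent hn u).1 x_eq
  exact ⟨a, funext fun j => by rw [x_eq_u, ha, betheVector]⟩

lemma betheVector_apply_eq_iff (hn : n ≠ 0) (ht : t ≠ 0) {a b : Fin k → ℤ} {i j : Fin k} :
    betheVector n t a i = betheVector n t b j ↔
      ∃ m : ℤ, betheExponent n a i = betheExponent n b j + m * (n + k) := by
  have hN : (n + k : ℝ) ≠ 0 := by positivity
  rw [betheVector, betheVector, mul_right_inj' ht, qParam_eq_qParam_iff hN]
  push_cast
  rfl

lemma betheVector_eq_iff (hn : n ≠ 0) (ht : t ≠ 0) {a b : Fin k → ℤ} :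
    betheVector n t a = betheVector n t b ↔ LatticeEquiv (n + k) a b := by
  have hn0 : (n : ℂ) ≠ 0 := Nat.cast_ne_zero.2 hn
  have hN : (n + k : ℂ) ≠ 0 := by norm_cast; omega
  simp only [funext_iff, betheVector_apply_eq_iff hn ht, LatticeEquiv]
  rw [Classical.skolem]
  refine exists_congr fun m => ⟨fun h j => ?_, fun h j => mul_left_cancel₀ hn0 ?_⟩
  · have sum_eq : ∑ i, (a i : ℂ) = ∑ i, (b i : ℂ) + n * ∑ i, (m i : ℂ) := by
      have := Fintype.sum_congr _ _ h
      rw [Finset.sum_add_distrib, ← Finset.sum_mul] at this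
      refine mul_left_cancel₀ hN ?_
      linear_combination (n : ℂ) * this - mul_sum_betheExponent hn a + mul_sum_betheExponent hn b
    have : (a j : ℂ) = b j + (n + k) * m j - ∑ i, (m i : ℂ) := by
      refine mul_left_cancel₀ hn0 ?_
      linear_combination
        (n : ℂ) * h j - mul_betheExponent hn a j + mul_betheExponent hn b j - sum_eq
    exact_mod_cast this
  · have apply_eq (j : Fin k) : (a j : ℂ) = b j + (n + k) * m j - ∑ i, (m i : ℂ) := by
      exact_mod_cast h j
    have sum_eq := Fintype.sum_congr _ _ apply_eq
    simp only [Finset.sum_sub_distrib, Finset.sum_add_distrib, ← Finset.mul_sum, Fin.sum_const,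
      nsmul_eq_mul] at sum_eq
    linear_combination
      mul_betheExponent hn a j - mul_betheExponent hn b j + n * apply_eq j + sum_eq

lemma injective_betheVector_iff (hn : n ≠ 0) (ht : t ≠ 0) {a : Fin k → ℤ} :
    Function.Injective (betheVector n t a) ↔
      Function.Injective fun j => a j % (n + k : ℤ) := by
  refine forall₂_congr fun i j => imp_congr_left ?_
  calc betheVector n t a i = betheVector n t a j
      ↔ ∃ m : ℤ, (a i : ℂ) - a j = (n + k) * m := by
        rw [betheVector_apply_eq_iff hn ht]
        refine exists_congr fun m => ?_
        rw [betheExponent, betheExponent]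
        constructor <;> intro h <;> linear_combination h
    _ ↔ (n + k : ℤ) ∣ a i - a j := exists_congr fun m => by norm_cast
    _ ↔ a i % (n + k : ℤ) = a j % (n + k : ℤ) := Int.modEq_iff_dvd.symm.trans Int.modEq_comm

lemma betheVector_mem_BAESol_iff (hn : n ≠ 0) (ht : t ≠ 0) {a : Fin k → ℤ} :
    betheVector n t a ∈ BAESol n k (t ^ n) ↔ Function.Injective fun j => a j % (n + k : ℤ) := by
  rw [← injective_betheVector_iff hn ht]
  exact ⟨fun h => h.2.1, fun h =>
    ⟨fun _ => mul_ne_zero ht (qParam_ne_zero _), h, betheVector_equation hn ht a⟩⟩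

lemma betheVector_comp_perm (a : Fin k → ℤ) (π : Equiv.Perm (Fin k)) :
    betheVector n t (a ∘ π) = betheVector n t a ∘ π := by
  funext j
  simp only [betheVector, betheExponent, Function.comp_apply,
    Equiv.sum_comp π fun i => (a i : ℂ)]

end BetheVector

section BetheRoot

variable {n k : ℕ} {t : ℂ}

lemma betheRoot_eq_betheVector (hn : n ≠ 0) (σ : PartBox (n - 1) k) :
    betheRoot n k t σ = betheVector n t (betaNum σ) := by
  funext j
  have sum_eq : (∑ j, (betaNum σ j : ℂ)) * 2 = 2 * partSum σ + k * (k - 1) := by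
    exact_mod_cast sum_betaNum_mul_two σ
  have exponent_eq : betheExponent n (betaNum σ) j =
      (((partSum σ : ℚ) / n + Imap k (transpGen (partVal σ) k) j : ℚ) : ℂ) := by
    rw [betheExponent, eq_div_of_mul_eq two_ne_zero sum_eq, Imap, betaNum]
    push_cast
    field
  rw [betheRoot, betheVector, exponent_eq, zeta, qParam]
  push_cast
  rfl

lemma betaNum_mem_Ico_pred (hn : n ≠ 0) (σ : PartBox (n - 1) k) (j : Fin k) :
    betaNum σ j ∈ Set.Ico (0 : ℤ) (n + k - 1) := by
  have := betaNum_mem_Ico σ j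
  rwa [Nat.cast_pred (Nat.pos_of_ne_zero hn), sub_add_eq_add_sub] at this

lemma betheRoot_mem_BAESol (hn : n ≠ 0) (ht : t ≠ 0) (σ : PartBox (n - 1) k) :
    betheRoot n k t σ ∈ BAESol n k (t ^ n) := by
  rw [betheRoot_eq_betheVector hn, betheVector_mem_BAESol_iff hn ht]
  convert (betaNum_strictMono σ).injective using 2 with j
  have := betaNum_mem_Ico_pred hn σ j
  exact Int.emod_eq_of_lt this.1 (by linarith [this.2])

lemma exists_eq_betheRoot_comp_perm (hn : n ≠ 0) (ht : t ≠ 0) {x : Fin k → ℂ}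
    (hx : x ∈ BAESol n k (t ^ n)) :
    ∃ (σ : PartBox (n - 1) k) (π : Equiv.Perm (Fin k)), x = betheRoot n k t σ ∘ π := by
  obtain ⟨a, rfl⟩ := exists_betheVector_eq hn ht hx
  obtain ⟨b, hab, hb_mem⟩ := exists_latticeEquiv_mem_Ico (N := n + k)
    (by rw [Fintype.card_fin]; omega) ((betheVector_mem_BAESol_iff hn ht).1 hx)
  rw [(betheVector_eq_iff hn ht).2 hab] at hx ⊢
  have b_inj : Function.Injective b :=
    Function.Injective.of_comp (f := (· % (n + k : ℤ))) ((betheVector_mem_BAESol_iff hn ht).1 hx)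
  have sorted : StrictMono (b ∘ Tuple.sort b) :=
    (Tuple.monotone_sort b).strictMono_of_injective (b_inj.comp (Equiv.injective _))
  obtain ⟨σ, hσ⟩ := exists_betaNum_eq (r := n - 1) sorted fun j => by
    rw [Nat.cast_pred (Nat.pos_of_ne_zero hn), sub_add_eq_add_sub]
    exact hb_mem _
  refine ⟨σ, (Tuple.sort b).symm, ?_⟩
  rw [betheRoot_eq_betheVector hn, hσ, ← betheVector_comp_perm, Function.comp_assoc,
    Equiv.self_comp_symm, Function.comp_id]

lemma eq_of_betheRoot_comp_perm_eq (hn : n ≠ 0) (ht : t ≠ 0) {σ τ : PartBox (n - 1) k}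
    {π : Equiv.Perm (Fin k)} (h : betheRoot n k t σ ∘ π = betheRoot n k t τ) : σ = τ := by
  rw [betheRoot_eq_betheVector hn, betheRoot_eq_betheVector hn, ← betheVector_comp_perm,
    betheVector_eq_iff hn ht] at h
  have betaNum_eq : betaNum σ ∘ π = betaNum τ :=
    h.eq_of_mem_Ico (by rw [Fintype.card_fin]; omega) (betaNum_strictMono τ).injective
      (fun _ => betaNum_mem_Ico_pred hn σ _) (betaNum_mem_Ico_pred hn τ)
  apply betaNum_injective
  rw [← (betaNum_strictMono σ).range_inj (betaNum_strictMono τ), ← betaNum_eq,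
    π.surjective.range_comp]

end BetheRoot

/-- Classification of the solutions of the Bethe Ansatz equations:
(i) each `x_σ` is a solution with nonzero pairwise distinct entries;
(ii) `σ ↦ S_k-orbit of x_σ` is a bijection onto the set of `S_k`-orbits of solutions;
(iii) the solution set is stable under multiplication of all coordinates by `e^{2πι/n}`. -/
theorem bethe_roots_classification (n k : ℕ) (hn : 1 ≤ n) (hk : 1 ≤ k) (hnk : 2 < n + k)
    (z : ℂ) (hz : z ≠ 0) (t : ℂ) (ht : t ^ n = z) :
    (∀ σ : PartBox (n - 1) k, betheRoot n k t σ ∈ BAESol n k z) ∧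
    (∀ y ∈ BAESol n k z, ∃ σ : PartBox (n - 1) k, ∃ π : Equiv.Perm (Fin k),
        y = betheRoot n k t σ ∘ π) ∧
    (∀ σ τ : PartBox (n - 1) k,
        (∃ π : Equiv.Perm (Fin k), betheRoot n k t σ ∘ π = betheRoot n k t τ) → σ = τ) ∧
    (∀ y ∈ BAESol n k z,
        (fun j => Complex.exp (2 * Real.pi * Complex.I / (n : ℂ)) * y j) ∈ BAESol n k z) := by
  have hn0 : n ≠ 0 := Nat.one_le_iff_ne_zero.1 hn
  subst ht
  have ht0 : t ≠ 0 := ne_zero_pow hn0 hz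
  have root_pow : Complex.exp (2 * Real.pi * Complex.I / n) ^ n = 1 :=
    (Complex.isPrimitiveRoot_exp n hn0).pow_eq_one
  exact ⟨betheRoot_mem_BAESol hn0 ht0,
    fun _ hy => exists_eq_betheRoot_comp_perm hn0 ht0 hy,
    fun _ _ ⟨_, hπ⟩ => eq_of_betheRoot_comp_perm_eq hn0 ht0 hπ,
    fun _ hy => smul_mem_BAESol (Complex.exp_ne_zero _) root_pow hy⟩
end
end
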